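/- Let d₁, d₂ ≥ 1 be integers, s > 0 and V > 0. There exists a unique pair of radii (r₁, r₂) ∈ (0,∞)² with τ_{d₁} r₁^{d₁} · τ_{d₂} r₂^{d₂} = V such that: (i) for every pair of bounded nonempty open connected sets Ω₁ ⊆ ℝ^{d₁}, Ω₂ ⊆ ℝ^{d₂} with |Ω₁||Ω₂| = V, λ₁( B^{d₁}(0,r₁) × B^{d₂}(0,r₂) ) ≤ λ₁(Ω₁ × Ω₂); and (ii) for every other pair (ρ₁, ρ₂) ∈ (0,∞)² with τ_{d₁} ρ₁^{d₁} · τ_{d₂} ρ₂^{d₂} = V and (ρ₁, ρ₂) ≠ (r₁, r₂), one has λ₁( B^{d₁}(0,r₁) × B^{d₂}(0,r₂) ) < λ₁( B^{d₁}(0,ρ₁) × B^{d₂}(0,ρ₂) ). -/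

import Mathlib

open MeasureTheory Set Filter

/-- `τ_d = π^{d/2}/Γ(1+d/2)`, the volume of the unit ball in `ℝ^d`. -/
noncomputable def tau (d : ℕ) : ℝ := Real.pi ^ ((d : ℝ) / 2) / Real.Gamma (1 + (d : ℝ) / 2)

/-- First eigenvalue (Rayleigh quotient infimum) of the Grushin operator with Dirichlet
conditions on `Ω ⊆ ℝ^{d₁} × ℝ^{d₂}`. -/
noncomputable def grushinLambda1 (d₁ d₂ : ℕ) (s : ℝ)
    (Ω : Set (EuclideanSpace ℝ (Fin d₁) × EuclideanSpace ℝ (Fin d₂))) : ℝ :=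
  sInf { q : ℝ | ∃ u : EuclideanSpace ℝ (Fin d₁) × EuclideanSpace ℝ (Fin d₂) → ℝ,
    ContDiff ℝ (⊤ : ℕ∞) u ∧ HasCompactSupport u ∧ tsupport u ⊆ Ω ∧ u ≠ 0 ∧
    q = (∫ x in Ω, (‖gradient (fun y => u (y, x.2)) x.1‖ ^ 2
          + ‖x.1‖ ^ (2 * s) * ‖gradient (fun y => u (x.1, y)) x.2‖ ^ 2)) /
        (∫ x in Ω, (u x) ^ 2) }

/-!
By Fubini, the Faber–Krahn inequality in `x₂` and then the Faber–Krahn inequality in `x₁` for the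
operator `-Δ + ν ‖x₁‖ ^ (2 s)`, a product of balls beats every product of open sets with the same
volumes, and its first eigenvalue is `e(r₁, ν)`, the ground energy of `-Δ + ν ‖x₁‖ ^ (2 s)` on the
ball of radius `r₁`, with `ν` the first Dirichlet eigenvalue of the ball of radius `r₂`. The
Faber–Krahn inequalities rest on the Pólya–Szegő inequality, obtained by differentiating at time `0`
the integral of the Hamilton–Jacobi evolution (a sup-convolution), which decreases under
rearrangement by Brunn–Minkowski.

By scaling, the volume constraint leaves the problem of minimising `e(1, ν) / ν ^ β` over `ν > 0`,
where `β = 2 / (2 + 2 s + 2 d₁ / d₂)`. Since `e(1, ν)` is bounded below by multiples of `1` and of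
`ν ^ (1 / (1 + s))`, and `β (1 + s) < 1`, a minimiser exists. Rescale two minimisers so that both
ground energies are `1`; the balls then have couplings `κ₀ < κ₁` and radii `R₀ ≤ R₁`. The first
order condition says that the mean of `‖x‖ ^ (2 s)` against the squared ground state is `β / κ`,
hence smaller for `κ₁`. But the quotient `u₁ / u₀` of the ground states increases, as their
Wronskian shows, so the mean is at least as large for `κ₁`: a contradiction.
-/

open Module (finrank)
open scoped ENNReal NNReal Pointwise Topology ContDiff

namespace Grushin

/-! ### The Prékopa–Leindler and Brunn–Minkowski inequalities -/

section PrekopaLeindler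

theorem volume_add_volume_le_of_isCompact {K L : Set ℝ} (hK : IsCompact K) (hL : IsCompact L)
    (hK₀ : K.Nonempty) (hL₀ : L.Nonempty) : volume K + volume L ≤ volume (K + L) := by
  obtain ⟨k, hk, hk_max⟩ := hK.exists_isGreatest hK₀
  obtain ⟨l, hl, hl_min⟩ := hL.exists_isLeast hL₀
  have inter_subset : (K + {l}) ∩ ({k} + L) ⊆ {k + l} := by
    rintro _ ⟨⟨x, hx, _, rfl, rfl⟩, ⟨_, rfl, y, hy, hxy⟩⟩
    have := hk_max hx
    have := hl_min hy
    simp only [mem_singleton_iff] at hxy ⊢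
    linarith
  calc volume K + volume L = volume (K + {l}) + volume ({k} + L) := by simp
    _ = volume ((K + {l}) ∪ ({k} + L)) :=
      (measure_union₀ (isCompact_singleton.add hL).measurableSet.nullMeasurableSet
        (measure_mono_null inter_subset (by simp))).symm
    _ ≤ volume (K + L) := measure_mono <| union_subset
      (add_subset_add_left (singleton_subset_iff.2 hl))
      (add_subset_add_right (singleton_subset_iff.2 hk))

theorem volume_add_volume_le {A B : Set ℝ} (hA : MeasurableSet A) (hB : MeasurableSet B)
    (hA₀ : A.Nonempty) (hB₀ : B.Nonempty) : volume A + volume B ≤ volume (A + B) := by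
  obtain ⟨a, ha⟩ := hA₀
  obtain ⟨b, hb⟩ := hB₀
  have compact_le : ∀ K, K ⊆ A ∧ IsCompact K → ∀ L, L ⊆ B ∧ IsCompact L →
      volume K + volume L ≤ volume (A + B) := fun K hK L hL ↦
    calc volume K + volume L ≤ volume (insert a K) + volume (insert b L) := by
          gcongr <;> exact subset_insert _ _
      _ ≤ volume (insert a K + insert b L) :=
        volume_add_volume_le_of_isCompact (hK.2.insert a) (hL.2.insert b) (insert_nonempty _ _)
          (insert_nonempty _ _)
      _ ≤ volume (A + B) := measure_mono <|
        add_subset_add (insert_subset ha hK.1) (insert_subset hb hL.1)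
  rw [hA.measure_eq_iSup_isCompact, hB.measure_eq_iSup_isCompact]
  simp_rw [iSup_and']
  exact ENNReal.biSup_add_biSup_le' ⟨∅, empty_subset _, isCompact_empty⟩
    ⟨∅, empty_subset _, isCompact_empty⟩ compact_le

theorem ennreal_geom_mean_le_arith_mean {a b : ℝ} (ha : 0 < a) (hb : 0 < b) (hab : a + b = 1)
    (x y : ℝ≥0∞) : x ^ a * y ^ b ≤ ENNReal.ofReal a * x + ENNReal.ofReal b * y := by
  have hpq : (a⁻¹).HolderConjugate b⁻¹ :=
    Real.holderConjugate_iff.2 ⟨(one_lt_inv₀ ha).2 (by linarith), by simpa using hab⟩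
  simpa only [← ENNReal.rpow_mul, mul_inv_cancel₀ ha.ne', mul_inv_cancel₀ hb.ne',
    ENNReal.rpow_one, ENNReal.ofReal_inv_of_pos ha, ENNReal.ofReal_inv_of_pos hb,
    ENNReal.div_eq_inv_mul, inv_inv] using ENNReal.young_inequality (x ^ a) (y ^ b) hpq

theorem lintegral_eq_setLIntegral_Ioo_meas_lt {α : Type*} [MeasurableSpace α] (μ : Measure α)
    {f : α → ℝ≥0∞} (hf : Measurable f) (hf₁ : ∀ x, f x ≤ 1) :
    ∫⁻ x, f x ∂μ = ∫⁻ t in Ioo (0 : ℝ) 1, μ {x | ENNReal.ofReal t < f x} := by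
  have hf_top : ∀ x, f x ≠ ⊤ := fun x ↦ ne_top_of_le_ne_top ENNReal.one_ne_top (hf₁ x)
  have meas_lt_toReal : ∀ t ∈ Ioi (0 : ℝ), μ {x | t < (f x).toReal} =
      (Iio 1).indicator (fun t ↦ μ {x | ENNReal.ofReal t < f x}) t := by
    intro t ht
    simp_rw [← ENNReal.ofReal_lt_iff_lt_toReal (le_of_lt ht) (hf_top _)]
    by_cases ht₁ : t < 1
    · rw [indicator_of_mem (mem_Iio.2 ht₁)]
    · rw [indicator_of_notMem (by simpa using ht₁)]
      have : ∀ x, ¬ ENNReal.ofReal t < f x := fun x ↦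
        ((hf₁ x).trans (by simpa using ht₁)).not_gt
      simp [this]
  calc ∫⁻ x, f x ∂μ = ∫⁻ x, ENNReal.ofReal (f x).toReal ∂μ := by
        simp_rw [ENNReal.ofReal_toReal (hf_top _)]
    _ = ∫⁻ t in Ioi (0 : ℝ), μ {x | t < (f x).toReal} :=
      lintegral_eq_lintegral_meas_lt _ (ae_of_all _ fun _ ↦ ENNReal.toReal_nonneg)
        hf.ennreal_toReal.aemeasurable
    _ = ∫⁻ t in Ioo (0 : ℝ) 1, μ {x | ENNReal.ofReal t < f x} := by
      rw [setLIntegral_congr_fun measurableSet_Ioi meas_lt_toReal,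
        setLIntegral_indicator measurableSet_Iio, inter_comm, Ioi_inter_Iio]

theorem measurable_meas_ofReal_lt {α : Type*} [MeasurableSpace α] (μ : Measure α)
    (f : α → ℝ≥0∞) : Measurable fun t : ℝ ↦ μ {x | ENNReal.ofReal t < f x} :=
  Antitone.measurable fun _ _ h ↦ measure_mono fun _ hx ↦ (ENNReal.ofReal_le_ofReal h).trans_lt hx

section OneDim

variable {a b : ℝ} {f g h : ℝ → ℝ≥0∞}

theorem mul_volume_superlevel_add_le (ha : 0 < a) (hb : 0 < b) (hab : a + b = 1)
    (hf : Measurable f) (hg : Measurable g) (H : ∀ x y, f x ^ a * g y ^ b ≤ h (a * x + b * y))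
    {t : ℝ≥0∞} (ht₀ : t ≠ 0) (htf : t < ⨆ x, f x) (htg : t < ⨆ x, g x) :
    ENNReal.ofReal a * volume {x | t < f x} + ENNReal.ofReal b * volume {x | t < g x} ≤
      volume {x | t < h x} := by
  have ht_top : t ≠ ⊤ := htf.ne_top
  have volume_smul {c : ℝ} (hc : 0 < c) (S : Set ℝ) :
      volume (c • S) = ENNReal.ofReal c * volume S := by
    rw [Measure.addHaar_smul]
    simp [abs_of_pos hc]
  rw [← volume_smul ha, ← volume_smul hb]
  refine (volume_add_volume_le ((measurableSet_lt measurable_const hf).const_smul₀ a)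
    ((measurableSet_lt measurable_const hg).const_smul₀ b) (Nonempty.smul_set (lt_iSup_iff.1 htf))
    (Nonempty.smul_set (lt_iSup_iff.1 htg))).trans (measure_mono ?_)
  rintro _ ⟨_, ⟨x, hx, rfl⟩, _, ⟨y, hy, rfl⟩, rfl⟩
  calc t = t ^ a * t ^ b := by rw [← ENNReal.rpow_add _ _ ht₀ ht_top, hab, ENNReal.rpow_one]
    _ < f x ^ a * g y ^ b :=
      ENNReal.mul_lt_mul (ENNReal.rpow_lt_rpow hx ha) (ENNReal.rpow_lt_rpow hy hb)
    _ ≤ h (a * x + b * y) := H x y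

theorem prekopa_leindler_real_of_iSup_eq_one (ha : 0 < a) (hb : 0 < b) (hab : a + b = 1)
    (hf : Measurable f) (hg : Measurable g) (hh : Measurable h)
    (hf₁ : ⨆ x, f x = 1) (hg₁ : ⨆ x, g x = 1)
    (H : ∀ x y, f x ^ a * g y ^ b ≤ h (a * x + b * y)) :
    (∫⁻ x, f x) ^ a * (∫⁻ x, g x) ^ b ≤ ∫⁻ x, h x := by
  have superlevel_le : ∀ t ∈ Ioo (0 : ℝ) 1,
      ENNReal.ofReal a * volume {x | ENNReal.ofReal t < f x} +
        ENNReal.ofReal b * volume {x | ENNReal.ofReal t < g x} ≤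
      volume {x | ENNReal.ofReal t < min (h x) 1} := by
    intro t ht
    have ht₁ : ENNReal.ofReal t < 1 := by simpa using ht.2
    simpa only [lt_min_iff, ht₁, and_true] using mul_volume_superlevel_add_le ha hb hab hf hg H
      (by simpa using ht.1) (hf₁ ▸ ht₁) (hg₁ ▸ ht₁)
  calc (∫⁻ x, f x) ^ a * (∫⁻ x, g x) ^ b
      ≤ ENNReal.ofReal a * (∫⁻ x, f x) + ENNReal.ofReal b * ∫⁻ x, g x :=
        ennreal_geom_mean_le_arith_mean ha hb hab _ _
    _ = ∫⁻ t in Ioo (0 : ℝ) 1, (ENNReal.ofReal a * volume {x | ENNReal.ofReal t < f x} +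
          ENNReal.ofReal b * volume {x | ENNReal.ofReal t < g x}) := by
      rw [lintegral_eq_setLIntegral_Ioo_meas_lt _ hf fun x ↦ hf₁ ▸ le_iSup f x,
        lintegral_eq_setLIntegral_Ioo_meas_lt _ hg fun x ↦ hg₁ ▸ le_iSup g x,
        lintegral_add_left ((measurable_meas_ofReal_lt _ f).const_mul _),
        lintegral_const_mul' _ _ ENNReal.ofReal_ne_top,
        lintegral_const_mul' _ _ ENNReal.ofReal_ne_top]
    _ ≤ ∫⁻ t in Ioo (0 : ℝ) 1, volume {x | ENNReal.ofReal t < min (h x) 1} :=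
      setLIntegral_mono' measurableSet_Ioo superlevel_le
    _ = ∫⁻ x, min (h x) 1 := (lintegral_eq_setLIntegral_Ioo_meas_lt _ (hh.min measurable_const)
        fun _ ↦ min_le_right _ _).symm
    _ ≤ ∫⁻ x, h x := lintegral_mono fun _ ↦ min_le_left _ _

theorem prekopa_leindler_real_of_iSup_ne_top (ha : 0 < a) (hb : 0 < b) (hab : a + b = 1)
    (hf : Measurable f) (hg : Measurable g) (hh : Measurable h)
    (hf_top : ⨆ x, f x ≠ ⊤) (hg_top : ⨆ x, g x ≠ ⊤)
    (H : ∀ x y, f x ^ a * g y ^ b ≤ h (a * x + b * y)) :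
    (∫⁻ x, f x) ^ a * (∫⁻ x, g x) ^ b ≤ ∫⁻ x, h x := by
  rcases eq_or_ne (⨆ x, f x) 0 with hf₀ | hf₀
  · simp [iSup_eq_bot.1 hf₀, ha]
  rcases eq_or_ne (⨆ x, g x) 0 with hg₀ | hg₀
  · simp [iSup_eq_bot.1 hg₀, hb]
  set F := (⨆ x, f x)⁻¹
  set G := (⨆ x, g x)⁻¹
  have hF_top : F ≠ ⊤ := ENNReal.inv_ne_top.2 hf₀
  have hG_top : G ≠ ⊤ := ENNReal.inv_ne_top.2 hg₀
  set c := F ^ a * G ^ b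
  have hc_top : c ≠ ⊤ := ENNReal.mul_ne_top (ENNReal.rpow_ne_top_of_nonneg ha.le hF_top)
    (ENNReal.rpow_ne_top_of_nonneg hb.le hG_top)
  have hc₀ : c ≠ 0 := mul_ne_zero (ENNReal.rpow_pos (ENNReal.inv_pos.2 hf_top) hF_top).ne'
    (ENNReal.rpow_pos (ENNReal.inv_pos.2 hg_top) hG_top).ne'
  have homogeneous (x y : ℝ≥0∞) : (F * x) ^ a * (G * y) ^ b = c * (x ^ a * y ^ b) := by
    rw [ENNReal.mul_rpow_of_nonneg _ _ ha.le, ENNReal.mul_rpow_of_nonneg _ _ hb.le]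
    ring
  have normalized := prekopa_leindler_real_of_iSup_eq_one (f := fun x ↦ F * f x)
    (g := fun x ↦ G * g x) (h := fun x ↦ c * h x) ha hb hab (hf.const_mul _) (hg.const_mul _)
    (hh.const_mul _) (by rw [← ENNReal.mul_iSup, ENNReal.inv_mul_cancel hf₀ hf_top])
    (by rw [← ENNReal.mul_iSup, ENNReal.inv_mul_cancel hg₀ hg_top])
    (fun x y ↦ by rw [homogeneous]; gcongr; exact H x y)
  rw [lintegral_const_mul _ hf, lintegral_const_mul _ hg, lintegral_const_mul _ hh,
    homogeneous] at normalized
  exact (ENNReal.mul_le_mul_iff_right hc₀ hc_top).1 normalized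

theorem tendsto_lintegral_min_natCast {α : Type*} [MeasurableSpace α] (μ : Measure α)
    {f : α → ℝ≥0∞} (hf : Measurable f) :
    Tendsto (fun n : ℕ ↦ ∫⁻ x, min (f x) n ∂μ) atTop (𝓝 (∫⁻ x, f x ∂μ)) := by
  refine lintegral_tendsto_of_tendsto_of_monotone
    (fun n ↦ (hf.min measurable_const).aemeasurable)
    (ae_of_all _ fun x m n hmn ↦ min_le_min_left _ (Nat.cast_le.2 hmn)) (ae_of_all _ fun x ↦ ?_)
  simpa using (tendsto_const_nhds (x := f x)).min ENNReal.tendsto_nat_nhds_top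

theorem prekopa_leindler_real (ha : 0 < a) (hb : 0 < b) (hab : a + b = 1)
    (hf : Measurable f) (hg : Measurable g) (hh : Measurable h)
    (H : ∀ x y, f x ^ a * g y ^ b ≤ h (a * x + b * y)) :
    (∫⁻ x, f x) ^ a * (∫⁻ x, g x) ^ b ≤ ∫⁻ x, h x := by
  have iSup_min_ne_top (n : ℕ) (f : ℝ → ℝ≥0∞) : ⨆ x, min (f x) n ≠ ⊤ :=
    ne_top_of_le_ne_top (ENNReal.natCast_ne_top n) (iSup_le fun _ ↦ min_le_right _ _)
  have truncated (n : ℕ) : (∫⁻ x, min (f x) n) ^ a * (∫⁻ x, min (g x) n) ^ b ≤ ∫⁻ x, h x :=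
    prekopa_leindler_real_of_iSup_ne_top ha hb hab (hf.min measurable_const)
      (hg.min measurable_const) hh (iSup_min_ne_top n f) (iSup_min_ne_top n g)
      fun x y ↦ le_trans (by gcongr <;> exact min_le_left _ _) (H x y)
  rcases eq_or_ne (∫⁻ x, f x) 0 with hf₀ | hf₀
  · simp [hf₀, ha]
  rcases eq_or_ne (∫⁻ x, g x) 0 with hg₀ | hg₀
  · simp [hg₀, hb]
  refine le_of_tendsto (ENNReal.Tendsto.mul ((tendsto_lintegral_min_natCast _ hf).ennrpow_const a)
    (Or.inl ?_) ((tendsto_lintegral_min_natCast _ hg).ennrpow_const b) (Or.inl ?_))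
    (Eventually.of_forall truncated)
  · simp [ENNReal.rpow_eq_zero_iff, hf₀, ha, ha.not_gt]
  · simp [ENNReal.rpow_eq_zero_iff, hg₀, hb, hb.not_gt]

end OneDim

theorem prekopa_leindler_pi {a b : ℝ} (ha : 0 < a) (hb : 0 < b) (hab : a + b = 1) (n : ℕ)
    {f g h : (Fin n → ℝ) → ℝ≥0∞} (hf : Measurable f) (hg : Measurable g) (hh : Measurable h)
    (H : ∀ x y, f x ^ a * g y ^ b ≤ h (a • x + b • y)) :
    (∫⁻ x, f x) ^ a * (∫⁻ x, g x) ^ b ≤ ∫⁻ x, h x := by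
  induction n with
  | zero =>
    have lintegral_eq (f : (Fin 0 → ℝ) → ℝ≥0∞) : ∫⁻ x, f x = f 0 := by
      rw [lintegral_unique, volume_pi, Measure.pi_univ, Fin.prod_univ_zero, mul_one]
      exact congrArg f (Subsingleton.elim _ _)
    simpa only [lintegral_eq, smul_zero, add_zero] using H 0 0
  | succ n ih =>
    let e := (MeasurableEquiv.piFinSuccAbove (fun _ : Fin (n + 1) ↦ ℝ) 0).symm
    have he : MeasurePreserving e volume volume :=
      (volume_preserving_piFinSuccAbove (fun _ : Fin (n + 1) ↦ ℝ) 0).symm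
    have lintegral_eq {f : (Fin (n + 1) → ℝ) → ℝ≥0∞} (hf : Measurable f) :
        ∫⁻ x, f x = ∫⁻ t : ℝ, ∫⁻ y : Fin n → ℝ, f (e (t, y)) := by
      rw [← he.lintegral_comp hf, Measure.volume_eq_prod, lintegral_prod _ (by fun_prop)]
    have measurable_slice {f : (Fin (n + 1) → ℝ) → ℝ≥0∞} (hf : Measurable f) :
        Measurable fun t : ℝ ↦ ∫⁻ y : Fin n → ℝ, f (e (t, y)) :=
      (hf.comp e.measurable).lintegral_prod_right'
    rw [lintegral_eq hf, lintegral_eq hg, lintegral_eq hh]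
    refine prekopa_leindler_real ha hb hab (measurable_slice hf) (measurable_slice hg)
      (measurable_slice hh) fun s t ↦ ?_
    refine ih (by fun_prop) (by fun_prop) (by fun_prop) fun x y ↦ (H _ _).trans_eq (congrArg h ?_)
    ext i
    refine Fin.cases ?_ (fun j ↦ ?_) i <;> simp [e, MeasurableEquiv.piFinSuccAbove]

end PrekopaLeindler

section BrunnMinkowski

variable {E : Type*} [NormedAddCommGroup E] [NormedSpace ℝ E] [FiniteDimensional ℝ E]
  [MeasurableSpace E] [BorelSpace E] (μ : Measure E) [μ.IsAddHaarMeasure]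

theorem prekopa_leindler {a b : ℝ} (ha : 0 < a) (hb : 0 < b) (hab : a + b = 1)
    {f g h : E → ℝ≥0∞} (hf : Measurable f) (hg : Measurable g) (hh : Measurable h)
    (H : ∀ x y, f x ^ a * g y ^ b ≤ h (a • x + b • y)) :
    (∫⁻ x, f x ∂μ) ^ a * (∫⁻ x, g x ∂μ) ^ b ≤ ∫⁻ x, h x ∂μ := by
  let e : E ≃L[ℝ] (Fin (finrank ℝ E) → ℝ) := ContinuousLinearEquiv.ofFinrankEq (by simp)
  set ν := μ.map e
  have : ν.IsAddHaarMeasure := e.isAddHaarMeasure_map μ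
  set c := ν.addHaarScalarFactor volume
  have lintegral_eq (f : E → ℝ≥0∞) : ∫⁻ x, f x ∂μ = c * ∫⁻ y, f (e.symm y) := by
    calc ∫⁻ x, f x ∂μ = ∫⁻ y, f (e.symm y) ∂ν := by
          simpa using (lintegral_map_equiv (fun y ↦ f (e.symm y))
            e.toHomeomorph.toMeasurableEquiv (μ := μ)).symm
      _ = c * ∫⁻ y, f (e.symm y) := by
        rw [Measure.isAddLeftInvariant_eq_smul ν volume, lintegral_smul_measure]
        rfl
  have pi_le := prekopa_leindler_pi ha hb hab _ (hf.comp e.symm.continuous.measurable)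
    (hg.comp e.symm.continuous.measurable) (hh.comp e.symm.continuous.measurable)
    fun x y ↦ by simpa using H (e.symm x) (e.symm y)
  calc (∫⁻ x, f x ∂μ) ^ a * (∫⁻ x, g x ∂μ) ^ b
      = ((c : ℝ≥0∞) ^ a * (c : ℝ≥0∞) ^ b) *
          ((∫⁻ y, f (e.symm y)) ^ a * (∫⁻ y, g (e.symm y)) ^ b) := by
        rw [lintegral_eq f, lintegral_eq g, ENNReal.mul_rpow_of_nonneg _ _ ha.le,
          ENNReal.mul_rpow_of_nonneg _ _ hb.le]
        ring
    _ = c * ((∫⁻ y, f (e.symm y)) ^ a * (∫⁻ y, g (e.symm y)) ^ b) := by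
        rw [← ENNReal.rpow_add_of_nonneg _ _ ha.le hb.le, hab, ENNReal.rpow_one]
    _ ≤ c * ∫⁻ y, h (e.symm y) := by gcongr; exact pi_le
    _ = ∫⁻ x, h x ∂μ := (lintegral_eq h).symm

theorem measure_rpow_mul_measure_rpow_le {a b : ℝ} (ha : 0 < a) (hb : 0 < b) (hab : a + b = 1)
    {A B C : Set E} (hA : MeasurableSet A) (hB : MeasurableSet B) (hC : MeasurableSet C)
    (H : a • A + b • B ⊆ C) : μ A ^ a * μ B ^ b ≤ μ C := by
  rw [← lintegral_indicator_one hA, ← lintegral_indicator_one hB, ← lintegral_indicator_one hC]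
  refine prekopa_leindler μ ha hb hab (measurable_one.indicator hA) (measurable_one.indicator hB)
    (measurable_one.indicator hC) fun x y ↦ ?_
  by_cases hx : x ∈ A
  · by_cases hy : y ∈ B
    · have hxy : a • x + b • y ∈ C := H (add_mem_add (smul_mem_smul_set hx) (smul_mem_smul_set hy))
      simp [hx, hy, hxy]
    · simp [hy, hb]
  · simp [hx, ha]

end BrunnMinkowski

/-! ### Radial rearrangement -/

section VolumeRadius

variable {E : Type*} [NormedAddCommGroup E] [NormedSpace ℝ E] [MeasurableSpace E]

/-- The radius of a ball with the same measure as `A`. -/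
noncomputable def volumeRadius (μ : Measure E) (A : Set E) : ℝ :=
  (μ.real A / μ.real (Metric.ball 0 1)) ^ (finrank ℝ E : ℝ)⁻¹

variable {μ : Measure E} {A B C : Set E}

theorem volumeRadius_nonneg : 0 ≤ volumeRadius μ A := by
  unfold volumeRadius
  positivity

theorem volumeRadius_mono (h : A ⊆ B) (hB : μ B ≠ ⊤) : volumeRadius μ A ≤ volumeRadius μ B := by
  have := measureReal_mono h hB
  unfold volumeRadius
  gcongr

variable [Nontrivial E] [FiniteDimensional ℝ E]

theorem nonempty_of_volumeRadius_pos (h : 0 < volumeRadius μ A) : A.Nonempty := by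
  rw [nonempty_iff_ne_empty]
  rintro rfl
  have : (finrank ℝ E : ℝ)⁻¹ ≠ 0 := by simpa using (Module.finrank_pos (R := ℝ) (M := E)).ne'
  simp [volumeRadius, Real.zero_rpow this] at h

variable [BorelSpace E] [μ.IsAddHaarMeasure]

theorem measure_ball_le_measure_ball_iff {r ρ : ℝ} (hr : 0 ≤ r) (hρ : 0 ≤ ρ) :
    μ (Metric.ball 0 r) ≤ μ (Metric.ball 0 ρ) ↔ r ≤ ρ := by
  rw [Measure.addHaar_ball μ _ hr, Measure.addHaar_ball μ _ hρ, ENNReal.mul_le_mul_iff_left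
    (Metric.measure_ball_pos μ 0 one_pos).ne' measure_ball_lt_top.ne,
    ENNReal.ofReal_le_ofReal_iff (by positivity),
    pow_le_pow_iff_left₀ hr hρ Module.finrank_pos.ne']

theorem measure_ball_volumeRadius (hA : μ A ≠ ⊤) :
    μ (Metric.ball 0 (volumeRadius μ A)) = μ A := by
  have unit_pos : 0 < μ.real (Metric.ball 0 1) := ENNReal.toReal_pos
    (Metric.measure_ball_pos μ 0 one_pos).ne' measure_ball_lt_top.ne
  rw [Measure.addHaar_ball μ _ volumeRadius_nonneg, volumeRadius,
    Real.rpow_inv_natCast_pow (by positivity) Module.finrank_pos.ne',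
    ← ofReal_measureReal (s := Metric.ball 0 1) measure_ball_lt_top.ne,
    ← ENNReal.ofReal_mul (by positivity), div_mul_cancel₀ _ unit_pos.ne', ofReal_measureReal hA]

theorem le_volumeRadius_iff (hA : μ A ≠ ⊤) {r : ℝ} (hr : 0 ≤ r) :
    r ≤ volumeRadius μ A ↔ μ (Metric.ball 0 r) ≤ μ A := by
  rw [← measure_ball_volumeRadius hA, measure_ball_le_measure_ball_iff hr volumeRadius_nonneg]

theorem volumeRadius_le_iff (hA : μ A ≠ ⊤) {r : ℝ} (hr : 0 ≤ r) :
    volumeRadius μ A ≤ r ↔ μ A ≤ μ (Metric.ball 0 r) := by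
  rw [← measure_ball_volumeRadius hA, measure_ball_le_measure_ball_iff volumeRadius_nonneg hr]

/-- Brunn–Minkowski for a set and a ball: `A` and `ball 0 δ` are rescaled to sets which both have
the measure of `ball 0 (volumeRadius μ A + δ)`, and are convex combinations of `A` and `ball 0 δ`
inside `C`. -/
theorem volumeRadius_add_le (hA : MeasurableSet A) (hA₀ : A.Nonempty) (hC : MeasurableSet C)
    (hC' : μ C ≠ ⊤) {δ : ℝ} (hδ : 0 < δ) (h : A + Metric.ball 0 δ ⊆ C) :
    volumeRadius μ A + δ ≤ volumeRadius μ C := by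
  have hA' : μ A ≠ ⊤ := ne_top_of_le_ne_top hC' <| measure_mono <|
    (subset_add_left A (Metric.mem_ball_self hδ)).trans h
  rcases (volumeRadius_nonneg (μ := μ) (A := A)).eq_or_lt with radius_eq | radius_pos
  · obtain ⟨x, hx⟩ := hA₀
    rw [← radius_eq, zero_add, le_volumeRadius_iff hC' hδ.le, ← Measure.addHaar_ball_center μ x]
    refine measure_mono (Subset.trans ?_ h)
    simpa using add_subset_add_right (t := Metric.ball 0 δ) (singleton_subset_iff.2 hx)
  · set ρ := volumeRadius μ A
    set S := ρ + δ
    have S_pos : 0 < S := by positivity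
    have weights_add : ρ / S + δ / S = 1 := by rw [← add_div, div_self S_pos.ne']
    have measure_A : μ ((ρ / S)⁻¹ • A) = μ (Metric.ball 0 S) := by
      rw [Measure.addHaar_smul, ← measure_ball_volumeRadius hA', ← Measure.addHaar_smul,
        smul_ball (by positivity), smul_zero, Real.norm_of_nonneg (by positivity), inv_div,
        div_mul_cancel₀ _ radius_pos.ne']
    have combination_subset : (ρ / S) • (ρ / S)⁻¹ • A + (δ / S) • Metric.ball 0 S ⊆ C := by
      rwa [smul_inv_smul₀ (by positivity), smul_ball (by positivity), smul_zero,
        Real.norm_of_nonneg (by positivity), div_mul_cancel₀ _ S_pos.ne']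
    have := measure_rpow_mul_measure_rpow_le μ (by positivity) (by positivity) weights_add
      (hA.const_smul₀ _) Metric.isOpen_ball.measurableSet hC combination_subset
    rwa [measure_A, ← ENNReal.rpow_add_of_nonneg _ _ (by positivity) (by positivity), weights_add,
      ENNReal.rpow_one, ← le_volumeRadius_iff hC' S_pos.le] at this

end VolumeRadius

section Superlevel

variable {E : Type*} [TopologicalSpace E] [MeasurableSpace E]

theorem measurableSet_superlevel [OpensMeasurableSpace E] {f : E → ℝ} (hf : Continuous f) (t : ℝ) :
    MeasurableSet {x | t < f x} :=
  (isOpen_lt continuous_const hf).measurableSet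

theorem measure_superlevel_ne_top {μ : Measure E} [IsFiniteMeasureOnCompacts μ] {f : E → ℝ}
    (hc : HasCompactSupport f) {t : ℝ} (ht : 0 ≤ t) : μ {x | t < f x} ≠ ⊤ := by
  refine ne_top_of_le_ne_top hc.measure_lt_top.ne (measure_mono fun x hx ↦ subset_tsupport f ?_)
  exact (ht.trans_lt hx).ne'

theorem exists_gt_lt_measure_superlevel {α : Type*} [MeasurableSpace α] (μ : Measure α) {f : α → ℝ}
    {t : ℝ} {m : ℝ≥0∞} (h : m < μ {x | t < f x}) : ∃ s > t, m < μ {x | s < f x} := by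
  have iUnion_eq : {x | t < f x} = ⋃ n : ℕ, {x | t + 1 / ((n : ℝ) + 1) < f x} := by
    ext x
    simp only [mem_ofPred_eq, mem_iUnion]
    refine ⟨fun hx ↦ ?_, fun ⟨n, hn⟩ ↦ (lt_add_of_pos_right t Nat.one_div_pos_of_nat).trans hn⟩
    obtain ⟨n, hn⟩ := exists_nat_one_div_lt (sub_pos.2 hx)
    exact ⟨n, lt_sub_iff_add_lt'.1 hn⟩
  have mono : Monotone fun n : ℕ ↦ {x | t + 1 / ((n : ℝ) + 1) < f x} := fun m n hmn x hx ↦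
    (add_le_add_right (Nat.one_div_le_one_div hmn) t).trans_lt hx
  rw [iUnion_eq, mono.measure_iUnion, lt_iSup_iff] at h
  obtain ⟨n, hn⟩ := h
  exact ⟨_, lt_add_of_pos_right t Nat.one_div_pos_of_nat, hn⟩

end Superlevel

section Bathtub

variable {E : Type*} [SeminormedAddCommGroup E] [MeasurableSpace E] [OpensMeasurableSpace E]
  {μ : Measure E} {A : Set E} {ρ : ℝ} {g : ℝ → ℝ≥0∞}

theorem setLIntegral_ball_diff_le (hg : Monotone g) (hA : MeasurableSet A)
    (h : μ (Metric.ball 0 ρ \ A) ≤ μ (A \ Metric.ball 0 ρ)) :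
    ∫⁻ x in Metric.ball 0 ρ \ A, g ‖x‖ ∂μ ≤ ∫⁻ x in A \ Metric.ball 0 ρ, g ‖x‖ ∂μ := by
  have hB : MeasurableSet (Metric.ball (0 : E) ρ) := Metric.isOpen_ball.measurableSet
  calc ∫⁻ x in Metric.ball 0 ρ \ A, g ‖x‖ ∂μ ≤ ∫⁻ _ in Metric.ball 0 ρ \ A, g ρ ∂μ :=
        setLIntegral_mono' (hB.diff hA) fun x hx ↦ hg (mem_ball_zero_iff.1 hx.1).le
    _ ≤ ∫⁻ _ in A \ Metric.ball 0 ρ, g ρ ∂μ := by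
        simp only [setLIntegral_const]
        gcongr
    _ ≤ ∫⁻ x in A \ Metric.ball 0 ρ, g ‖x‖ ∂μ :=
        setLIntegral_mono' (hA.diff hB) fun x hx ↦ hg (by simpa using hx.2)

theorem setLIntegral_ball_le (hg : Monotone g) (hA : MeasurableSet A)
    (hμA : μ A ≠ ⊤) (h : μ (Metric.ball 0 ρ) ≤ μ A) :
    ∫⁻ x in Metric.ball 0 ρ, g ‖x‖ ∂μ ≤ ∫⁻ x in A, g ‖x‖ ∂μ := by
  have hB : MeasurableSet (Metric.ball (0 : E) ρ) := Metric.isOpen_ball.measurableSet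
  have diff_le : μ (Metric.ball 0 ρ \ A) ≤ μ (A \ Metric.ball 0 ρ) := by
    rw [← measure_inter_add_sdiff (Metric.ball 0 ρ) hA, ← measure_inter_add_sdiff A hB,
      inter_comm A] at h
    exact (ENNReal.add_le_add_iff_left
      (ne_top_of_le_ne_top hμA (measure_mono inter_subset_right))).1 h
  rw [← lintegral_inter_add_sdiff _ (Metric.ball 0 ρ) hA, ← lintegral_inter_add_sdiff _ A hB,
    inter_comm A]
  exact add_le_add le_rfl (setLIntegral_ball_diff_le hg hA diff_le)

end Bathtub

section Rearrangement

variable {E : Type*} [NormedAddCommGroup E] [NormedSpace ℝ E] [MeasurableSpace E]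

/-- The profile `V` of the symmetric decreasing rearrangement `x ↦ V ‖x‖` of the positive part of
`f`, extended to negative radii as an even function. Above the range of `f` the set of levels is
empty, and its supremum is `0` by convention. -/
noncomputable def radialRearrangement (μ : Measure E) (f : E → ℝ) (r : ℝ) : ℝ :=
  sSup {t : ℝ | 0 ≤ t ∧ |r| < volumeRadius μ {x | t < f x}}

theorem radialRearrangement_nonneg (μ : Measure E) (f : E → ℝ) (r : ℝ) :
    0 ≤ radialRearrangement μ f r :=
  Real.sSup_nonneg fun _ ht ↦ ht.1

theorem radialRearrangement_abs (μ : Measure E) (f : E → ℝ) (r : ℝ) :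
    radialRearrangement μ f |r| = radialRearrangement μ f r := by
  simp [radialRearrangement]

variable [FiniteDimensional ℝ E] [BorelSpace E] [Nontrivial E] {μ : Measure E}
  [μ.IsAddHaarMeasure] {f : E → ℝ}

theorem lt_radialRearrangement_iff (hf : Continuous f) (hc : HasCompactSupport f) {r t : ℝ}
    (ht : 0 ≤ t) : t < radialRearrangement μ f r ↔ |r| < volumeRadius μ {x | t < f x} := by
  constructor
  · intro h
    have nonempty : {t : ℝ | 0 ≤ t ∧ |r| < volumeRadius μ {x | t < f x}}.Nonempty := by
      by_contra! h_empty
      rw [radialRearrangement, h_empty, Real.sSup_empty] at h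
      exact ht.not_gt h
    obtain ⟨s, ⟨-, hs⟩, hts⟩ := exists_lt_of_lt_csSup nonempty h
    exact hs.trans_le <| volumeRadius_mono (fun x hx ↦ hts.trans hx)
      (measure_superlevel_ne_top hc ht)
  · intro h
    have bddAbove : BddAbove {t : ℝ | 0 ≤ t ∧ |r| < volumeRadius μ {x | t < f x}} := by
      obtain ⟨M, hM⟩ := hf.bddAbove_range_of_hasCompactSupport hc
      refine ⟨M, fun s hs ↦ ?_⟩
      obtain ⟨x, hx⟩ := nonempty_of_volumeRadius_pos ((abs_nonneg r).trans_lt hs.2)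
      exact (mem_ofPred_eq ▸ hx).le.trans (hM (mem_range_self x))
    rw [← not_le, volumeRadius_le_iff (measure_superlevel_ne_top hc ht) (abs_nonneg r),
      not_le] at h
    obtain ⟨s, hts, hs⟩ := exists_gt_lt_measure_superlevel μ h
    have hs₀ : 0 ≤ s := ht.trans hts.le
    rw [← not_le, ← volumeRadius_le_iff (measure_superlevel_ne_top hc hs₀) (abs_nonneg r),
      not_le] at hs
    exact hts.trans_le (le_csSup bddAbove ⟨hs₀, hs⟩)

theorem setOf_lt_radialRearrangement_norm (hf : Continuous f) (hc : HasCompactSupport f) {t : ℝ}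
    (ht : 0 ≤ t) : {x : E | t < radialRearrangement μ f ‖x‖} =
      Metric.ball 0 (volumeRadius μ {x | t < f x}) := by
  ext x
  simp only [mem_ofPred_eq, lt_radialRearrangement_iff hf hc ht, abs_norm, mem_ball_zero_iff]

theorem measure_setOf_lt_radialRearrangement_norm (hf : Continuous f) (hc : HasCompactSupport f)
    {t : ℝ} (ht : 0 ≤ t) : μ {x : E | t < radialRearrangement μ f ‖x‖} = μ {x | t < f x} := by
  rw [setOf_lt_radialRearrangement_norm hf hc ht,
    measure_ball_volumeRadius (measure_superlevel_ne_top hc ht)]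

theorem measurable_radialRearrangement_norm (hf : Continuous f) (hc : HasCompactSupport f) :
    Measurable fun x : E ↦ radialRearrangement μ f ‖x‖ := by
  refine measurable_of_Ioi fun t ↦ ?_
  rcases lt_or_ge t 0 with ht | ht
  · convert MeasurableSet.univ
    exact eq_univ_of_forall fun x ↦ ht.trans_le (radialRearrangement_nonneg μ f _)
  · change MeasurableSet {x : E | t < radialRearrangement μ f ‖x‖}
    rw [setOf_lt_radialRearrangement_norm hf hc ht]
    exact Metric.isOpen_ball.measurableSet

theorem radialRearrangement_eq_zero (hf : Continuous f) (hc : HasCompactSupport f) {r : ℝ}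
    (hr : 0 ≤ r) (h : μ {x | 0 < f x} ≤ μ (Metric.ball 0 r)) : radialRearrangement μ f r = 0 := by
  refine (radialRearrangement_nonneg μ f r).antisymm' ?_
  rwa [← not_lt, lt_radialRearrangement_iff hf hc le_rfl, abs_of_nonneg hr, not_lt,
    volumeRadius_le_iff (measure_superlevel_ne_top hc le_rfl) hr]

theorem lipschitzWith_radialRearrangement {L : ℝ≥0} (hf : LipschitzWith L f)
    (hc : HasCompactSupport f) : LipschitzWith L (radialRearrangement μ f) := by
  refine LipschitzWith.of_le_add_mul L fun r r' ↦ ?_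
  by_contra! h
  set t' := radialRearrangement μ f r'
  obtain ⟨δ, hδ, hδ'⟩ : ∃ δ, t' + L * δ < radialRearrangement μ f r ∧ dist r r' < δ := by
    have : ∀ᶠ δ in 𝓝[>] dist r r', t' + L * δ < radialRearrangement μ f r :=
      nhdsWithin_le_nhds <| ContinuousAt.eventually_lt (by fun_prop) continuousAt_const h
    exact (this.and self_mem_nhdsWithin).exists
  have δ_pos : 0 < δ := dist_nonneg.trans_lt hδ'
  have ht' : 0 ≤ t' := radialRearrangement_nonneg μ f r'
  have ht : 0 ≤ t' + L * δ := by positivity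
  rw [lt_radialRearrangement_iff hf.continuous hc ht] at hδ
  have := volumeRadius_add_le (μ := μ) (A := {x | t' + L * δ < f x}) (C := {x | t' < f x})
    (measurableSet_superlevel hf.continuous _)
    (nonempty_of_volumeRadius_pos ((abs_nonneg r).trans_lt hδ))
    (measurableSet_superlevel hf.continuous _) (measure_superlevel_ne_top hc ht') δ_pos (by
      rintro _ ⟨x, hx, y, hy, rfl⟩
      have lip := hf.le_add_mul x (x + y)
      have : L * ‖y‖ ≤ L * δ := by gcongr; exact (mem_ball_zero_iff.1 hy).le
      rw [dist_self_add_right] at lip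
      exact lt_of_add_lt_add_right ((mem_ofPred_eq ▸ hx).trans_le (lip.trans (by gcongr))))
  refine lt_irrefl t' ((lt_radialRearrangement_iff hf.continuous hc ht').2 ?_)
  have := abs_sub_abs_le_abs_sub r' r
  rw [← Real.dist_eq, dist_comm] at this
  linarith

theorem lintegral_radialRearrangement_rpow (hf : Continuous f) (hf₀ : ∀ x, 0 ≤ f x)
    (hc : HasCompactSupport f) {p : ℝ} (hp : 0 < p) :
    ∫⁻ x : E, ENNReal.ofReal (radialRearrangement μ f ‖x‖ ^ p) ∂μ =
      ∫⁻ x, ENNReal.ofReal (f x ^ p) ∂μ := by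
  rw [lintegral_rpow_eq_lintegral_meas_lt_mul _
      (ae_of_all _ fun x ↦ radialRearrangement_nonneg μ f ‖x‖)
      (measurable_radialRearrangement_norm hf hc).aemeasurable hp,
    lintegral_rpow_eq_lintegral_meas_lt_mul _ (ae_of_all _ hf₀) (by fun_prop) hp]
  congr 1
  refine setLIntegral_congr_fun measurableSet_Ioi fun t (ht : 0 < t) ↦ ?_
  rw [measure_setOf_lt_radialRearrangement_norm hf hc ht.le]

theorem lintegral_mul_radialRearrangement_rpow_le (hf : Continuous f) (hf₀ : ∀ x, 0 ≤ f x)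
    (hc : HasCompactSupport f) {p : ℝ} (hp : 0 < p) {g : ℝ → ℝ≥0∞} (hg : Monotone g) :
    ∫⁻ x : E, g ‖x‖ * ENNReal.ofReal (radialRearrangement μ f ‖x‖ ^ p) ∂μ ≤
      ∫⁻ x, g ‖x‖ * ENNReal.ofReal (f x ^ p) ∂μ := by
  have hV := measurable_radialRearrangement_norm (μ := μ) hf hc
  have hgm : Measurable fun x : E ↦ g ‖x‖ := hg.measurable.comp measurable_norm
  have withDensity_eq (h : E → ℝ≥0∞) (hh : Measurable h) :
      ∫⁻ x, g ‖x‖ * h x ∂μ = ∫⁻ x, h x ∂(μ.withDensity fun x ↦ g ‖x‖) :=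
    (lintegral_withDensity_eq_lintegral_mul μ hgm hh).symm
  rw [withDensity_eq _ (by fun_prop), withDensity_eq _ (by fun_prop),
    lintegral_rpow_eq_lintegral_meas_lt_mul _
      (ae_of_all _ fun x ↦ radialRearrangement_nonneg μ f ‖x‖) hV.aemeasurable hp,
    lintegral_rpow_eq_lintegral_meas_lt_mul _ (ae_of_all _ hf₀) (by fun_prop) hp]
  gcongr _ * ?_
  refine setLIntegral_mono' measurableSet_Ioi fun t (ht : 0 < t) ↦ ?_
  have ne_top : μ {x | t < f x} ≠ ⊤ := measure_superlevel_ne_top hc ht.le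
  rw [setOf_lt_radialRearrangement_norm hf hc ht.le,
    withDensity_apply _ Metric.isOpen_ball.measurableSet,
    withDensity_apply _ (measurableSet_superlevel hf t)]
  gcongr ?_ * _
  exact setLIntegral_ball_le hg (measurableSet_superlevel hf t) ne_top
    (measure_ball_volumeRadius ne_top).le

end Rearrangement

section SupConvolution

variable {E : Type*} [NormedAddCommGroup E] [NormedSpace ℝ E] [FiniteDimensional ℝ E]
  [MeasurableSpace E] [BorelSpace E] [Nontrivial E] {μ : Measure E} [μ.IsAddHaarMeasure]
  {f K : E → ℝ} {ε : ℝ}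

theorem norm_lt_volumeRadius_of_add_lt_radialRearrangement (hf : Continuous f)
    (hc : HasCompactSupport f) (hε : 0 < ε) (hK : Continuous K) (hKc : HasCompactSupport K)
    (hfK : ∀ x y, f y - ‖x - y‖ ^ 2 / (2 * ε) ≤ K x) {t : ℝ} (ht : 0 ≤ t) {x y : E}
    (hxy : t + ‖x - y‖ ^ 2 / (2 * ε) < radialRearrangement μ f ‖y‖) :
    ‖x‖ < volumeRadius μ {x | t < K x} := by
  obtain ⟨δ, hδ, hδ'⟩ :
      ∃ δ, t + δ ^ 2 / (2 * ε) < radialRearrangement μ f ‖y‖ ∧ ‖x - y‖ < δ := by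
    have : ∀ᶠ δ in 𝓝[>] ‖x - y‖, t + δ ^ 2 / (2 * ε) < radialRearrangement μ f ‖y‖ :=
      nhdsWithin_le_nhds <| ContinuousAt.eventually_lt (by fun_prop) continuousAt_const hxy
    exact (this.and self_mem_nhdsWithin).exists
  have δ_pos : 0 < δ := (norm_nonneg _).trans_lt hδ'
  rw [lt_radialRearrangement_iff hf hc (by positivity), abs_norm] at hδ
  have radius_le := volumeRadius_add_le (μ := μ) (C := {x | t < K x})
    (measurableSet_superlevel hf _)
    (nonempty_of_volumeRadius_pos ((norm_nonneg y).trans_lt hδ)) (measurableSet_superlevel hK _)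
    (measure_superlevel_ne_top hKc ht) δ_pos (by
      rintro _ ⟨z, hz, w, hw, rfl⟩
      have hfz : t + δ ^ 2 / (2 * ε) < f z := hz
      have := hfK (z + w) z
      have : ‖w‖ ^ 2 / (2 * ε) ≤ δ ^ 2 / (2 * ε) := by
        gcongr; exact (mem_ball_zero_iff.1 hw).le
      rw [add_sub_cancel_left] at *
      change t < K (z + w)
      linarith)
  have := norm_le_norm_add_norm_sub' x y
  linarith

/-- Sup-convolution with the parabola `‖·‖² / (2 ε)` only gets smaller under rearrangement of `f`:
`k` is below the sup-convolution of the rearranged function, `K` is above the one of `f`. -/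
theorem lintegral_le_of_supConvolution (hf : Continuous f) (hc : HasCompactSupport f)
    (hε : 0 < ε) {k : E → ℝ} (hk : Measurable k) (hk₀ : ∀ x, 0 ≤ k x) (hK : Continuous K)
    (hKc : HasCompactSupport K) (hK₀ : ∀ x, 0 ≤ K x)
    (hkf : ∀ x, ∃ y, k x ≤ radialRearrangement μ f ‖y‖ - ‖x - y‖ ^ 2 / (2 * ε))
    (hfK : ∀ x y, f y - ‖x - y‖ ^ 2 / (2 * ε) ≤ K x) :
    ∫⁻ x, ENNReal.ofReal (k x) ∂μ ≤ ∫⁻ x, ENNReal.ofReal (K x) ∂μ := by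
  rw [lintegral_eq_lintegral_meas_lt _ (ae_of_all _ hk₀) hk.aemeasurable,
    lintegral_eq_lintegral_meas_lt _ (ae_of_all _ hK₀) hK.measurable.aemeasurable]
  refine setLIntegral_mono' measurableSet_Ioi fun t (ht : 0 < t) ↦ ?_
  rw [← measure_ball_volumeRadius (measure_superlevel_ne_top hKc ht.le)]
  refine measure_mono fun x (hx : t < k x) ↦ ?_
  obtain ⟨y, hy⟩ := hkf x
  exact mem_ball_zero_iff.2 <| norm_lt_volumeRadius_of_add_lt_radialRearrangement hf hc hε hK hKc
    hfK ht.le (lt_sub_iff_add_lt.1 (hx.trans_le hy))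

end SupConvolution

/-! ### The Pólya–Szegő inequality -/

section PolyaSzego

theorem exists_norm_le_add_norm_fderiv_mul_add {E F : Type*} [NormedAddCommGroup E]
    [NormedSpace ℝ E] [NormedAddCommGroup F] [NormedSpace ℝ F] {φ : E → F} (hφ : ContDiff ℝ 2 φ)
    (hc : HasCompactSupport φ) :
    ∃ M : ℝ, 0 ≤ M ∧ ∀ x y, ‖φ y‖ ≤ ‖φ x‖ + ‖fderiv ℝ φ x‖ * ‖x - y‖ + M * ‖x - y‖ ^ 2 := by
  obtain ⟨L, hL⟩ := (hφ.fderiv_right (m := 1) (by norm_num)).lipschitzWith_of_hasCompactSupport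
    (hc.fderiv ℝ) one_ne_zero
  refine ⟨L, L.2, fun x y ↦ ?_⟩
  have taylor : ‖φ y - φ x - fderiv ℝ φ x (y - x)‖ ≤ L * ‖y - x‖ * ‖y - x‖ :=
    (convex_closedBall x ‖y - x‖).norm_image_sub_le_of_norm_fderiv_le'
      (fun z _ ↦ hφ.differentiable two_ne_zero z)
      (fun z hz ↦ by
        rw [← dist_eq_norm]
        refine (hL.dist_le_mul z x).trans ?_
        gcongr
        exact hz)
      (by simp) (by simp [dist_eq_norm])
  rw [norm_sub_rev x y]
  calc ‖φ y‖ = ‖φ y - φ x - fderiv ℝ φ x (y - x) + (φ x + fderiv ℝ φ x (y - x))‖ := by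
        congr 1; abel
    _ ≤ L * ‖y - x‖ * ‖y - x‖ + (‖φ x‖ + ‖fderiv ℝ φ x‖ * ‖y - x‖) :=
        norm_add_le_of_le taylor (norm_add_le_of_le le_rfl ((fderiv ℝ φ x).le_opNorm _))
    _ = ‖φ x‖ + ‖fderiv ℝ φ x‖ * ‖y - x‖ + L * ‖y - x‖ ^ 2 := by ring

theorem mul_add_sub_sq_div_le {ε M : ℝ} (hε : 0 < ε) (hM : 0 < 1 - 2 * ε * M) (G t : ℝ) :
    G * t + M * t ^ 2 - t ^ 2 / (2 * ε) ≤ ε / (2 * (1 - 2 * ε * M)) * G ^ 2 := by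
  obtain ⟨D, hD⟩ : ∃ D, D = 1 - 2 * ε * M := ⟨_, rfl⟩
  have M_eq : M = (1 - D) / (2 * ε) := by
    rw [hD]
    field_simp
    ring
  rw [← hD] at hM ⊢
  have complete_square : ε / (2 * D) * G ^ 2 - (G * t + M * t ^ 2 - t ^ 2 / (2 * ε)) =
      (ε * G - D * t) ^ 2 / (2 * ε * D) := by
    rw [M_eq]
    field_simp
    ring
  have : 0 ≤ (ε * G - D * t) ^ 2 / (2 * ε * D) := by positivity
  linarith

theorem exists_norm_eq_abs_add {E : Type*} [NormedAddCommGroup E] [NormedSpace ℝ E] [Nontrivial E]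
    (x : E) (c : ℝ) : ∃ y : E, ‖y‖ = |‖x‖ + c| ∧ ‖x - y‖ = |c| := by
  rcases eq_or_ne x 0 with rfl | hx
  · obtain ⟨y, hy⟩ := exists_norm_eq E (abs_nonneg c)
    exact ⟨y, by simp [hy], by simp [hy]⟩
  · have norm_pos : 0 < ‖x‖ := norm_pos_iff.2 hx
    refine ⟨(1 + c / ‖x‖) • x, ?_, ?_⟩
    · rw [norm_smul, Real.norm_eq_abs, ← abs_of_pos norm_pos, ← abs_mul, abs_of_pos norm_pos,
        add_mul, one_mul, div_mul_cancel₀ _ norm_pos.ne']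
    · rw [add_smul, one_smul, sub_add_cancel_left, norm_neg, norm_smul, norm_div, norm_norm,
        div_mul_cancel₀ _ norm_pos.ne', Real.norm_eq_abs]

theorem lintegral_ofReal_add_const_mul {α : Type*} [MeasurableSpace α] (μ : Measure α)
    {a b : α → ℝ} (ha : Measurable a) (hb : Measurable b) (ha₀ : ∀ x, 0 ≤ a x) (hb₀ : ∀ x, 0 ≤ b x)
    {ε : ℝ} (hε : 0 ≤ ε) :
    ∫⁻ x, ENNReal.ofReal (a x + ε * b x) ∂μ =
      (∫⁻ x, ENNReal.ofReal (a x) ∂μ) + ENNReal.ofReal ε * ∫⁻ x, ENNReal.ofReal (b x) ∂μ := by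
  rw [← lintegral_const_mul _ (by fun_prop), ← lintegral_add_left (by fun_prop)]
  refine lintegral_congr fun x ↦ ?_
  rw [ENNReal.ofReal_add (ha₀ x) (mul_nonneg hε (hb₀ x)), ENNReal.ofReal_mul hε]

/-- A lower bound for the sup-convolution `max_ρ (V ρ - (r - ρ) ^ 2 / (2 * ε))`, which solves the
Hamilton–Jacobi equation `∂V/∂ε = V' ^ 2 / 2`: only `ρ = r` and the first order guess
`ρ = r + ε * V' r` for the maximiser are tested. -/
noncomputable def hamiltonJacobiStep (V : ℝ → ℝ) (ε r : ℝ) : ℝ :=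
  max (V r) (V (r + ε * deriv V r) - ε * deriv V r ^ 2 / 2)

theorem measurable_hamiltonJacobiStep {V : ℝ → ℝ} (hV : Measurable V) (ε : ℝ) :
    Measurable (hamiltonJacobiStep V ε) := by
  have := measurable_deriv V
  unfold hamiltonJacobiStep
  fun_prop

theorem exists_hamiltonJacobiStep_le {E : Type*} [NormedAddCommGroup E] [NormedSpace ℝ E]
    [Nontrivial E] {V : ℝ → ℝ} (hV : ∀ r, V |r| = V r) (ε : ℝ) (x : E) :
    ∃ y : E, hamiltonJacobiStep V ε ‖x‖ ≤ V ‖y‖ - ‖x - y‖ ^ 2 / (2 * ε) := by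
  rcases max_choice (V ‖x‖) (V (‖x‖ + ε * deriv V ‖x‖) - ε * deriv V ‖x‖ ^ 2 / 2) with h | h
  · exact ⟨x, by simp [hamiltonJacobiStep, h]⟩
  · obtain ⟨y, hy, hxy⟩ := exists_norm_eq_abs_add x (ε * deriv V ‖x‖)
    refine ⟨y, (h.trans ?_).le⟩
    rw [hy, hV, hxy, sq_abs]
    field_simp

/-- Along the maximising direction the difference quotient of `hamiltonJacobiStep` tends to
`V' ^ 2 - V' ^ 2 / 2`. -/
theorem deriv_sq_le_liminf_hamiltonJacobiStep (V : ℝ → ℝ) (r : ℝ) {u : ℕ → ℝ}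
    (hu : Tendsto u atTop (𝓝[>] 0)) :
    ENNReal.ofReal (1 / 2) * ENNReal.ofReal (deriv V r ^ 2) ≤
      liminf (fun n ↦ ENNReal.ofReal ((hamiltonJacobiStep V (u n) r - V r) / u n)) atTop := by
  by_cases hV : DifferentiableAt ℝ V r
  swap
  · simp [deriv_zero_of_not_differentiableAt hV]
  have hasDerivAt_shift : HasDerivAt (fun ε ↦ V (r + ε * deriv V r)) (deriv V r * deriv V r) 0 := by
    have inner_deriv : HasDerivAt (fun ε ↦ r + ε * deriv V r) (deriv V r) 0 := by
      simpa using ((hasDerivAt_id (0 : ℝ)).mul_const (deriv V r)).const_add r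
    exact HasDerivAt.comp 0 (by simpa using hV.hasDerivAt) inner_deriv
  have slope_tendsto := (ENNReal.continuous_ofReal.tendsto _).comp
    ((hasDerivAt_shift.tendsto_slope_zero_right.comp hu).sub_const (deriv V r ^ 2 / 2))
  have limit_eq : deriv V r * deriv V r - deriv V r ^ 2 / 2 = 1 / 2 * deriv V r ^ 2 := by ring
  rw [← ENNReal.ofReal_mul (by norm_num), ← limit_eq, ← slope_tendsto.liminf_eq]
  have u_pos : ∀ᶠ n in atTop, 0 < u n := hu self_mem_nhdsWithin
  refine liminf_le_liminf (u_pos.mono fun n hn ↦ ENNReal.ofReal_le_ofReal ?_)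
  simp only [Function.comp, smul_eq_mul, zero_add, zero_mul, add_zero]
  calc (u n)⁻¹ * (V (r + u n * deriv V r) - V r) - deriv V r ^ 2 / 2
      = (V (r + u n * deriv V r) - u n * deriv V r ^ 2 / 2 - V r) / u n := by
        field_simp
        ring
    _ ≤ (hamiltonJacobiStep V (u n) r - V r) / u n := by
        gcongr
        exact le_max_right _ _

variable {E : Type*} [NormedAddCommGroup E] [NormedSpace ℝ E] [FiniteDimensional ℝ E]
  [MeasurableSpace E] [BorelSpace E] [Nontrivial E] {μ : Measure E} [μ.IsAddHaarMeasure]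
  {φ : E → ℝ}

theorem lintegral_hamiltonJacobiStep_sub_div_le (hφ : ContDiff ℝ 1 φ) (hc : HasCompactSupport φ)
    {M : ℝ} (hM : ∀ x y, ‖φ y‖ ≤ ‖φ x‖ + ‖fderiv ℝ φ x‖ * ‖x - y‖ + M * ‖x - y‖ ^ 2)
    {V : ℝ → ℝ} (hV : V = radialRearrangement μ fun x ↦ ‖φ x‖) {ε : ℝ} (hε : 0 < ε)
    (hεM : 0 < 1 - 2 * ε * M) :
    ∫⁻ x : E, ENNReal.ofReal ((hamiltonJacobiStep V ε ‖x‖ - V ‖x‖) / ε) ∂μ ≤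
      ENNReal.ofReal (1 / (2 * (1 - 2 * ε * M))) *
        ∫⁻ x, ENNReal.ofReal (‖fderiv ℝ φ x‖ ^ 2) ∂μ := by
  have hf : Continuous fun x ↦ ‖φ x‖ := hφ.continuous.norm
  have hfc : HasCompactSupport fun x ↦ ‖φ x‖ := hc.norm
  have hV_cont : Continuous V := by
    obtain ⟨L, hL⟩ := hφ.lipschitzWith_of_hasCompactSupport hc one_ne_zero
    exact hV ▸ (lipschitzWith_radialRearrangement (lipschitzWith_one_norm.comp hL) hfc).continuous
  have hV₀ (x : E) : 0 ≤ V ‖x‖ := hV ▸ radialRearrangement_nonneg μ _ _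
  have : Continuous fun x ↦ ‖fderiv ℝ φ x‖ := (hφ.continuous_fderiv one_ne_zero).norm
  have hGc : HasCompactSupport fun x ↦ ‖fderiv ℝ φ x‖ := (hc.fderiv ℝ).norm
  have hstep := measurable_hamiltonJacobiStep hV_cont.measurable ε
  have step_sub_nonneg (x : E) : 0 ≤ (hamiltonJacobiStep V ε ‖x‖ - V ‖x‖) / ε :=
    div_nonneg (sub_nonneg.2 (le_max_left _ _)) hε.le
  have compare : ∫⁻ x : E, ENNReal.ofReal (V ‖x‖ +
        ε * ((hamiltonJacobiStep V ε ‖x‖ - V ‖x‖) / ε)) ∂μ ≤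
      ∫⁻ x, ENNReal.ofReal (‖φ x‖ + ε * (1 / (2 * (1 - 2 * ε * M)) * ‖fderiv ℝ φ x‖ ^ 2)) ∂μ := by
    refine lintegral_le_of_supConvolution hf hfc hε (by fun_prop)
      (fun x ↦ add_nonneg (hV₀ x) (mul_nonneg hε.le (step_sub_nonneg x))) (by fun_prop)
      (hfc.add (hGc.comp_left (g := fun t ↦ ε * (1 / (2 * (1 - 2 * ε * M)) * t ^ 2)) (by simp)))
      (fun x ↦ by positivity) (fun x ↦ ?_) (fun x y ↦ ?_)
    · rw [mul_div_cancel₀ _ hε.ne', add_sub_cancel, ← hV]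
      exact exists_hamiltonJacobiStep_le (fun r ↦ hV ▸ radialRearrangement_abs μ _ r) ε x
    · have := hM x y
      have := mul_add_sub_sq_div_le hε hεM ‖fderiv ℝ φ x‖ ‖x - y‖
      rw [← mul_assoc, mul_one_div]
      linarith
  have rearranged : ∫⁻ x : E, ENNReal.ofReal (V ‖x‖) ∂μ = ∫⁻ x, ENNReal.ofReal ‖φ x‖ ∂μ := by
    simpa [hV] using lintegral_radialRearrangement_rpow (μ := μ) hf (fun x ↦ norm_nonneg _) hfc
      one_pos
  have finite : ∫⁻ x, ENNReal.ofReal ‖φ x‖ ∂μ ≠ ⊤ :=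
    (hf.integrable_of_hasCompactSupport hfc).lintegral_lt_top.ne
  rw [lintegral_ofReal_add_const_mul _ (by fun_prop) (by fun_prop) hV₀ step_sub_nonneg hε.le,
    lintegral_ofReal_add_const_mul _ hf.measurable (by fun_prop) (fun x ↦ norm_nonneg _)
      (fun x ↦ by positivity) hε.le, rearranged, ENNReal.add_le_add_iff_left finite,
    ENNReal.mul_le_mul_iff_right (by simpa using hε) ENNReal.ofReal_ne_top] at compare
  refine compare.trans_eq ?_
  rw [← lintegral_const_mul _ (by fun_prop)]
  exact lintegral_congr fun x ↦ ENNReal.ofReal_mul (by positivity)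

/-- The gradient energy is the derivative at time `0` of the integral of the Hamilton–Jacobi
evolution, which rearrangement does not increase. -/
theorem lintegral_deriv_radialRearrangement_sq_le (hφ : ContDiff ℝ 2 φ)
    (hc : HasCompactSupport φ) :
    ∫⁻ x : E, ENNReal.ofReal (deriv (radialRearrangement μ fun x ↦ ‖φ x‖) ‖x‖ ^ 2) ∂μ ≤
      ∫⁻ x, ENNReal.ofReal (‖fderiv ℝ φ x‖ ^ 2) ∂μ := by
  obtain ⟨M, -, hM⟩ := exists_norm_le_add_norm_fderiv_mul_add hφ hc
  set V := radialRearrangement μ fun x ↦ ‖φ x‖ with hV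
  have hV_meas : Measurable V := by
    obtain ⟨L, hL⟩ := hφ.lipschitzWith_of_hasCompactSupport hc two_ne_zero
    exact (lipschitzWith_radialRearrangement (lipschitzWith_one_norm.comp hL)
      hc.norm).continuous.measurable
  have := measurable_deriv V
  set u : ℕ → ℝ := fun n ↦ 1 / ((n : ℝ) + 1)
  have hu₀ : Tendsto u atTop (𝓝 0) := tendsto_one_div_add_atTop_nhds_zero_nat
  have hu_pos (n : ℕ) : 0 < u n := Nat.one_div_pos_of_nat
  have hu : Tendsto u atTop (𝓝[>] 0) :=
    tendsto_nhdsWithin_iff.2 ⟨hu₀, Eventually.of_forall hu_pos⟩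
  have one_sub_tendsto : Tendsto (fun n ↦ 1 - 2 * u n * M) atTop (𝓝 1) := by
    simpa using ((hu₀.const_mul 2).mul_const M).const_sub 1
  have bound_tendsto : Tendsto (fun n ↦ ENNReal.ofReal (1 / (2 * (1 - 2 * u n * M))) *
      ∫⁻ x, ENNReal.ofReal (‖fderiv ℝ φ x‖ ^ 2) ∂μ) atTop
      (𝓝 (ENNReal.ofReal (1 / 2) * ∫⁻ x, ENNReal.ofReal (‖fderiv ℝ φ x‖ ^ 2) ∂μ)) := by
    refine ENNReal.Tendsto.mul_const (ENNReal.tendsto_ofReal ?_) (Or.inl (by simp))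
    have := (tendsto_const_nhds (x := (1 : ℝ))).div (one_sub_tendsto.const_mul 2) (by norm_num)
    rwa [mul_one] at this
  refine (ENNReal.mul_le_mul_iff_right (a := ENNReal.ofReal (1 / 2)) (by simp)
    ENNReal.ofReal_ne_top).1 ?_
  calc ENNReal.ofReal (1 / 2) * ∫⁻ x : E, ENNReal.ofReal (deriv V ‖x‖ ^ 2) ∂μ
      = ∫⁻ x : E, ENNReal.ofReal (1 / 2) * ENNReal.ofReal (deriv V ‖x‖ ^ 2) ∂μ :=
        (lintegral_const_mul _ (by fun_prop)).symm
    _ ≤ ∫⁻ x : E, liminf (fun n ↦ ENNReal.ofReal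
          ((hamiltonJacobiStep V (u n) ‖x‖ - V ‖x‖) / u n)) atTop ∂μ :=
        lintegral_mono fun x ↦ deriv_sq_le_liminf_hamiltonJacobiStep V ‖x‖ hu
    _ ≤ liminf (fun n ↦ ∫⁻ x : E, ENNReal.ofReal
          ((hamiltonJacobiStep V (u n) ‖x‖ - V ‖x‖) / u n) ∂μ) atTop :=
        lintegral_liminf_le fun n ↦ by
          have := measurable_hamiltonJacobiStep hV_meas (u n)
          fun_prop
    _ ≤ liminf (fun n ↦ ENNReal.ofReal (1 / (2 * (1 - 2 * u n * M))) *
          ∫⁻ x, ENNReal.ofReal (‖fderiv ℝ φ x‖ ^ 2) ∂μ) atTop :=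
        liminf_le_liminf <| (one_sub_tendsto.eventually (lt_mem_nhds zero_lt_one)).mono fun n hn ↦
          lintegral_hamiltonJacobiStep_sub_div_le (hφ.of_le one_le_two) hc hM hV (hu_pos n) hn
    _ = _ := bound_tendsto.liminf_eq

end PolyaSzego

/-! ### Weighted Faber–Krahn inequality -/

section OneDimensional

theorem intervalIntegrable_mul_of_bounded {F D : ℝ → ℝ} {a b C : ℝ} (hF : ContinuousOn F (uIcc a b))
    (hD : Measurable D) (hC : ∀ r, |D r| ≤ C) :
    IntervalIntegrable (fun r ↦ F r * D r) volume a b := by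
  refine IntervalIntegrable.continuousOn_mul ?_ hF
  rw [intervalIntegrable_iff]
  exact Measure.integrableOn_of_bounded (by simp) hD.aestronglyMeasurable (ae_of_all _ hC)

/-- The radial potentials `x ↦ W ‖x‖` allowed in the Schrödinger operators `-Δ + W ‖·‖`: continuous,
nonnegative and nondecreasing in the radius. -/
structure IsRadialPotential (W : ℝ → ℝ) : Prop where
  continuous : Continuous W
  monotoneOn : MonotoneOn W (Ici 0)
  zero_nonneg : 0 ≤ W 0

theorem IsRadialPotential.nonneg {W : ℝ → ℝ} (hW : IsRadialPotential W) {r : ℝ} (hr : 0 ≤ r) :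
    0 ≤ W r :=
  hW.zero_nonneg.trans (hW.monotoneOn self_mem_Ici hr hr)

theorem IsRadialPotential.const_mul {W : ℝ → ℝ} (hW : IsRadialPotential W) {c : ℝ} (hc : 0 ≤ c) :
    IsRadialPotential fun r ↦ c * W r where
  continuous := hW.continuous.const_mul c
  monotoneOn _ ha _ hb hab := mul_le_mul_of_nonneg_left (hW.monotoneOn ha hb hab) hc
  zero_nonneg := mul_nonneg hc hW.zero_nonneg

theorem IsRadialPotential.comp_const_mul {W : ℝ → ℝ} (hW : IsRadialPotential W) {c : ℝ}
    (hc : 0 ≤ c) : IsRadialPotential fun r ↦ W (c * r) where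
  continuous := hW.continuous.comp (continuous_const_mul c)
  monotoneOn _ ha _ hb hab :=
    hW.monotoneOn (mul_nonneg hc ha) (mul_nonneg hc hb) (mul_le_mul_of_nonneg_left hab hc)
  zero_nonneg := (mul_zero c).symm ▸ hW.zero_nonneg

/-- A field certifying that `μ` is a lower bound for the radial Schrödinger operator
`-r⁻ⁿ (rⁿ w')' + W w` on `(0, R)`: the inequality is the Riccati form `Z = -w' / w` of
`-r⁻ⁿ (rⁿ w')' + W w ≥ μ w` for a positive function `w`, as in Barta's theorem. The function `q'`
is the derivative of `rⁿ Z`. -/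
structure IsBartaField (n : ℕ) (W : ℝ → ℝ) (μ R : ℝ) (Z q' : ℝ → ℝ) : Prop where
  continuousOn : ContinuousOn Z (Icc 0 R)
  apply_zero : Z 0 = 0
  hasDerivAt : ∀ r ∈ Ioo 0 R, HasDerivAt (fun r ↦ r ^ n * Z r) (q' r) r
  bounded : ∃ C, ∀ r ∈ Ioo 0 R, |q' r| ≤ C
  le : ∀ r ∈ Ioo 0 R, r ^ n * (μ + Z r ^ 2 - W r) ≤ q' r

variable {n : ℕ} {W : ℝ → ℝ} {μ R : ℝ} {Z q' : ℝ → ℝ}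

theorem IsBartaField.absolutelyContinuousOnInterval (h : IsBartaField n W μ R Z q') (hR : 0 < R) :
    AbsolutelyContinuousOnInterval (fun r ↦ r ^ n * Z r) 0 R := by
  obtain ⟨C, hC⟩ := h.bounded
  have lipschitz_Ioo : LipschitzOnWith C.toNNReal (fun r ↦ r ^ n * Z r) (Ioo 0 R) :=
    (convex_Ioo 0 R).lipschitzOnWith_of_nnnorm_hasDerivWithin_le
      (fun r hr ↦ (h.hasDerivAt r hr).hasDerivWithinAt)
      (fun r hr ↦ NNReal.coe_le_coe.1 ((hC r hr).trans (Real.le_coe_toNNReal C)))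
  have lipschitz_Icc := lipschitz_Ioo.closure
    (by rw [closure_Ioo hR.ne]; exact (continuousOn_id.pow n).mul h.continuousOn)
  rw [closure_Ioo hR.ne, ← uIcc_of_le hR.le] at lipschitz_Icc
  exact lipschitz_Icc.absolutelyContinuousOnInterval

variable {V : ℝ → ℝ} {L : ℝ≥0}

theorem intervalIntegrable_energy (n : ℕ) (hW : Continuous W) (μ : ℝ) (hV : LipschitzWith L V)
    (a b : ℝ) :
    IntervalIntegrable (fun r ↦ r ^ n * (deriv V r ^ 2 + W r * V r ^ 2 - μ * V r ^ 2))
      volume a b := by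
  have := hV.continuous
  have deriv_part := intervalIntegrable_mul_of_bounded (F := fun r ↦ r ^ n) (a := a) (b := b)
    (by fun_prop) ((measurable_deriv V).pow_const 2) (C := L ^ 2) fun r ↦ by
      rw [abs_pow]
      exact pow_le_pow_left₀ (abs_nonneg _) (norm_deriv_le_of_lipschitz hV) 2
  have potential_part :
      IntervalIntegrable (fun r ↦ r ^ n * (W r * V r ^ 2 - μ * V r ^ 2)) volume a b :=
    Continuous.intervalIntegrable (by fun_prop) _ _
  refine (deriv_part.add potential_part).congr fun r _ ↦ ?_
  ring

/-- Completing the square, `V'² + W V² - μ V² ≥ -r⁻ⁿ (rⁿ Z V²)'` for every field. -/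
theorem IsBartaField.integral_energy_nonneg (h : IsBartaField n W μ R Z q') (hR : 0 < R)
    (hW : Continuous W) (hV : LipschitzWith L V) (hVR : V R = 0) :
    0 ≤ ∫ r in 0..R, r ^ n * (deriv V r ^ 2 + W r * V r ^ 2 - μ * V r ^ 2) := by
  set q : ℝ → ℝ := fun r ↦ r ^ n * Z r
  set V₂ : ℝ → ℝ := fun r ↦ V r * V r
  have q_ac : AbsolutelyContinuousOnInterval q 0 R := h.absolutelyContinuousOnInterval hR
  have V_ac : AbsolutelyContinuousOnInterval V 0 R :=
    hV.lipschitzOnWith.absolutelyContinuousOnInterval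
  have V₂_ac : AbsolutelyContinuousOnInterval V₂ 0 R := V_ac.fun_mul V_ac
  have boundary_terms : ∫ r in 0..R, -(deriv q r * V₂ r + q r * deriv V₂ r) = 0 := by
    rw [intervalIntegral.integral_neg, q_ac.integral_deriv_mul_eq_sub V₂_ac]
    simp [q, V₂, h.apply_zero, hVR]
  have integrable : IntervalIntegrable (fun r ↦ deriv q r * V₂ r + q r * deriv V₂ r) volume 0 R :=
    (q_ac.intervalIntegrable_deriv.mul_continuousOn
      (hV.continuous.mul hV.continuous).continuousOn).add
      (V₂_ac.intervalIntegrable_deriv.continuousOn_mul q_ac.continuousOn)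
  refine boundary_terms.symm.le.trans <| intervalIntegral.integral_mono_ae_restrict hR.le
    integrable.neg (intervalIntegrable_energy n hW μ hV 0 R) ?_
  rw [← restrict_Ioo_eq_restrict_Icc, EventuallyLE, ae_restrict_iff' measurableSet_Ioo]
  filter_upwards [hV.ae_differentiableAt_real] with r hr hmem
  have deriv_V₂ : deriv V₂ r = deriv V r * V r + V r * deriv V r :=
    (hr.hasDerivAt.mul hr.hasDerivAt).deriv
  have riccati := mul_le_mul_of_nonneg_right (h.le r hmem) (sq_nonneg (V r))
  have square_nonneg : 0 ≤ r ^ n * (deriv V r + Z r * V r) ^ 2 :=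
    mul_nonneg (pow_nonneg hmem.1.le n) (sq_nonneg _)
  have deriv_q : deriv q r = q' r := (h.hasDerivAt r hmem).deriv
  rw [deriv_q, deriv_V₂]
  simp only [q, V₂]
  linarith

end OneDimensional

section Radial

variable {E : Type*} [NormedAddCommGroup E] [NormedSpace ℝ E] [FiniteDimensional ℝ E]
  [MeasurableSpace E] [BorelSpace E] {m : Measure E} [m.IsAddHaarMeasure] {R : ℝ}

theorem integrable_fun_norm_of_bounded {F : ℝ → ℝ} (hF : Measurable F) (hFR : ∀ r, R < r → F r = 0)
    (hC : ∃ C, ∀ r ∈ Icc 0 R, |F r| ≤ C) : Integrable (fun x : E ↦ F ‖x‖) m := by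
  obtain ⟨C, hC⟩ := hC
  rw [← integrableOn_iff_integrable_of_support_subset (s := Metric.closedBall (0 : E) R)]
  · refine Measure.integrableOn_of_bounded (M := C) measure_closedBall_lt_top.ne
      (hF.comp measurable_norm).aestronglyMeasurable ?_
    rw [ae_restrict_iff' Metric.isClosed_closedBall.measurableSet]
    exact ae_of_all _ fun x hx ↦ hC _ ⟨norm_nonneg x, by simpa using hx⟩
  · intro x hx
    by_contra h
    exact hx (hFR _ (by simpa using h))

theorem integrable_fun_norm_of_continuous {F : ℝ → ℝ} (hF : Continuous F)
    (hFR : ∀ r, R < r → F r = 0) : Integrable (fun x : E ↦ F ‖x‖) m :=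
  integrable_fun_norm_of_bounded hF.measurable hFR
    (isCompact_Icc.exists_bound_of_continuousOn hF.continuousOn)

variable (m) in
theorem integral_fun_norm_eq_intervalIntegral [Nontrivial E] (F : ℝ → ℝ) (hR : 0 ≤ R)
    (hFR : ∀ r, R < r → F r = 0) :
    ∫ x : E, F ‖x‖ ∂m = finrank ℝ E * m.real (Metric.ball 0 1) *
      ∫ r in 0..R, r ^ (finrank ℝ E - 1) * F r := by
  rw [integral_fun_norm_addHaar, nsmul_eq_mul, smul_eq_mul, ← mul_assoc,
    intervalIntegral.integral_of_le hR]
  congr 1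
  exact setIntegral_eq_of_subset_of_forall_sdiff_eq_zero measurableSet_Ioi (fun r hr ↦ hr.1)
    fun r hr ↦ by simp [hFR r (not_le.1 fun h ↦ hr.2 ⟨hr.1, h⟩)]

variable {W V Z q' : ℝ → ℝ} {μ : ℝ} {L : ℝ≥0}

theorem deriv_eq_zero_of_eqOn_Ici (hVR : ∀ r, R ≤ r → V r = 0) {r : ℝ} (hr : R < r) :
    deriv V r = 0 := by
  have : V =ᶠ[𝓝 r] fun _ ↦ 0 := (lt_mem_nhds hr).mono fun r' hr' ↦ hVR r' hr'.le
  rw [this.deriv_eq, deriv_const]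

theorem IsBartaField.mul_integral_sq_le [Nontrivial E]
    (h : IsBartaField (finrank ℝ E - 1) W μ R Z q') (hR : 0 < R) (hW : Continuous W)
    (hV : LipschitzWith L V) (hVR : ∀ r, R ≤ r → V r = 0) :
    μ * ∫ x : E, V ‖x‖ ^ 2 ∂m ≤
      (∫ x : E, deriv V ‖x‖ ^ 2 ∂m) + ∫ x : E, W ‖x‖ * V ‖x‖ ^ 2 ∂m := by
  have hV_cont := hV.continuous
  have deriv_zero (r : ℝ) (hr : R < r) : deriv V r = 0 := deriv_eq_zero_of_eqOn_Ici hVR hr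
  have deriv_integrable : Integrable (fun x : E ↦ deriv V ‖x‖ ^ 2) m :=
    integrable_fun_norm_of_bounded (R := R) (F := fun r ↦ deriv V r ^ 2)
      ((measurable_deriv V).pow_const 2)
      (fun r hr ↦ by simp [deriv_zero r hr]) ⟨(L : ℝ) ^ 2, fun r _ ↦ by
        rw [abs_pow]
        exact pow_le_pow_left₀ (abs_nonneg _) (norm_deriv_le_of_lipschitz hV) 2⟩
  have potential_integrable : Integrable (fun x : E ↦ W ‖x‖ * V ‖x‖ ^ 2) m :=
    integrable_fun_norm_of_continuous (R := R) (F := fun r ↦ W r * V r ^ 2) (by fun_prop)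
      fun r hr ↦ by simp [hVR r hr.le]
  have sq_integrable : Integrable (fun x : E ↦ V ‖x‖ ^ 2) m :=
    integrable_fun_norm_of_continuous (R := R) (F := fun r ↦ V r ^ 2) (by fun_prop)
      fun r hr ↦ by simp [hVR r hr.le]
  have energy_nonneg :
      0 ≤ ∫ x : E, (deriv V ‖x‖ ^ 2 + W ‖x‖ * V ‖x‖ ^ 2 - μ * V ‖x‖ ^ 2) ∂m := by
    rw [integral_fun_norm_eq_intervalIntegral m
      (fun r ↦ deriv V r ^ 2 + W r * V r ^ 2 - μ * V r ^ 2) hR.le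
      fun r hr ↦ by simp [hVR r hr.le, deriv_zero r hr]]
    exact mul_nonneg (by positivity) (h.integral_energy_nonneg hR hW hV (hVR R le_rfl))
  have energy_integrable : Integrable (fun x : E ↦ deriv V ‖x‖ ^ 2 + W ‖x‖ * V ‖x‖ ^ 2) m :=
    deriv_integrable.add potential_integrable
  rwa [integral_sub energy_integrable (sq_integrable.const_mul μ),
    integral_add deriv_integrable potential_integrable, integral_const_mul, sub_nonneg]
    at energy_nonneg

end Radial

section FaberKrahn

theorem integral_le_integral_of_lintegral_le {α : Type*} [MeasurableSpace α] {m : Measure α}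
    {F G : α → ℝ} (hF : AEStronglyMeasurable F m) (hG : Integrable G m) (hF₀ : ∀ x, 0 ≤ F x)
    (hG₀ : ∀ x, 0 ≤ G x)
    (h : ∫⁻ x, ENNReal.ofReal (F x) ∂m ≤ ∫⁻ x, ENNReal.ofReal (G x) ∂m) :
    ∫ x, F x ∂m ≤ ∫ x, G x ∂m := by
  rw [integral_eq_lintegral_of_nonneg_ae (ae_of_all _ hF₀) hF,
    integral_eq_lintegral_of_nonneg_ae (ae_of_all _ hG₀) hG.aestronglyMeasurable]
  exact ENNReal.toReal_mono hG.lintegral_lt_top.ne h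

theorem hasCompactSupport_sq {α : Type*} [TopologicalSpace α] {f : α → ℝ}
    (hf : HasCompactSupport f) : HasCompactSupport fun x ↦ f x ^ 2 :=
  hf.comp_left (g := fun t ↦ t ^ 2) (zero_pow two_ne_zero)

variable {E : Type*} [NormedAddCommGroup E] [NormedSpace ℝ E] [FiniteDimensional ℝ E]
  [MeasurableSpace E] [BorelSpace E] [Nontrivial E] {m : Measure E} [m.IsAddHaarMeasure]
  {φ : E → ℝ}

theorem integral_radialRearrangement_sq (hφ : Continuous φ) (hc : HasCompactSupport φ) :
    ∫ x : E, radialRearrangement m (fun x ↦ ‖φ x‖) ‖x‖ ^ 2 ∂m = ∫ x, φ x ^ 2 ∂m := by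
  have := measurable_radialRearrangement_norm (μ := m) hφ.norm hc.norm
  have lintegral_eq := lintegral_radialRearrangement_rpow (μ := m) hφ.norm
    (fun x ↦ norm_nonneg _) hc.norm two_pos
  simp only [Real.rpow_two, Real.norm_eq_abs, sq_abs] at lintegral_eq
  rw [integral_eq_lintegral_of_nonneg_ae (ae_of_all _ fun x ↦ sq_nonneg _)
      (by fun_prop : Measurable _).aestronglyMeasurable,
    integral_eq_lintegral_of_nonneg_ae (ae_of_all _ fun x ↦ sq_nonneg _)
      (hφ.pow 2).aestronglyMeasurable]
  exact congrArg ENNReal.toReal lintegral_eq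

theorem integral_mul_radialRearrangement_sq_le (hφ : Continuous φ) (hc : HasCompactSupport φ)
    {W : ℝ → ℝ} (hW : IsRadialPotential W) :
    ∫ x : E, W ‖x‖ * radialRearrangement m (fun x ↦ ‖φ x‖) ‖x‖ ^ 2 ∂m ≤
      ∫ x, W ‖x‖ * φ x ^ 2 ∂m := by
  have := measurable_radialRearrangement_norm (μ := m) hφ.norm hc.norm
  have W_nonneg (x : E) : 0 ≤ W ‖x‖ := hW.nonneg (norm_nonneg x)
  have := hW.continuous
  have lintegral_le := lintegral_mul_radialRearrangement_rpow_le (μ := m) hφ.norm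
    (fun x ↦ norm_nonneg _) hc.norm two_pos (g := fun r ↦ ENNReal.ofReal (W (max r 0)))
    fun a b hab ↦ ENNReal.ofReal_le_ofReal <|
      hW.monotoneOn (mem_Ici.2 (le_max_right _ _)) (mem_Ici.2 (le_max_right _ _))
        (max_le_max hab le_rfl)
  simp only [Real.rpow_two, max_eq_left (norm_nonneg _), ← ENNReal.ofReal_mul (W_nonneg _),
    Real.norm_eq_abs, sq_abs] at lintegral_le
  exact integral_le_integral_of_lintegral_le (by fun_prop : Measurable _).aestronglyMeasurable
    (Continuous.integrable_of_hasCompactSupport (by fun_prop) (hasCompactSupport_sq hc).mul_left)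
    (fun x ↦ mul_nonneg (W_nonneg x) (sq_nonneg _))
    (fun x ↦ mul_nonneg (W_nonneg x) (sq_nonneg _)) lintegral_le

theorem integral_deriv_radialRearrangement_sq_le (hφ : ContDiff ℝ 2 φ)
    (hc : HasCompactSupport φ) :
    ∫ x : E, deriv (radialRearrangement m fun x ↦ ‖φ x‖) ‖x‖ ^ 2 ∂m ≤
      ∫ x, ‖fderiv ℝ φ x‖ ^ 2 ∂m :=
  integral_le_integral_of_lintegral_le
    (((measurable_deriv _).comp measurable_norm).pow_const 2).aestronglyMeasurable
    (((hφ.continuous_fderiv two_ne_zero).norm.pow 2).integrable_of_hasCompactSupport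
      (hasCompactSupport_sq (hc.fderiv ℝ).norm))
    (fun _ ↦ sq_nonneg _) (fun _ ↦ sq_nonneg _) (lintegral_deriv_radialRearrangement_sq_le hφ hc)

theorem IsBartaField.mul_integral_sq_le_of_measure_support_le {W Z q' : ℝ → ℝ} {μ R : ℝ}
    (h : IsBartaField (finrank ℝ E - 1) W μ R Z q') (hR : 0 < R)
    (hW : IsRadialPotential W) (hφ : ContDiff ℝ 2 φ) (hc : HasCompactSupport φ)
    (hφR : m (Function.support φ) ≤ m (Metric.ball 0 R)) :
    μ * ∫ x, φ x ^ 2 ∂m ≤ (∫ x, ‖fderiv ℝ φ x‖ ^ 2 ∂m) + ∫ x, W ‖x‖ * φ x ^ 2 ∂m := by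
  obtain ⟨L, hL⟩ := hφ.lipschitzWith_of_hasCompactSupport hc two_ne_zero
  have V_lipschitz := lipschitzWith_radialRearrangement (μ := m)
    (lipschitzWith_one_norm.comp hL) hc.norm
  have V_eq_zero (r : ℝ) (hr : R ≤ r) : radialRearrangement m (fun x ↦ ‖φ x‖) r = 0 :=
    radialRearrangement_eq_zero hφ.continuous.norm hc.norm (hR.le.trans hr) <| by
      simp only [norm_pos_iff]
      exact hφR.trans (measure_mono (Metric.ball_subset_ball hr))
  calc μ * ∫ x, φ x ^ 2 ∂m
      = μ * ∫ x : E, radialRearrangement m (fun x ↦ ‖φ x‖) ‖x‖ ^ 2 ∂m := by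
        rw [integral_radialRearrangement_sq hφ.continuous hc]
    _ ≤ _ := h.mul_integral_sq_le hR hW.continuous V_lipschitz V_eq_zero
    _ ≤ _ := add_le_add (integral_deriv_radialRearrangement_sq_le hφ hc)
        (integral_mul_radialRearrangement_sq_le hφ.continuous hc hW)

end FaberKrahn

/-! ### The radial equation -/

section RadialMean

/-- The weighted average `∫₀¹ θ ^ n f (r θ) dθ = r⁻⁽ⁿ⁺¹⁾ ∫₀ʳ t ^ n f t dt`, in the form that
makes sense and is continuous at `r = 0`. -/
noncomputable def radialMean (n : ℕ) (f : ℝ → ℝ) (r : ℝ) : ℝ :=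
  ∫ θ in (0 : ℝ)..1, θ ^ n * f (r * θ)

variable {n j : ℕ} {f : ℝ → ℝ} {r : ℝ}

theorem continuous_radialMean_param {X : Type*} [TopologicalSpace X] {f : X → ℝ → ℝ} (n : ℕ)
    (hf : Continuous fun p : X × ℝ ↦ f p.1 p.2) :
    Continuous fun p : X × ℝ ↦ radialMean n (f p.1) p.2 := by
  refine intervalIntegral.continuous_parametric_intervalIntegral_of_continuous'
    (f := fun (p : X × ℝ) θ ↦ θ ^ n * f p.1 (p.2 * θ)) ?_ 0 1
  have : Continuous fun q : (X × ℝ) × ℝ ↦ f q.1.1 (q.1.2 * q.2) :=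
    hf.comp (by fun_prop : Continuous fun q : (X × ℝ) × ℝ ↦ (q.1.1, q.1.2 * q.2))
  simp only [Function.uncurry_def]
  fun_prop

theorem continuous_radialMean (n : ℕ) (hf : Continuous f) : Continuous (radialMean n f) :=
  (continuous_radialMean_param (X := Unit) (f := fun _ ↦ f) n (hf.comp continuous_snd)).comp
    (by fun_prop : Continuous fun r : ℝ ↦ ((), r))

theorem pow_succ_mul_radialMean (n : ℕ) (f : ℝ → ℝ) (r : ℝ) :
    r ^ (n + 1) * radialMean n f r = ∫ t in (0 : ℝ)..r, t ^ n * f t := by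
  have := intervalIntegral.smul_integral_comp_mul_left (a := 0) (b := 1)
    (f := fun t ↦ t ^ n * f t) r
  rw [mul_zero, mul_one, smul_eq_mul] at this
  rw [← this, radialMean, pow_succ', mul_assoc, ← intervalIntegral.integral_const_mul]
  congr 2 with θ
  ring

theorem hasDerivAt_pow_succ_mul_radialMean (n : ℕ) (hf : Continuous f) (r : ℝ) :
    HasDerivAt (fun r ↦ r ^ (n + 1) * radialMean n f r) (r ^ n * f r) r := by
  simp only [pow_succ_mul_radialMean]
  have : Continuous fun t ↦ t ^ n * f t := by fun_prop
  exact (this.integral_hasStrictDerivAt 0 r).hasDerivAt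

theorem abs_mul_le_of_mem_Icc {θ : ℝ} (hθ : θ ∈ Icc (0 : ℝ) 1) (r : ℝ) : |r * θ| ≤ |r| := by
  rw [abs_mul, abs_of_nonneg hθ.1]
  exact mul_le_of_le_one_right (abs_nonneg r) hθ.2

theorem abs_radialMean_le {C : ℝ} (hf : ∀ t, |t| ≤ |r| → |f t| ≤ C * |t| ^ j) :
    |radialMean n f r| ≤ C * |r| ^ j / (n + j + 1) := by
  have norm_le (θ : ℝ) (hθ : θ ∈ Ioc (0 : ℝ) 1) :
      ‖θ ^ n * f (r * θ)‖ ≤ C * |r| ^ j * θ ^ (n + j) := by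
    rw [norm_mul, norm_pow, Real.norm_of_nonneg hθ.1.le, Real.norm_eq_abs]
    calc θ ^ n * |f (r * θ)| ≤ θ ^ n * (C * |r * θ| ^ j) := mul_le_mul_of_nonneg_left
          (hf _ (abs_mul_le_of_mem_Icc ⟨hθ.1.le, hθ.2⟩ r)) (pow_nonneg hθ.1.le n)
      _ = C * |r| ^ j * θ ^ (n + j) := by rw [abs_mul, abs_of_pos hθ.1]; ring
  calc |radialMean n f r| ≤ ∫ θ in (0 : ℝ)..1, C * |r| ^ j * θ ^ (n + j) :=
        intervalIntegral.norm_integral_le_of_norm_le zero_le_one (ae_of_all _ norm_le)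
          (Continuous.intervalIntegrable (by fun_prop) _ _)
    _ = C * |r| ^ j / (n + j + 1) := by
        rw [intervalIntegral.integral_const_mul, integral_pow]
        simp [div_eq_mul_inv]

theorem radialMean_nonneg (hr : 0 ≤ r) (hf : ∀ t, 0 ≤ t → 0 ≤ f t) : 0 ≤ radialMean n f r :=
  intervalIntegral.integral_nonneg zero_le_one fun _ hθ ↦
    mul_nonneg (pow_nonneg hθ.1 n) (hf _ (mul_nonneg hr hθ.1))

theorem hasSum_radialMean {f : ℕ → ℝ → ℝ} {F : ℝ → ℝ} {u : ℕ → ℝ} (hf : ∀ k, Continuous (f k))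
    (hu : Summable u) (hfu : ∀ k t, |t| ≤ |r| → |f k t| ≤ u k)
    (hF : ∀ t, |t| ≤ |r| → HasSum (fun k ↦ f k t) (F t)) :
    HasSum (fun k ↦ radialMean n (f k) r) (radialMean n F r) := by
  refine intervalIntegral.hasSum_integral_of_dominated_convergence (fun k _ ↦ u k)
    (fun k ↦ ?_) (fun k ↦ ae_of_all _ fun _ hθ ↦ ?_) (ae_of_all _ fun _ _ ↦ hu)
    intervalIntegrable_const (ae_of_all _ fun _ hθ ↦ ?_)
  · have := hf k
    exact Continuous.aestronglyMeasurable (by fun_prop)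
  all_goals
    rw [uIoc_of_le zero_le_one] at hθ
    have abs_le := abs_mul_le_of_mem_Icc ⟨hθ.1.le, hθ.2⟩ r
  · rw [norm_mul, norm_pow, Real.norm_of_nonneg hθ.1.le, Real.norm_eq_abs]
    exact (mul_le_of_le_one_left (abs_nonneg _) (pow_le_one₀ hθ.1.le hθ.2)).trans
      (hfu k _ abs_le)
  · exact (hF _ abs_le).mul_left _

end RadialMean

section RadialInvLaplacian

/-- The function `w` with `w'' + (n / r) w' = f` and `w 0 = w' 0 = 0`. -/
noncomputable def radialInvLaplacian (n : ℕ) (f : ℝ → ℝ) (r : ℝ) : ℝ :=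
  r ^ 2 * radialMean 1 (radialMean n f) r

variable {n j : ℕ} {f : ℝ → ℝ} {r : ℝ}

theorem continuous_radialInvLaplacian_param {X : Type*} [TopologicalSpace X] {f : X → ℝ → ℝ}
    (n : ℕ) (hf : Continuous fun p : X × ℝ ↦ f p.1 p.2) :
    Continuous fun p : X × ℝ ↦ radialInvLaplacian n (f p.1) p.2 :=
  (continuous_snd.pow 2).mul <|
    continuous_radialMean_param (f := fun x ↦ radialMean n (f x)) 1 <|
      continuous_radialMean_param n hf

theorem hasDerivAt_radialInvLaplacian (n : ℕ) (hf : Continuous f) (r : ℝ) :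
    HasDerivAt (radialInvLaplacian n f) (r * radialMean n f r) r := by
  have := hasDerivAt_pow_succ_mul_radialMean 1 (continuous_radialMean n hf) r
  rwa [pow_one] at this

theorem abs_radialInvLaplacian_le {C : ℝ} (hC : 0 ≤ C)
    (hf : ∀ t, |t| ≤ |r| → |f t| ≤ C * |t| ^ j) :
    |radialInvLaplacian n f r| ≤ C * |r| ^ (j + 2) / (j + 2) := by
  have inner_le (t : ℝ) (ht : |t| ≤ |r|) : |radialMean n f t| ≤ C * |t| ^ j :=
    (abs_radialMean_le fun t' ht' ↦ hf t' (ht'.trans ht)).trans <|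
      div_le_self (by positivity) (by linarith [n.cast_nonneg (α := ℝ), j.cast_nonneg (α := ℝ)])
  calc |radialInvLaplacian n f r| = |r| ^ 2 * |radialMean 1 (radialMean n f) r| := by
        rw [radialInvLaplacian, abs_mul, abs_pow]
    _ ≤ |r| ^ 2 * (C * |r| ^ j / ((1 : ℕ) + j + 1)) := by
        gcongr
        exact abs_radialMean_le inner_le
    _ = C * |r| ^ (j + 2) / (j + 2) := by
        push_cast
        ring

theorem radialInvLaplacian_nonneg (hr : 0 ≤ r) (hf : ∀ t, 0 ≤ t → 0 ≤ f t) :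
    0 ≤ radialInvLaplacian n f r :=
  mul_nonneg (sq_nonneg r) <| radialMean_nonneg hr fun _ ht ↦ radialMean_nonneg ht hf

theorem hasSum_radialInvLaplacian {f : ℕ → ℝ → ℝ} {F : ℝ → ℝ} {u : ℕ → ℝ}
    (hf : ∀ k, Continuous (f k)) (hu : Summable u) (hfu : ∀ k t, |t| ≤ |r| → |f k t| ≤ u k)
    (hF : ∀ t, |t| ≤ |r| → HasSum (fun k ↦ f k t) (F t)) :
    HasSum (fun k ↦ radialInvLaplacian n (f k) r) (radialInvLaplacian n F r) := by
  refine (hasSum_radialMean (fun k ↦ continuous_radialMean n (hf k)) hu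
    (fun k t ht ↦ ?_) fun t ht ↦ ?_).mul_left _
  · have mean_le : |radialMean n (f k) t| ≤ u k * |t| ^ 0 / (n + (0 : ℕ) + 1) :=
      abs_radialMean_le fun t' ht' ↦ by simpa using hfu k t' (ht'.trans ht)
    refine mean_le.trans ?_
    rw [pow_zero, mul_one]
    exact div_le_self ((abs_nonneg _).trans (hfu k t ht))
      (by simp)
  · exact hasSum_radialMean hf hu (fun k t' ht' ↦ hfu k t' (ht'.trans ht))
      fun t' ht' ↦ hF t' (ht'.trans ht)

end RadialInvLaplacian

section RadialSolution

/-- Picard iterates of the fixed point equation `w = 1 + radialInvLaplacian n (Q * w)`: the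
`k`-th one is the term of order `k` in `Q` of the solution. -/
noncomputable def radialIterate (n : ℕ) (Q : ℝ → ℝ) : ℕ → ℝ → ℝ
  | 0 => fun _ ↦ 1
  | k + 1 => radialInvLaplacian n fun t ↦ Q t * radialIterate n Q k t

/-- The sum of the Picard series of the radial equation `w'' + (n / r) w' = Q w`, `w 0 = 1`,
`w' 0 = 0`. -/
noncomputable def radialSolution (n : ℕ) (Q : ℝ → ℝ) (r : ℝ) : ℝ :=
  ∑' k, radialIterate n Q k r

variable {n : ℕ} {Q : ℝ → ℝ} {P B r : ℝ}

theorem continuous_radialIterate_param {X : Type*} [TopologicalSpace X] {Q : X → ℝ → ℝ} (n : ℕ)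
    (hQ : Continuous fun p : X × ℝ ↦ Q p.1 p.2) (k : ℕ) :
    Continuous fun p : X × ℝ ↦ radialIterate n (Q p.1) k p.2 := by
  induction k with
  | zero => exact continuous_const
  | succ k ih =>
    exact continuous_radialInvLaplacian_param
      (f := fun x t ↦ Q x t * radialIterate n (Q x) k t) n (hQ.mul ih)

theorem continuous_radialIterate (n : ℕ) (hQ : Continuous Q) (k : ℕ) :
    Continuous (radialIterate n Q k) :=
  (continuous_radialIterate_param (X := Unit) (Q := fun _ ↦ Q) n (hQ.comp continuous_snd) k).comp
    (by fun_prop : Continuous fun r : ℝ ↦ ((), r))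

theorem abs_radialIterate_le_pow (hQ : ∀ t, |t| ≤ B → |Q t| ≤ P) (k : ℕ) (hr : |r| ≤ B) :
    |radialIterate n Q k r| ≤ P ^ k / k.factorial * |r| ^ (2 * k) := by
  have hP : 0 ≤ P := (abs_nonneg _).trans (hQ r hr)
  induction k generalizing r with
  | zero => simp [radialIterate]
  | succ k ih =>
    have integrand_le (t : ℝ) (ht : |t| ≤ |r|) :
        |Q t * radialIterate n Q k t| ≤ P * (P ^ k / k.factorial) * |t| ^ (2 * k) := by
      rw [abs_mul, mul_assoc]
      exact mul_le_mul (hQ t (ht.trans hr)) (ih (ht.trans hr)) (abs_nonneg _) hP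
    refine (abs_radialInvLaplacian_le (by positivity) integrand_le).trans ?_
    calc P * (P ^ k / k.factorial) * |r| ^ (2 * k + 2) / ((2 * k : ℕ) + 2)
        ≤ P * (P ^ k / k.factorial) * |r| ^ (2 * k + 2) / (k + 1) := by
          gcongr
          · omega
          · exact one_le_two
      _ = P ^ (k + 1) / (k + 1).factorial * |r| ^ (2 * (k + 1)) := by
          rw [Nat.factorial_succ]
          push_cast
          field_simp
          ring

theorem abs_radialIterate_le (hQ : ∀ t, |t| ≤ B → |Q t| ≤ P) (k : ℕ) (hr : |r| ≤ B) :
    |radialIterate n Q k r| ≤ (P * B ^ 2) ^ k / k.factorial := by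
  have hP : 0 ≤ P := (abs_nonneg _).trans (hQ r hr)
  calc |radialIterate n Q k r| ≤ P ^ k / k.factorial * |r| ^ (2 * k) :=
        abs_radialIterate_le_pow hQ k hr
    _ ≤ P ^ k / k.factorial * B ^ (2 * k) := by gcongr
    _ = (P * B ^ 2) ^ k / k.factorial := by ring

theorem exists_abs_le_of_continuous (hQ : Continuous Q) (B : ℝ) :
    ∃ P, ∀ t, |t| ≤ B → |Q t| ≤ P := by
  obtain ⟨P, hP⟩ := (isCompact_Icc (a := -B) (b := B)).exists_bound_of_continuousOn
    hQ.continuousOn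
  exact ⟨P, fun t ht ↦ hP t (abs_le.1 ht)⟩

theorem hasSum_radialIterate (n : ℕ) (hQ : Continuous Q) (r : ℝ) :
    HasSum (fun k ↦ radialIterate n Q k r) (radialSolution n Q r) := by
  obtain ⟨P, hP⟩ := exists_abs_le_of_continuous hQ |r|
  exact (Summable.of_norm_bounded (Real.summable_pow_div_factorial (P * |r| ^ 2)) fun k ↦
    abs_radialIterate_le hP k le_rfl).hasSum

theorem continuous_radialSolution_param {X : Type*} [TopologicalSpace X]
    [WeaklyLocallyCompactSpace X] {Q : X → ℝ → ℝ} (n : ℕ)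
    (hQ : Continuous fun p : X × ℝ ↦ Q p.1 p.2) :
    Continuous fun p : X × ℝ ↦ radialSolution n (Q p.1) p.2 := by
  rw [continuous_iff_continuousAt]
  rintro ⟨x, r⟩
  obtain ⟨K, hK, hKx⟩ := exists_compact_mem_nhds x
  obtain ⟨P, hP⟩ := (hK.prod (isCompact_Icc (a := -(|r| + 1)) (b := |r| + 1))
    ).exists_bound_of_continuousOn hQ.continuousOn
  have mem_nhds : K ×ˢ Icc (-(|r| + 1)) (|r| + 1) ∈ 𝓝 (x, r) :=
    prod_mem_nhds hKx (Icc_mem_nhds (by linarith [neg_abs_le r]) (by linarith [le_abs_self r]))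
  refine ContinuousOn.continuousAt ?_ mem_nhds
  refine continuousOn_tsum (fun k ↦ (continuous_radialIterate_param n hQ k).continuousOn)
    (Real.summable_pow_div_factorial (P * (|r| + 1) ^ 2)) fun k p hp ↦ ?_
  exact abs_radialIterate_le (fun t ht ↦ hP (p.1, t) ⟨hp.1, abs_le.1 ht⟩) k (abs_le.2 hp.2)

theorem continuous_radialSolution (n : ℕ) (hQ : Continuous Q) : Continuous (radialSolution n Q) :=
  (continuous_radialSolution_param (X := Unit) (Q := fun _ ↦ Q) n (hQ.comp continuous_snd)).comp
    (by fun_prop : Continuous fun r : ℝ ↦ ((), r))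

theorem radialSolution_eq (n : ℕ) (hQ : Continuous Q) (r : ℝ) :
    radialSolution n Q r = 1 + radialInvLaplacian n (fun t ↦ Q t * radialSolution n Q t) r := by
  obtain ⟨P, hP⟩ := exists_abs_le_of_continuous hQ |r|
  have hP0 : 0 ≤ P := (abs_nonneg _).trans (hP r le_rfl)
  have hasSum_succ : HasSum (fun k ↦ radialIterate n Q (k + 1) r)
      (radialInvLaplacian n (fun t ↦ Q t * radialSolution n Q t) r) :=
    hasSum_radialInvLaplacian (fun k ↦ hQ.mul (continuous_radialIterate n hQ k))
      ((Real.summable_pow_div_factorial (P * |r| ^ 2)).mul_left P)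
      (fun k t ht ↦ by
        rw [abs_mul]
        exact mul_le_mul (hP t ht) (abs_radialIterate_le hP k ht) (abs_nonneg _) hP0)
      fun t _ ↦ (hasSum_radialIterate n hQ t).mul_left (Q t)
  exact (hasSum_radialIterate n hQ r).unique ((hasSum_nat_add_iff' 1).1 (by
    simpa [radialIterate] using hasSum_succ))

/-- `w` solves the radial equation `w'' + (n / r) w' = Q w`, `w 0 = 1`, and `g r = w' r / r`.
Working with `g` instead of `w'` removes the singularity at `r = 0`. -/
structure IsRadialSolution (n : ℕ) (Q w g : ℝ → ℝ) : Prop where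
  apply_zero : w 0 = 1
  continuous_g : Continuous g
  hasDerivAt (r : ℝ) : HasDerivAt w (r * g r) r
  hasDerivAt_pow_mul (r : ℝ) : HasDerivAt (fun r ↦ r ^ (n + 1) * g r) (r ^ n * (Q r * w r)) r

theorem isRadialSolution_radialSolution (n : ℕ) (hQ : Continuous Q) :
    IsRadialSolution n Q (radialSolution n Q)
      (radialMean n fun t ↦ Q t * radialSolution n Q t) := by
  have continuous_rhs := hQ.mul (continuous_radialSolution n hQ)
  refine ⟨?_, continuous_radialMean n continuous_rhs, fun r ↦ ?_,
    hasDerivAt_pow_succ_mul_radialMean n continuous_rhs⟩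
  · rw [radialSolution_eq n hQ, radialInvLaplacian]
    simp
  · have := (hasDerivAt_radialInvLaplacian n continuous_rhs r).const_add 1
    exact this.congr_of_eventuallyEq (Eventually.of_forall (radialSolution_eq n hQ))

end RadialSolution

section Wronskian

variable {n : ℕ} {Q w g : ℝ → ℝ} {R : ℝ}

theorem IsRadialSolution.continuous (h : IsRadialSolution n Q w g) : Continuous w :=
  continuous_iff_continuousAt.2 fun r ↦ (h.hasDerivAt r).continuousAt

theorem IsRadialSolution.comp_const_mul (h : IsRadialSolution n Q w g) {c : ℝ} (hc : c ≠ 0) :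
    IsRadialSolution n (fun r ↦ c ^ 2 * Q (c * r)) (fun r ↦ w (c * r))
      (fun r ↦ c ^ 2 * g (c * r)) where
  apply_zero := by simp [h.apply_zero]
  continuous_g := by
    have := h.continuous_g
    fun_prop
  hasDerivAt r := by
    have := (h.hasDerivAt (c * r)).comp r ((hasDerivAt_id r).const_mul c)
    exact this.congr_deriv (by simp only [mul_one]; ring)
  hasDerivAt_pow_mul r := by
    have := ((h.hasDerivAt_pow_mul (c * r)).comp r ((hasDerivAt_id r).const_mul c)).const_mul
      (c ^ 2 * (c ^ (n + 1))⁻¹)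
    refine (this.congr_of_eventuallyEq (Eventually.of_forall fun r ↦ ?_)).congr_deriv ?_
    · simp only [Function.comp_apply, mul_pow]
      field_simp
    · simp only [mul_one, mul_pow, pow_succ]
      field_simp

theorem IsRadialSolution.wronskian_eq_integral {Q₂ u h : ℝ → ℝ} (hw : IsRadialSolution n Q w g)
    (hu : IsRadialSolution n Q₂ u h) (hQ : Continuous Q) (hQ₂ : Continuous Q₂) (r : ℝ) :
    r ^ (n + 1) * (h r * w r - u r * g r) =
      ∫ t in (0 : ℝ)..r, t ^ n * (Q₂ t - Q t) * (u t * w t) := by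
  have := hw.continuous
  have := hu.continuous
  rw [intervalIntegral.integral_eq_sub_of_hasDerivAt
    (f := fun r ↦ r ^ (n + 1) * (h r * w r - u r * g r)) (fun t _ ↦ ?_)
    (Continuous.intervalIntegrable (by fun_prop) _ _)]
  · simp
  · have := ((hu.hasDerivAt_pow_mul t).mul (hw.hasDerivAt t)).sub
      ((hu.hasDerivAt t).mul (hw.hasDerivAt_pow_mul t))
    refine (this.congr_of_eventuallyEq (Eventually.of_forall fun r ↦ ?_)).congr_deriv ?_
    · simp only [Pi.mul_apply, Pi.sub_apply]
      ring
    · ring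

theorem IsRadialSolution.integral_deriv_sq_add_integral (h : IsRadialSolution n Q w g)
    (hQ : Continuous Q) (r : ℝ) :
    (∫ t in (0 : ℝ)..r, t ^ n * (t * g t) ^ 2) + ∫ t in (0 : ℝ)..r, t ^ n * Q t * w t ^ 2 =
      r ^ (n + 1) * g r * w r := by
  have := h.continuous
  have := h.continuous_g
  rw [← intervalIntegral.integral_add (Continuous.intervalIntegrable (by fun_prop) _ _)
    (Continuous.intervalIntegrable (by fun_prop) _ _),
    intervalIntegral.integral_eq_sub_of_hasDerivAt (f := fun r ↦ r ^ (n + 1) * g r * w r)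
    (fun t _ ↦ ?_) (Continuous.intervalIntegrable (by fun_prop) _ _)]
  · simp
  · exact ((h.hasDerivAt_pow_mul t).mul (h.hasDerivAt t)).congr_deriv (by ring)

theorem radialIterate_nonneg (hQ : ∀ r, 0 ≤ r → 0 ≤ Q r) (k : ℕ) {r : ℝ} (hr : 0 ≤ r) :
    0 ≤ radialIterate n Q k r := by
  induction k generalizing r with
  | zero => exact zero_le_one
  | succ k ih => exact radialInvLaplacian_nonneg hr fun t ht ↦ mul_nonneg (hQ t ht) (ih ht)

theorem one_le_radialSolution (hQc : Continuous Q) (hQ : ∀ r, 0 ≤ r → 0 ≤ Q r) {r : ℝ}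
    (hr : 0 ≤ r) : 1 ≤ radialSolution n Q r :=
  le_hasSum (hasSum_radialIterate n hQc r) 0 fun k _ ↦ radialIterate_nonneg hQ k hr

theorem IsRadialSolution.neg_of_first_zero (h : IsRadialSolution n Q w g) (hQ : Continuous Q)
    (hR : 0 < R) (hw : ∀ r ∈ Ico 0 R, 0 < w r) (hwR : w R = 0) : g R < 0 := by
  -- Sturm comparison with the potential `|Q| + 1`, whose solution `u` is at least `1`.
  let Q₂ : ℝ → ℝ := fun r ↦ |Q r| + 1
  have hQ₂ : Continuous Q₂ := by fun_prop
  set u := radialSolution n Q₂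
  have hu := isRadialSolution_radialSolution n hQ₂
  have one_le_u (r : ℝ) (hr : 0 ≤ r) : 1 ≤ u r :=
    one_le_radialSolution hQ₂ (fun _ _ ↦ by positivity) hr
  have u_cont : Continuous u := hu.continuous
  have w_cont := h.continuous
  have integral_pos : 0 < ∫ t in (0 : ℝ)..R, t ^ n * (Q₂ t - Q t) * (u t * w t) := by
    refine intervalIntegral.intervalIntegral_pos_of_pos_on
      (Continuous.intervalIntegrable (by fun_prop) _ _) (fun t ht ↦ ?_) hR
    have Q_lt : 0 < Q₂ t - Q t := by linarith [le_abs_self (Q t)]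
    have u_pos : 0 < u t := one_pos.trans_le (one_le_u t ht.1.le)
    have w_pos := hw t ⟨ht.1.le, ht.2⟩
    have pow_pos : 0 < t ^ n := pow_pos ht.1 n
    positivity
  rw [← h.wronskian_eq_integral hu hQ hQ₂, hwR, mul_zero, zero_sub, mul_neg,
    Left.neg_pos_iff] at integral_pos
  exact neg_of_mul_neg_right (neg_of_mul_neg_right integral_pos (by positivity))
    (zero_le_one.trans (one_le_u R hR.le))

end Wronskian

section RayleighLowerBound

theorem IsRadialSolution.isBartaField {n : ℕ} {W w g : ℝ → ℝ} {μ R : ℝ}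
    (h : IsRadialSolution n (fun r ↦ W r - μ) w g) (hW : ContinuousOn W (Icc 0 R))
    (hw : ∀ r ∈ Icc 0 R, 0 < w r) :
    IsBartaField n W μ R (fun r ↦ -(r * g r) / w r)
      (fun r ↦ r ^ n * (μ + (-(r * g r) / w r) ^ 2 - W r)) := by
  have := h.continuous_g
  have field_cont : ContinuousOn (fun r ↦ -(r * g r) / w r) (Icc 0 R) :=
    ContinuousOn.div (by fun_prop) h.continuous.continuousOn fun r hr ↦ (hw r hr).ne'
  refine ⟨field_cont, by simp, fun r hr ↦ ?_, ?_, fun _ _ ↦ le_rfl⟩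
  · have w_ne := (hw r ⟨hr.1.le, hr.2.le⟩).ne'
    have := ((h.hasDerivAt_pow_mul r).div (h.hasDerivAt r) w_ne).neg
    refine (this.congr_of_eventuallyEq (Eventually.of_forall fun r ↦ ?_)).congr_deriv ?_
    · simp only [Pi.neg_apply, Pi.div_apply]
      ring
    · field_simp
      ring
  · have rhs_cont : ContinuousOn (fun r ↦ r ^ n * (μ + (-(r * g r) / w r) ^ 2 - W r))
        (Icc 0 R) := by fun_prop
    obtain ⟨C, hC⟩ := isCompact_Icc.exists_bound_of_continuousOn rhs_cont
    exact ⟨C, fun r hr ↦ hC r ⟨hr.1.le, hr.2.le⟩⟩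

theorem IsBartaField.mono {n : ℕ} {W W' Z q' : ℝ → ℝ} {μ R : ℝ} (h : IsBartaField n W μ R Z q')
    (hW : ∀ r ∈ Ioo 0 R, W r ≤ W' r) : IsBartaField n W' μ R Z q' where
  __ := h
  le r hr := (mul_le_mul_of_nonneg_left (by linarith [hW r hr]) (pow_nonneg hr.1.le n)).trans
    (h.le r hr)

variable {E : Type*} [NormedAddCommGroup E] [NormedSpace ℝ E] [FiniteDimensional ℝ E]
  [Nontrivial E] [MeasurableSpace E] [BorelSpace E] {m : Measure E} [m.IsAddHaarMeasure]
  {W w g : ℝ → ℝ} {μ R : ℝ} {φ : E → ℝ}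

theorem IsRadialSolution.mul_integral_sq_le
    (h : IsRadialSolution (finrank ℝ E - 1) (fun r ↦ W r - μ) w g) (hR : 0 < R)
    (hW : IsRadialPotential W) (hw : ∀ r ∈ Ico 0 R, 0 < w r) (hφ : ContDiff ℝ 2 φ)
    (hc : HasCompactSupport φ) (hφR : m (Function.support φ) ≤ m (Metric.ball 0 R)) :
    μ * ∫ x, φ x ^ 2 ∂m ≤ (∫ x, ‖fderiv ℝ φ x‖ ^ 2 ∂m) + ∫ x, W ‖x‖ * φ x ^ 2 ∂m := by
  -- `w` may vanish at `R`; its dilations `w (c ·)`, `c < 1`, do not.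
  have dilated_le (c : ℝ) (hc1 : c ∈ Ioo (0 : ℝ) 1) : c ^ 2 * μ * ∫ x, φ x ^ 2 ∂m ≤
      (∫ x, ‖fderiv ℝ φ x‖ ^ 2 ∂m) + ∫ x, W ‖x‖ * φ x ^ 2 ∂m := by
    have hWc := hW.continuous
    have solution : IsRadialSolution (finrank ℝ E - 1)
        (fun r ↦ c ^ 2 * W (c * r) - c ^ 2 * μ) (fun r ↦ w (c * r))
        (fun r ↦ c ^ 2 * g (c * r)) := by
      simpa only [mul_sub] using h.comp_const_mul hc1.1.ne'
    have field := solution.isBartaField (R := R) (by fun_prop) fun r hr ↦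
      hw _ ⟨mul_nonneg hc1.1.le hr.1, by nlinarith [hc1.1, hc1.2, hr.1, hr.2]⟩
    refine (field.mono fun r hr ↦ ?_).mul_integral_sq_le_of_measure_support_le hR hW hφ hc hφR
    have cr_nonneg : 0 ≤ c * r := mul_nonneg hc1.1.le hr.1.le
    calc c ^ 2 * W (c * r) ≤ W (c * r) :=
          mul_le_of_le_one_left (hW.nonneg cr_nonneg) (pow_le_one₀ hc1.1.le hc1.2.le)
      _ ≤ W r := hW.monotoneOn cr_nonneg hr.1.le (mul_le_of_le_one_left hr.1.le hc1.2.le)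
  have tendsto : Tendsto (fun c : ℝ ↦ c ^ 2 * μ * ∫ x, φ x ^ 2 ∂m) (𝓝[<] 1)
      (𝓝 (μ * ∫ x, φ x ^ 2 ∂m)) := by
    have : Continuous fun c : ℝ ↦ c ^ 2 * μ * ∫ x, φ x ^ 2 ∂m := by fun_prop
    simpa using (this.tendsto 1).mono_left nhdsWithin_le_nhds
  refine le_of_tendsto tendsto ?_
  filter_upwards [Ioo_mem_nhdsLT zero_lt_one] with c hc1
  exact dilated_le c hc1

end RayleighLowerBound

/-! ### Ground energies of balls -/

section RadialTestFunctions

theorem norm_fderiv_comp_norm_sq {E : Type*} [NormedAddCommGroup E] [InnerProductSpace ℝ E]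
    {H : ℝ → ℝ} (hH : Differentiable ℝ H) (x : E) :
    ‖fderiv ℝ (fun x : E ↦ H (‖x‖ ^ 2)) x‖ = |2 * ‖x‖ * deriv H (‖x‖ ^ 2)| := by
  have : HasFDerivAt (fun x : E ↦ H (‖x‖ ^ 2)) (deriv H (‖x‖ ^ 2) • (2 • innerSL ℝ x)) x :=
    (hH (‖x‖ ^ 2)).hasDerivAt.comp_hasFDerivAt x (hasStrictFDerivAt_norm_sq x).hasFDerivAt
  rw [this.fderiv, norm_smul, ← Nat.cast_smul_eq_nsmul ℝ, norm_smul, innerSL_apply_norm]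
  simp [abs_mul, mul_comm]

theorem tsupport_comp_norm_sq_subset {E : Type*} [NormedAddCommGroup E] {H : ℝ → ℝ} {a : ℝ}
    (hHa : ∀ t, a ≤ t → H t = 0) :
    tsupport (fun x : E ↦ H (‖x‖ ^ 2)) ⊆ Metric.closedBall 0 √a := by
  refine closure_minimal (fun x hx ↦ ?_) Metric.isClosed_closedBall
  rw [mem_closedBall_zero_iff]
  by_contra! hlt
  exact hx (hHa _ ((Real.sqrt_lt' ((Real.sqrt_nonneg a).trans_lt hlt)).1 hlt).le)

/-- `μ` bounds from below the Rayleigh quotients of the Schrödinger operator `-Δ + W ‖x‖` on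
smooth functions with compact support in `Ω`. -/
def IsRayleighLowerBound {E : Type*} [NormedAddCommGroup E] [InnerProductSpace ℝ E]
    [FiniteDimensional ℝ E] [MeasurableSpace E] [BorelSpace E] (W : ℝ → ℝ) (Ω : Set E) (μ : ℝ) :
    Prop :=
  ∀ φ : E → ℝ, ContDiff ℝ ∞ φ → HasCompactSupport φ → tsupport φ ⊆ Ω →
    μ * ∫ x, φ x ^ 2 ≤ (∫ x, ‖fderiv ℝ φ x‖ ^ 2) + ∫ x, W ‖x‖ * φ x ^ 2

variable {E : Type*} [NormedAddCommGroup E] [InnerProductSpace ℝ E] [FiniteDimensional ℝ E]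
  [MeasurableSpace E] [BorelSpace E] {W : ℝ → ℝ} {Ω Ω' : Set E} {μ R : ℝ}

theorem IsRayleighLowerBound.mono (h : IsRayleighLowerBound W Ω μ) (hΩ : Ω' ⊆ Ω) :
    IsRayleighLowerBound W Ω' μ :=
  fun φ hφ hc hφΩ ↦ h φ hφ hc (hφΩ.trans hΩ)

theorem IsRayleighLowerBound.mul_integral_radial_sq_le [Nontrivial E]
    (h : IsRayleighLowerBound W (Metric.ball (0 : E) R) μ) (hR : 0 < R) {H : ℝ → ℝ} {a : ℝ}
    (hH : ContDiff ℝ ∞ H) (haR : a < R ^ 2) (hHa : ∀ t, a ≤ t → H t = 0) :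
    μ * ∫ r in (0 : ℝ)..R, r ^ (finrank ℝ E - 1) * H (r ^ 2) ^ 2 ≤
      (∫ r in (0 : ℝ)..R, r ^ (finrank ℝ E - 1) * (2 * r * deriv H (r ^ 2)) ^ 2) +
        ∫ r in (0 : ℝ)..R, r ^ (finrank ℝ E - 1) * W r * H (r ^ 2) ^ 2 := by
  have support_subset := tsupport_comp_norm_sq_subset (E := E) hHa
  have rayleigh := h (fun x ↦ H (‖x‖ ^ 2)) (hH.comp (contDiff_norm_sq ℝ))
    ((isCompact_closedBall (0 : E) √a).of_isClosed_subset (isClosed_tsupport _) support_subset)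
    (support_subset.trans (Metric.closedBall_subset_ball ((Real.sqrt_lt' hR).2 haR)))
  have lt_sq (r : ℝ) (hr : R < r) : a < r ^ 2 := haR.trans (by gcongr)
  simp only [norm_fderiv_comp_norm_sq (hH.differentiable (by simp)), sq_abs] at rayleigh
  rw [integral_fun_norm_eq_intervalIntegral volume (fun r ↦ H (r ^ 2) ^ 2) hR.le
      fun r hr ↦ by simp [hHa _ (lt_sq r hr).le],
    integral_fun_norm_eq_intervalIntegral volume (fun r ↦ W r * H (r ^ 2) ^ 2) hR.le
      fun r hr ↦ by simp [hHa _ (lt_sq r hr).le],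
    integral_fun_norm_eq_intervalIntegral volume (fun r ↦ (2 * r * deriv H (r ^ 2)) ^ 2) hR.le
      fun r hr ↦ by simp [deriv_eq_zero_of_eqOn_Ici hHa (lt_sq r hr)],
    ← mul_add, mul_left_comm] at rayleigh
  simp only [← mul_assoc _ (W _)] at rayleigh
  have finrank_pos : (0 : ℝ) < finrank ℝ E := Nat.cast_pos.2 Module.finrank_pos
  have ball_pos : 0 < volume.real (Metric.ball (0 : E) 1) :=
    ENNReal.toReal_pos (Metric.measure_ball_pos _ _ one_pos).ne' measure_ball_lt_top.ne
  exact le_of_mul_le_mul_left rayleigh (mul_pos finrank_pos ball_pos)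

end RadialTestFunctions

section SmoothApproximation

variable {b : ℝ}

theorem smoothTransition_cutoff_eq_zero (hb : 0 < b) (k : ℕ) {t : ℝ}
    (ht : b - b / (k + 2) ≤ t) : Real.smoothTransition ((k + 2) * (b - t) / b - 1) = 0 := by
  refine Real.smoothTransition.zero_of_nonpos (sub_nonpos.2 ((div_le_one hb).2 ?_))
  rw [sub_le_comm, le_div_iff₀ (by positivity)] at ht
  linarith

theorem eventually_smoothTransition_cutoff_eq_one (hb : 0 < b) {t : ℝ} (ht : t < b) :
    ∀ᶠ k : ℕ in atTop, Real.smoothTransition ((k + 2) * (b - t) / b - 1) = 1 := by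
  filter_upwards [tendsto_natCast_atTop_atTop.eventually_ge_atTop (2 * b / (b - t))] with k hk
  refine Real.smoothTransition.one_of_one_le ?_
  rw [div_le_iff₀ (sub_pos.2 ht)] at hk
  rw [le_sub_iff_add_le, le_div_iff₀ hb]
  linarith

theorem exists_polynomial_seq_tendsto {G : ℝ → ℝ} (hG : ContinuousOn G (Icc 0 b)) :
    ∃ (P : ℕ → Polynomial ℝ) (K : ℝ), (∀ k, ∀ t ∈ Icc 0 b, |(P k).eval t| ≤ K) ∧
      ∀ t ∈ Icc 0 b, Tendsto (fun k ↦ (P k).eval t) atTop (𝓝 (G t)) := by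
  choose P hP using fun k : ℕ ↦
    exists_polynomial_near_of_continuousOn 0 b G hG (1 / ((k : ℝ) + 1)) (by positivity)
  obtain ⟨K, hK⟩ := isCompact_Icc.exists_bound_of_continuousOn hG
  refine ⟨P, 1 + K, fun k t ht ↦ ?_, fun t ht ↦ ?_⟩
  · have one_div_le : 1 / ((k : ℝ) + 1) ≤ 1 := by
      rw [div_le_one (by positivity)]
      linarith [k.cast_nonneg (α := ℝ)]
    calc |(P k).eval t| = |((P k).eval t - G t) + G t| := by rw [sub_add_cancel]
      _ ≤ |(P k).eval t - G t| + |G t| := abs_add_le _ _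
      _ ≤ 1 + K := add_le_add ((hP k t ht).le.trans one_div_le) (hK t ht)
  · rw [tendsto_iff_norm_sub_tendsto_zero]
    exact squeeze_zero (fun _ ↦ norm_nonneg _) (fun k ↦ (hP k t ht).le)
      tendsto_one_div_add_atTop_nhds_zero_nat

theorem exists_contDiff_seq_tendsto_of_continuousOn {G : ℝ → ℝ} (hb : 0 < b)
    (hG : ContinuousOn G (Icc 0 b)) :
    ∃ (p : ℕ → ℝ → ℝ) (K : ℝ), (∀ k, ContDiff ℝ ∞ (p k)) ∧
      (∀ k, ∃ a < b, ∀ t, a ≤ t → p k t = 0) ∧ (∀ k, ∀ t ∈ Icc 0 b, |p k t| ≤ K) ∧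
      ∀ t ∈ Ico 0 b, Tendsto (fun k ↦ p k t) atTop (𝓝 (G t)) := by
  obtain ⟨P, K, hPK, hPG⟩ := exists_polynomial_seq_tendsto hG
  refine ⟨fun k t ↦ Real.smoothTransition ((k + 2) * (b - t) / b - 1) * (P k).eval t, K,
    fun k ↦ ?_, fun k ↦ ⟨b - b / (k + 2), sub_lt_self b (by positivity), fun t ht ↦ ?_⟩,
    fun k t ht ↦ ?_, fun t ht ↦ ?_⟩
  · exact (Real.smoothTransition.contDiff.comp (by fun_prop)).mul
      (by simpa [Polynomial.coe_aeval_eq_eval] using (P k).contDiff_aeval (𝕜 := ℝ) ∞)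
  · simp only [smoothTransition_cutoff_eq_zero hb k ht, zero_mul]
  · rw [abs_mul, abs_of_nonneg (Real.smoothTransition.nonneg _)]
    exact (mul_le_of_le_one_left (abs_nonneg _) (Real.smoothTransition.le_one _)).trans
      (hPK k t ht)
  · refine (hPG t ⟨ht.1, ht.2.le⟩).congr' ?_
    filter_upwards [eventually_smoothTransition_cutoff_eq_one hb ht.2] with k hk
    rw [hk, one_mul]

theorem tendsto_integral_mul_sq_of_bounded {ρ F : ℝ → ℝ} {f : ℕ → ℝ → ℝ} {C : ℝ} (hb : 0 ≤ b)
    (hρ : Continuous ρ) (hf : ∀ k, Continuous (f k)) (hfC : ∀ k, ∀ r ∈ Ioo 0 b, |f k r| ≤ C)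
    (hfF : ∀ r ∈ Ioo 0 b, Tendsto (fun k ↦ f k r) atTop (𝓝 (F r))) :
    Tendsto (fun k ↦ ∫ r in (0 : ℝ)..b, ρ r * f k r ^ 2) atTop
      (𝓝 (∫ r in (0 : ℝ)..b, ρ r * F r ^ 2)) := by
  have bound_integrable : IntegrableOn (fun r ↦ |ρ r| * C ^ 2) (Ioo 0 b) :=
    (by fun_prop : Continuous _).integrableOn_Icc.mono_set Ioo_subset_Icc_self
  simp only [intervalIntegral.integral_of_le hb, integral_Ioc_eq_integral_Ioo]
  refine tendsto_integral_of_dominated_convergence (fun r ↦ |ρ r| * C ^ 2)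
    (fun k ↦ (hρ.mul ((hf k).pow 2)).aestronglyMeasurable)
    bound_integrable (fun k ↦ ?_) ?_
  all_goals refine (ae_restrict_iff' measurableSet_Ioo).2 (ae_of_all _ fun r hr ↦ ?_)
  · rw [norm_mul, norm_pow, Real.norm_eq_abs, Real.norm_eq_abs]
    gcongr
    exact hfC k r hr
  · exact ((hfF r hr).pow 2).const_mul _

end SmoothApproximation

section Primitives

variable {b K t : ℝ}

theorem contDiff_infty_intervalIntegral {p : ℝ → ℝ} (hp : ContDiff ℝ ∞ p) (b : ℝ) :
    ContDiff ℝ ∞ fun t ↦ ∫ τ in b..t, p τ := by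
  have hasDerivAt (t : ℝ) : HasDerivAt (fun t ↦ ∫ τ in b..t, p τ) (p t) t :=
    (hp.continuous.integral_hasStrictDerivAt b t).hasDerivAt
  exact contDiff_infty_iff_deriv.2 ⟨fun t ↦ (hasDerivAt t).differentiableAt,
    by rwa [funext fun t ↦ (hasDerivAt t).deriv]⟩

theorem abs_intervalIntegral_le {p : ℝ → ℝ} (hp : ∀ t ∈ Icc 0 b, |p t| ≤ K) (ht : t ∈ Icc 0 b) :
    |∫ τ in b..t, p τ| ≤ K * b := by
  have hK : 0 ≤ K := (abs_nonneg _).trans (hp t ht)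
  calc |∫ τ in b..t, p τ| ≤ K * |t - b| :=
        intervalIntegral.norm_integral_le_of_norm_le_const (f := p) fun τ hτ ↦ by
          rw [uIoc_of_ge ht.2] at hτ
          exact hp τ ⟨ht.1.trans hτ.1.le, hτ.2⟩
    _ ≤ K * b := by
        rw [abs_sub_comm, abs_of_nonneg (sub_nonneg.2 ht.2)]
        gcongr
        linarith [ht.1]

theorem tendsto_intervalIntegral_of_bounded {p : ℕ → ℝ → ℝ} {G : ℝ → ℝ}
    (hp : ∀ k, Continuous (p k)) (hpK : ∀ k, ∀ t ∈ Icc 0 b, |p k t| ≤ K)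
    (hpG : ∀ t ∈ Ico 0 b, Tendsto (fun k ↦ p k t) atTop (𝓝 (G t))) (ht : t ∈ Icc 0 b) :
    Tendsto (fun k ↦ ∫ τ in b..t, p k τ) atTop (𝓝 (∫ τ in b..t, G τ)) := by
  refine intervalIntegral.tendsto_integral_filter_of_dominated_convergence (fun _ ↦ K)
    (Eventually.of_forall fun k ↦ (hp k).aestronglyMeasurable)
    (Eventually.of_forall fun k ↦ ae_of_all _ fun τ hτ ↦ ?_) intervalIntegrable_const ?_
  · rw [uIoc_of_ge ht.2] at hτ
    exact hpK k τ ⟨ht.1.trans hτ.1.le, hτ.2⟩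
  · filter_upwards [Measure.ae_ne volume b] with τ hτb hτ
    rw [uIoc_of_ge ht.2] at hτ
    exact hpG τ ⟨ht.1.trans hτ.1.le, hτ.2.lt_of_ne hτb⟩

end Primitives

section RayleighRadialSolution

variable {n : ℕ} {Q w g : ℝ → ℝ} {R : ℝ}

theorem IsRadialSolution.integral_comp_sqrt (h : IsRadialSolution n Q w g) (hwR : w R = 0) {r : ℝ}
    (hr : r ∈ Icc 0 R) : ∫ τ in R ^ 2..r ^ 2, g √τ / 2 = w r := by
  have := h.continuous
  have := h.continuous_g
  have integral_eq := intervalIntegral.integral_eq_sub_of_hasDerivAt_of_le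
    (pow_le_pow_left₀ hr.1 hr.2 2) (f := fun τ ↦ w √τ) (f' := fun τ ↦ g √τ / 2) (by fun_prop)
    (fun τ hτ ↦ ?_) (Continuous.intervalIntegrable (by fun_prop) _ _)
  · rw [intervalIntegral.integral_symm, integral_eq, Real.sqrt_sq hr.1,
      Real.sqrt_sq (hr.1.trans hr.2), hwR, zero_sub, neg_neg]
  · have τ_pos : 0 < τ := (sq_nonneg r).trans_lt hτ.1
    refine ((h.hasDerivAt √τ).comp τ (Real.hasDerivAt_sqrt τ_pos.ne')).congr_deriv ?_
    have := Real.sqrt_pos.2 τ_pos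
    field_simp

/-- Radial test functions have the form `H (r ^ 2)` with `H` smooth, so one approximates
`t ↦ w √t`; its derivative `g √t / 2` extends continuously to `t = 0`. -/
theorem IsRadialSolution.exists_contDiff_seq_tendsto (h : IsRadialSolution n Q w g)
    (hR : 0 < R) (hwR : w R = 0) :
    ∃ (H : ℕ → ℝ → ℝ) (C : ℝ), (∀ k, ContDiff ℝ ∞ (H k)) ∧
      (∀ k, ∃ a < R ^ 2, ∀ t, a ≤ t → H k t = 0) ∧
      (∀ k, ∀ r ∈ Ioo 0 R, |H k (r ^ 2)| ≤ C ∧ |2 * r * deriv (H k) (r ^ 2)| ≤ C) ∧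
      ∀ r ∈ Ioo 0 R, Tendsto (fun k ↦ H k (r ^ 2)) atTop (𝓝 (w r)) ∧
        Tendsto (fun k ↦ 2 * r * deriv (H k) (r ^ 2)) atTop (𝓝 (r * g r)) := by
  have := h.continuous_g
  obtain ⟨p, K, p_smooth, p_zero, p_le, p_tendsto⟩ :=
    exists_contDiff_seq_tendsto_of_continuousOn (pow_pos hR 2)
      (by fun_prop : Continuous fun τ ↦ g √τ / 2).continuousOn
  have deriv_primitive (k : ℕ) (t : ℝ) : deriv (fun t ↦ ∫ τ in R ^ 2..t, p k τ) t = p k t :=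
    ((p_smooth k).continuous.integral_hasStrictDerivAt _ t).hasDerivAt.deriv
  have sq_mem (r : ℝ) (hr : r ∈ Ioo 0 R) : r ^ 2 ∈ Ico 0 (R ^ 2) :=
    ⟨sq_nonneg r, pow_lt_pow_left₀ hr.2 hr.1.le two_ne_zero⟩
  refine ⟨fun k t ↦ ∫ τ in R ^ 2..t, p k τ, max (K * R ^ 2) (2 * R * K),
    fun k ↦ contDiff_infty_intervalIntegral (p_smooth k) _, fun k ↦ ?_, fun k r hr ↦ ⟨?_, ?_⟩,
    fun r hr ↦ ⟨?_, ?_⟩⟩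
  · obtain ⟨a, haR, ha⟩ := p_zero k
    exact ⟨a, haR, fun t hat ↦ intervalIntegral.integral_zero_ae
      (ae_of_all _ fun τ hτ ↦ ha τ ((le_min haR.le hat).trans hτ.1.le))⟩
  · exact (abs_intervalIntegral_le (p_le k) (Ico_subset_Icc_self (sq_mem r hr))).trans
      (le_max_left _ _)
  · refine le_max_of_le_right ?_
    rw [deriv_primitive, abs_mul, abs_of_pos (mul_pos two_pos hr.1)]
    exact mul_le_mul (by linarith [hr.2]) (p_le k _ (Ico_subset_Icc_self (sq_mem r hr)))
      (abs_nonneg _) (by positivity)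
  · rw [← h.integral_comp_sqrt hwR (Ioo_subset_Icc_self hr)]
    exact tendsto_intervalIntegral_of_bounded (fun k ↦ (p_smooth k).continuous) p_le p_tendsto
      (Ico_subset_Icc_self (sq_mem r hr))
  · have := (p_tendsto _ (sq_mem r hr)).const_mul (2 * r)
    simp only [deriv_primitive]
    convert this using 2
    rw [Real.sqrt_sq hr.1.le]
    ring

theorem IsRadialSolution.integral_sq_pos (h : IsRadialSolution n Q w g) (hR : 0 < R) :
    0 < ∫ r in (0 : ℝ)..R, r ^ n * w r ^ 2 := by
  have := h.continuous
  have w_pos : ∀ᶠ r in 𝓝[>] 0, 0 < w r :=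
    (h.continuous.continuousAt.eventually_const_lt (h.apply_zero ▸ one_pos)).filter_mono
      nhdsWithin_le_nhds
  obtain ⟨c, hwc, hc⟩ := (w_pos.and (Ioo_mem_nhdsGT hR)).exists
  exact intervalIntegral.integral_pos hR (by fun_prop)
    (fun r hr ↦ mul_nonneg (pow_nonneg hr.1.le _) (sq_nonneg _))
    ⟨c, Ioo_subset_Icc_self hc, mul_pos (pow_pos hc.1 _) (pow_pos hwc 2)⟩

variable {E : Type*} [NormedAddCommGroup E] [InnerProductSpace ℝ E] [FiniteDimensional ℝ E]
  [Nontrivial E] [MeasurableSpace E] [BorelSpace E] {W : ℝ → ℝ} {μ μ' : ℝ}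

theorem IsRayleighLowerBound.integral_mul_sq_nonneg
    (hμ : IsRayleighLowerBound W (Metric.ball (0 : E) R) μ) (hW : Continuous W)
    (hQ : Continuous Q) (hR : 0 < R) (h : IsRadialSolution (finrank ℝ E - 1) Q w g)
    (hwR : w R = 0) :
    0 ≤ ∫ r in (0 : ℝ)..R, r ^ (finrank ℝ E - 1) * (W r - μ - Q r) * w r ^ 2 := by
  obtain ⟨H, C, H_smooth, H_zero, H_le, H_tendsto⟩ := h.exists_contDiff_seq_tendsto hR hwR
  have H_cont (k : ℕ) : Continuous fun r : ℝ ↦ H k (r ^ 2) :=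
    (H_smooth k).continuous.comp (continuous_pow 2)
  have deriv_cont (k : ℕ) : Continuous fun r : ℝ ↦ 2 * r * deriv (H k) (r ^ 2) := by
    have := (H_smooth k).continuous_deriv (by simp)
    fun_prop
  have tendsto_H (ρ : ℝ → ℝ) (hρ : Continuous ρ) :=
    tendsto_integral_mul_sq_of_bounded hR.le hρ H_cont (fun k r hr ↦ (H_le k r hr).1)
      fun r hr ↦ (H_tendsto r hr).1
  have rayleigh := le_of_tendsto_of_tendsto'
    ((tendsto_H (fun r ↦ r ^ (finrank ℝ E - 1)) (by fun_prop)).const_mul μ)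
    ((tendsto_integral_mul_sq_of_bounded (ρ := fun r ↦ r ^ (finrank ℝ E - 1)) hR.le (by fun_prop)
      deriv_cont (fun k r hr ↦ (H_le k r hr).2) fun r hr ↦ (H_tendsto r hr).2).add
      (tendsto_H (fun r ↦ r ^ (finrank ℝ E - 1) * W r) (by fun_prop)))
    fun k ↦ have ⟨_, haR, ha⟩ := H_zero k
      hμ.mul_integral_radial_sq_le hR (H_smooth k) haR ha
  have energy := h.integral_deriv_sq_add_integral hQ R
  have := h.continuous
  have integral_split : ∫ r in (0 : ℝ)..R, r ^ (finrank ℝ E - 1) * (W r - μ - Q r) * w r ^ 2 =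
      (∫ r in (0 : ℝ)..R, r ^ (finrank ℝ E - 1) * W r * w r ^ 2) -
        μ * (∫ r in (0 : ℝ)..R, r ^ (finrank ℝ E - 1) * w r ^ 2) -
        ∫ r in (0 : ℝ)..R, r ^ (finrank ℝ E - 1) * Q r * w r ^ 2 := by
    rw [← intervalIntegral.integral_const_mul, ← intervalIntegral.integral_sub,
      ← intervalIntegral.integral_sub]
    · exact intervalIntegral.integral_congr fun r _ ↦ by ring
    all_goals exact Continuous.intervalIntegrable (by fun_prop) _ _
  rw [hwR, mul_zero] at energy
  linarith

theorem IsRayleighLowerBound.le_of_isRadialSolution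
    (hμ : IsRayleighLowerBound W (Metric.ball (0 : E) R) μ) (hW : Continuous W) (hR : 0 < R)
    (h : IsRadialSolution (finrank ℝ E - 1) (fun r ↦ W r - μ') w g) (hwR : w R = 0) : μ ≤ μ' := by
  have integral_nonneg := hμ.integral_mul_sq_nonneg hW (by fun_prop) hR h hwR
  simp only [sub_sub_sub_cancel_left, mul_right_comm _ (μ' - μ),
    intervalIntegral.integral_mul_const] at integral_nonneg
  exact sub_nonneg.1 (nonneg_of_mul_nonneg_right integral_nonneg (h.integral_sq_pos hR))

end RayleighRadialSolution

section FirstZero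

variable {w : ℝ → ℝ} {r : ℝ}

theorem exists_eq_zero_of_nonpos (hw : Continuous w) (hw0 : 0 < w 0) (hr : 0 ≤ r) (hwr : w r ≤ 0) :
    ∃ R ∈ Ioc 0 r, w R = 0 := by
  obtain ⟨R, hR, hwR⟩ := intermediate_value_Icc' hr hw.continuousOn ⟨hwr, hw0.le⟩
  exact ⟨R, ⟨hR.1.lt_of_ne (by rintro rfl; exact hw0.ne' hwR), hR.2⟩, hwR⟩

theorem exists_first_zero (hw : Continuous w) (hw0 : 0 < w 0) (hr : 0 ≤ r) (hwr : w r ≤ 0) :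
    ∃ R ∈ Ioc 0 r, (∀ t ∈ Ico 0 R, 0 < w t) ∧ w R = 0 := by
  have zeros_compact : IsCompact (Icc 0 r ∩ w ⁻¹' {0}) :=
    isCompact_Icc.inter_right (isClosed_singleton.preimage hw)
  obtain ⟨R₀, hR₀, hwR₀⟩ := exists_eq_zero_of_nonpos hw hw0 hr hwr
  obtain ⟨R, ⟨hR, hwR⟩, hR_least⟩ :=
    zeros_compact.exists_isLeast ⟨R₀, Ioc_subset_Icc_self hR₀, hwR₀⟩
  refine ⟨R, ⟨hR.1.lt_of_ne (by rintro rfl; exact hw0.ne' hwR), hR.2⟩, fun t ht ↦ ?_, hwR⟩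
  by_contra! hwt
  obtain ⟨c, hc, hwc⟩ := exists_eq_zero_of_nonpos hw hw0 ht.1 hwt
  exact (hc.2.trans_lt ht.2).not_ge (hR_least ⟨⟨hc.1.le, hc.2.trans (ht.2.le.trans hR.2)⟩, hwc⟩)

theorem IsRadialSolution.exists_neg {n : ℕ} {Q g : ℝ → ℝ} {R : ℝ} (h : IsRadialSolution n Q w g)
    (hQ : Continuous Q) (hr : r ∈ Ico 0 R) (hwr : w r ≤ 0) : ∃ t ∈ Ioo 0 R, w t < 0 := by
  obtain ⟨R₀, hR₀, hw, hwR₀⟩ :=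
    exists_first_zero h.continuous (h.apply_zero ▸ one_pos) hr.1 hwr
  have deriv_neg : deriv w R₀ < 0 :=
    (h.hasDerivAt R₀).deriv ▸ mul_neg_of_pos_of_neg hR₀.1 (h.neg_of_first_zero hQ hR₀.1 hw hwR₀)
  obtain ⟨t, ht_sign, ht⟩ :=
    (((eventually_nhdsWithin_sign_eq_of_deriv_neg deriv_neg hwR₀).filter_mono
      nhdsWithin_le_nhds).and (Ioo_mem_nhdsGT (hR₀.2.trans_lt hr.2))).exists
  refine ⟨t, ⟨hR₀.1.trans ht.1, ht.2⟩, ?_⟩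
  rwa [sign_neg (sub_neg.2 ht.1), sign_eq_neg_one_iff] at ht_sign

end FirstZero

/-- The ground state energy of the Schrödinger operator `-Δ + W ‖x‖` with Dirichlet conditions on
`Ω`, i.e. the infimum of its Rayleigh quotient, encoded as the greatest lower bound. -/
noncomputable def groundEnergy {E : Type*} [NormedAddCommGroup E] [InnerProductSpace ℝ E]
    [FiniteDimensional ℝ E] [MeasurableSpace E] [BorelSpace E] (W : ℝ → ℝ) (Ω : Set E) : ℝ :=
  sSup {μ | IsRayleighLowerBound W Ω μ}

section GroundEnergy

variable {E : Type*} [NormedAddCommGroup E] [InnerProductSpace ℝ E] [FiniteDimensional ℝ E]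
  [MeasurableSpace E] [BorelSpace E] {W w g : ℝ → ℝ} {Ω : Set E} {μ R : ℝ}

theorem isRayleighLowerBound_zero (hW : IsRadialPotential W) : IsRayleighLowerBound W Ω 0 :=
  fun φ _ _ _ ↦ by
    rw [zero_mul]
    exact add_nonneg (integral_nonneg fun _ ↦ sq_nonneg _)
      (integral_nonneg fun x ↦ mul_nonneg (hW.nonneg (norm_nonneg x)) (sq_nonneg _))

theorem exists_integral_sq_pos (hΩ : IsOpen Ω) (hne : Ω.Nonempty) :
    ∃ φ : E → ℝ, ContDiff ℝ ∞ φ ∧ HasCompactSupport φ ∧ tsupport φ ⊆ Ω ∧ 0 < ∫ x, φ x ^ 2 := by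
  obtain ⟨x, hx⟩ := hne
  obtain ⟨φ, hφΩ, hc, hφ, -, hφx⟩ := exists_contDiff_tsupport_subset (n := ⊤) (hΩ.mem_nhds hx)
  exact ⟨φ, hφ, hc, hφΩ, (hφ.continuous.pow 2).integral_pos_of_hasCompactSupport_nonneg_nonzero
    (hasCompactSupport_sq hc) (fun _ ↦ sq_nonneg _) (x := x) (by simp [hφx])⟩

theorem IsRayleighLowerBound.le_groundEnergy (h : IsRayleighLowerBound W Ω μ) (hΩ : IsOpen Ω)
    (hne : Ω.Nonempty) : μ ≤ groundEnergy W Ω := by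
  obtain ⟨φ, hφ, hc, hφΩ, integral_pos⟩ := exists_integral_sq_pos hΩ hne
  exact le_csSup ⟨_, fun _ h' ↦ (le_div_iff₀ integral_pos).2 (h' φ hφ hc hφΩ)⟩ h

theorem isRayleighLowerBound_groundEnergy (hW : IsRadialPotential W) :
    IsRayleighLowerBound W Ω (groundEnergy W Ω) := by
  intro φ hφ hc hφΩ
  have integral_nonneg : 0 ≤ ∫ x, φ x ^ 2 := integral_nonneg fun _ ↦ sq_nonneg _
  rcases integral_nonneg.eq_or_lt with integral_zero | integral_pos
  · have := isRayleighLowerBound_zero hW φ hφ hc hφΩ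
    rwa [← integral_zero, mul_zero] at this ⊢
  · rw [← le_div_iff₀ integral_pos]
    exact csSup_le ⟨0, isRayleighLowerBound_zero hW⟩ fun μ hμ ↦
      (le_div_iff₀ integral_pos).2 (hμ φ hφ hc hφΩ)

theorem isRadialSolution_groundEnergy (hW : IsRadialPotential W) :
    ∃ g, IsRadialSolution (finrank ℝ E - 1)
      (fun r ↦ W r - groundEnergy W (Metric.ball (0 : E) R))
      (radialSolution (finrank ℝ E - 1)
        fun r ↦ W r - groundEnergy W (Metric.ball (0 : E) R)) g :=
  ⟨_, isRadialSolution_radialSolution _ (by have := hW.continuous; fun_prop)⟩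

section Ball

variable [Nontrivial E]

theorem IsRadialSolution.isRayleighLowerBound
    (h : IsRadialSolution (finrank ℝ E - 1) (fun r ↦ W r - μ) w g) (hR : 0 < R)
    (hW : IsRadialPotential W) (hw : ∀ r ∈ Ico 0 R, 0 < w r) :
    IsRayleighLowerBound W (Metric.ball (0 : E) R) μ :=
  fun _ hφ hc hφR ↦ h.mul_integral_sq_le hR hW hw (hφ.of_le (by norm_cast)) hc
    (measure_mono ((subset_tsupport _).trans hφR))

theorem IsRayleighLowerBound.radialSolution_pos
    (hμ : IsRayleighLowerBound W (Metric.ball (0 : E) R) μ) (hW : Continuous W) :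
    ∀ r ∈ Ico 0 R, 0 < radialSolution (finrank ℝ E - 1) (fun r ↦ W r - μ) r := by
  intro r hr
  by_contra! hwr
  have continuous_param : Continuous fun p : ℝ × ℝ ↦
      radialSolution (finrank ℝ E - 1) (fun r ↦ W r - p.1) p.2 :=
    continuous_radialSolution_param (Q := fun μ r ↦ W r - μ) _ (by fun_prop)
  obtain ⟨t, ht, hwt⟩ := (isRadialSolution_radialSolution (finrank ℝ E - 1)
    (by fun_prop : Continuous fun r ↦ W r - μ)).exists_neg (by fun_prop) hr hwr
  -- Lowering `μ` keeps `w t < 0`: a smaller `μ'` has a radial Dirichlet eigenfunction inside.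
  have neg_near : ∀ᶠ μ' in 𝓝[<] μ,
      radialSolution (finrank ℝ E - 1) (fun r ↦ W r - μ') t < 0 :=
    ((continuous_param.comp (by fun_prop : Continuous fun μ' : ℝ ↦ (μ', t))).continuousAt
      |>.eventually_lt_const hwt).filter_mono nhdsWithin_le_nhds
  obtain ⟨μ', hwt', hμ'⟩ := (neg_near.and self_mem_nhdsWithin).exists
  have sol := isRadialSolution_radialSolution (finrank ℝ E - 1)
    (by fun_prop : Continuous fun r ↦ W r - μ')
  obtain ⟨R', hR', hwR'⟩ := exists_eq_zero_of_nonpos sol.continuous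
    (sol.apply_zero ▸ one_pos) ht.1.le hwt'.le
  have hμ_inner := hμ.mono (Metric.ball_subset_ball (hR'.2.trans ht.2.le))
  exact hμ'.not_ge (hμ_inner.le_of_isRadialSolution hW hR'.1 sol hwR')

theorem exists_radialSolution_groundEnergy_nonpos (hW : IsRadialPotential W) (hR : 0 < R) :
    ∃ r ∈ Icc 0 R, radialSolution (finrank ℝ E - 1)
      (fun r ↦ W r - groundEnergy W (Metric.ball (0 : E) R)) r ≤ 0 := by
  by_contra! hw
  have := hW.continuous
  have continuous_param : Continuous fun p : ℝ × ℝ ↦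
      radialSolution (finrank ℝ E - 1) (fun r ↦ W r - p.1) p.2 :=
    continuous_radialSolution_param (Q := fun μ r ↦ W r - μ) _ (by fun_prop)
  have pos_near : ∀ᶠ μ in 𝓝 (groundEnergy W (Metric.ball (0 : E) R)), ∀ r ∈ Icc 0 R,
      0 < radialSolution (finrank ℝ E - 1) (fun r ↦ W r - μ) r :=
    isCompact_Icc.eventually_forall_of_forall_eventually fun r hr ↦
      (continuous_param.tendsto (_, r)).eventually_const_lt (hw r hr)
  obtain ⟨μ, hwμ, hμ⟩ := ((pos_near.filter_mono nhdsWithin_le_nhds).and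
    (self_mem_nhdsWithin (s := Ioi (groundEnergy W (Metric.ball (0 : E) R))))).exists
  exact hμ.not_ge <| ((isRadialSolution_radialSolution (finrank ℝ E - 1)
    (by fun_prop : Continuous fun r ↦ W r - μ)).isRayleighLowerBound hR hW
      fun r hr ↦ hwμ r (Ico_subset_Icc_self hr)).le_groundEnergy Metric.isOpen_ball
        (Metric.nonempty_ball.2 hR)

theorem radialSolution_groundEnergy_pos (hW : IsRadialPotential W) :
    ∀ r ∈ Ico 0 R, 0 < radialSolution (finrank ℝ E - 1)
      (fun r ↦ W r - groundEnergy W (Metric.ball (0 : E) R)) r :=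
  (isRayleighLowerBound_groundEnergy hW).radialSolution_pos hW.continuous

theorem radialSolution_groundEnergy_eq_zero (hW : IsRadialPotential W) (hR : 0 < R) :
    radialSolution (finrank ℝ E - 1)
      (fun r ↦ W r - groundEnergy W (Metric.ball (0 : E) R)) R = 0 := by
  have := hW.continuous
  have sol := isRadialSolution_radialSolution (finrank ℝ E - 1)
    (by fun_prop : Continuous fun r ↦ W r - groundEnergy W (Metric.ball (0 : E) R))
  obtain ⟨r, hr, hwr⟩ := exists_radialSolution_groundEnergy_nonpos (E := E) hW hR
  obtain ⟨R₀, hR₀, hwR₀⟩ := exists_eq_zero_of_nonpos sol.continuous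
    (sol.apply_zero ▸ one_pos) hr.1 hwr
  rcases (hR₀.2.trans hr.2).eq_or_lt with rfl | hlt
  · exact hwR₀
  · exact absurd hwR₀ (radialSolution_groundEnergy_pos hW R₀ ⟨hR₀.1.le, hlt⟩).ne'

theorem groundEnergy_pos (hW : IsRadialPotential W) (hR : 0 < R) :
    0 < groundEnergy W (Metric.ball (0 : E) R) := by
  by_contra! h
  have := hW.continuous
  have := one_le_radialSolution (n := finrank ℝ E - 1)
    (by fun_prop : Continuous fun r ↦ W r - groundEnergy W (Metric.ball (0 : E) R))
    (fun r hr ↦ sub_nonneg.2 (h.trans (hW.nonneg hr))) hR.le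
  rw [radialSolution_groundEnergy_eq_zero hW hR] at this
  exact one_pos.not_ge this

theorem groundEnergy_mul_integral_sq_le (hW : IsRadialPotential W) (hR : 0 < R) {φ : E → ℝ}
    (hφ : ContDiff ℝ ∞ φ) (hc : HasCompactSupport φ)
    (hφR : volume (Function.support φ) ≤ volume (Metric.ball (0 : E) R)) :
    groundEnergy W (Metric.ball (0 : E) R) * ∫ x, φ x ^ 2 ≤
      (∫ x, ‖fderiv ℝ φ x‖ ^ 2) + ∫ x, W ‖x‖ * φ x ^ 2 := by
  obtain ⟨g, hg⟩ := isRadialSolution_groundEnergy (E := E) (R := R) hW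
  exact hg.mul_integral_sq_le hR hW (radialSolution_groundEnergy_pos hW)
    (hφ.of_le (by norm_cast)) hc hφR

theorem IsRadialSolution.groundEnergy_eq
    (h : IsRadialSolution (finrank ℝ E - 1) (fun r ↦ W r - μ) w g) (hW : IsRadialPotential W)
    (hR : 0 < R) (hw : ∀ r ∈ Ico 0 R, 0 < w r) (hwR : w R = 0) :
    groundEnergy W (Metric.ball (0 : E) R) = μ :=
  ((isRayleighLowerBound_groundEnergy hW).le_of_isRadialSolution hW.continuous hR h hwR).antisymm <|
    (h.isRayleighLowerBound hR hW hw).le_groundEnergy Metric.isOpen_ball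
      (Metric.nonempty_ball.2 hR)

theorem groundEnergy_ball_mul {c : ℝ} (hW : IsRadialPotential W) (hc : 0 < c) (hR : 0 < R) :
    groundEnergy (fun r ↦ c ^ 2 * W (c * r)) (Metric.ball (0 : E) R) =
      c ^ 2 * groundEnergy W (Metric.ball (0 : E) (c * R)) := by
  obtain ⟨g, hg⟩ := isRadialSolution_groundEnergy (E := E) (R := c * R) hW
  have scaled := hg.comp_const_mul hc.ne'
  simp only [mul_sub] at scaled
  exact scaled.groundEnergy_eq ((hW.comp_const_mul hc.le).const_mul (sq_nonneg c)) hR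
    (fun r hr ↦ radialSolution_groundEnergy_pos hW _
      ⟨mul_nonneg hc.le hr.1, mul_lt_mul_of_pos_left hr.2 hc⟩)
    (radialSolution_groundEnergy_eq_zero hW (mul_pos hc hR))

end Ball

end GroundEnergy

/-! ### Comparison of ground states -/

section Comparison

variable {n : ℕ} {Q₀ Q₁ u₀ g₀ u₁ g₁ p ρ : ℝ → ℝ} {R R₀ R₁ A : ℝ}

theorem IsRadialSolution.monotoneOn_div (h₀ : IsRadialSolution n Q₀ u₀ g₀)
    (h₁ : IsRadialSolution n Q₁ u₁ g₁) (hQ₀ : Continuous Q₀) (hQ₁ : Continuous Q₁)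
    (hQ : ∀ r ∈ Ico 0 R, Q₀ r ≤ Q₁ r) (hu₀ : ∀ r ∈ Ico 0 R, 0 < u₀ r)
    (hu₁ : ∀ r ∈ Ico 0 R, 0 < u₁ r) : MonotoneOn (fun r ↦ u₁ r / u₀ r) (Ico 0 R) := by
  have hasDerivAt (r : ℝ) (hr : r ∈ Ioo 0 R) :=
    (h₁.hasDerivAt r).fun_div (h₀.hasDerivAt r) (hu₀ r (Ioo_subset_Ico_self hr)).ne'
  refine monotoneOn_of_deriv_nonneg (convex_Ico 0 R)
    (h₁.continuous.continuousOn.div h₀.continuous.continuousOn fun r hr ↦ (hu₀ r hr).ne') ?_ ?_ <;>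
    rw [interior_Ico]
  · exact fun r hr ↦ (hasDerivAt r hr).differentiableAt.differentiableWithinAt
  intro r hr
  have wronskian_nonneg : 0 ≤ r ^ (n + 1) * (g₁ r * u₀ r - u₁ r * g₀ r) := by
    rw [h₀.wronskian_eq_integral h₁ hQ₀ hQ₁]
    refine intervalIntegral.integral_nonneg hr.1.le fun t ht ↦ ?_
    have ht' : t ∈ Ico 0 R := ⟨ht.1, ht.2.trans_lt hr.2⟩
    exact mul_nonneg (mul_nonneg (pow_nonneg ht.1 _) (sub_nonneg.2 (hQ t ht')))
      (mul_pos (hu₁ t ht') (hu₀ t ht')).le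
  rw [(hasDerivAt r hr).deriv]
  refine div_nonneg ?_ (sq_nonneg _)
  calc 0 ≤ r * (g₁ r * u₀ r - u₁ r * g₀ r) :=
        mul_nonneg hr.1.le (nonneg_of_mul_nonneg_right wronskian_nonneg (pow_pos hr.1 _))
    _ = r * g₁ r * u₀ r - u₁ r * (r * g₀ r) := by ring

theorem integral_mul_sub_mul_sq (hp : Continuous p) (hρ : Continuous ρ) (hu : Continuous u₀)
    (A : ℝ) : ∫ r in (0 : ℝ)..R, p r * (ρ r - A) * u₀ r ^ 2 =
      (∫ r in (0 : ℝ)..R, ρ r * (p r * u₀ r ^ 2)) - A * ∫ r in (0 : ℝ)..R, p r * u₀ r ^ 2 := by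
  rw [← intervalIntegral.integral_const_mul, ← intervalIntegral.integral_sub
    (Continuous.intervalIntegrable (by fun_prop) _ _)
    (Continuous.intervalIntegrable (by fun_prop) _ _)]
  congr 1 with r
  ring

theorem exists_integral_mul_eq_mul_integral {f : ℝ → ℝ} (hρ : Continuous ρ) (hf : Continuous f)
    (hR : 0 < R) (hf_nonneg : ∀ r ∈ Ioo 0 R, 0 ≤ f r) :
    ∃ y ∈ Ioo 0 R, ∫ r in (0 : ℝ)..R, ρ r * f r = ρ y * ∫ r in (0 : ℝ)..R, f r := by
  have integrableOn {h : ℝ → ℝ} (hh : Continuous h) : IntegrableOn h (Ioo 0 R) :=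
    (hh.integrableOn_Icc (a := 0) (b := R)).mono_set Ioo_subset_Icc_self
  simpa only [intervalIntegral.integral_of_le hR.le, integral_Ioc_eq_integral_Ioo] using
    exists_eq_const_mul_setIntegral_of_nonneg (isConnected_Ioo hR) measurableSet_Ioo
      hρ.continuousOn (integrableOn hf) (integrableOn (hρ.mul hf)) hf_nonneg

theorem mul_sq_le_mul_sq_of_monotoneOn_div (hρ : MonotoneOn ρ (Ico 0 R))
    (hu₀ : ∀ r ∈ Ico 0 R, 0 < u₀ r) (hu₁ : ∀ r ∈ Ico 0 R, 0 < u₁ r)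
    (hu : MonotoneOn (fun r ↦ u₁ r / u₀ r) (Ico 0 R)) {y t : ℝ} (hy : y ∈ Ico 0 R)
    (ht : t ∈ Ico 0 R) :
    (u₁ y / u₀ y) ^ 2 * ((ρ t - ρ y) * u₀ t ^ 2) ≤ (ρ t - ρ y) * u₁ t ^ 2 := by
  have hu_sq : MonotoneOn (fun r ↦ (u₁ r / u₀ r) ^ 2) (Ico 0 R) := fun a ha b hb hab ↦
    pow_le_pow_left₀ (div_pos (hu₁ a ha) (hu₀ a ha)).le (hu ha hb hab) 2
  have monovary : 0 ≤ (ρ t - ρ y) * ((u₁ t / u₀ t) ^ 2 - (u₁ y / u₀ y) ^ 2) := by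
    rcases le_total t y with hty | hyt
    · exact mul_nonneg_of_nonpos_of_nonpos (sub_nonpos.2 (hρ ht hy hty))
        (sub_nonpos.2 (hu_sq ht hy hty))
    · exact mul_nonneg (sub_nonneg.2 (hρ hy ht hyt)) (sub_nonneg.2 (hu_sq hy ht hyt))
  have := mul_nonneg monovary (sq_nonneg (u₀ t))
  have hu₁t : u₁ t ^ 2 = (u₁ t / u₀ t) ^ 2 * u₀ t ^ 2 := by
    rw [← mul_pow, div_mul_cancel₀ _ (hu₀ t ht).ne']
  rw [hu₁t]
  linarith

theorem integral_mul_sq_nonneg_of_monotoneOn_div (hp : Continuous p) (hρ : Continuous ρ)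
    (hu₀c : Continuous u₀) (hu₁c : Continuous u₁) (hR₀ : 0 < R₀) (hR : R₀ ≤ R₁)
    (hp_nonneg : ∀ r ∈ Icc 0 R₁, 0 ≤ p r) (hρ_mono : MonotoneOn ρ (Ici 0))
    (hu₀ : ∀ r ∈ Ico 0 R₀, 0 < u₀ r) (hu₁ : ∀ r ∈ Ico 0 R₀, 0 < u₁ r)
    (hu : MonotoneOn (fun r ↦ u₁ r / u₀ r) (Ico 0 R₀))
    (mass_pos : 0 < ∫ r in (0 : ℝ)..R₀, p r * u₀ r ^ 2)
    (hA : ∫ r in (0 : ℝ)..R₀, p r * (ρ r - A) * u₀ r ^ 2 = 0) :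
    0 ≤ ∫ r in (0 : ℝ)..R₁, p r * (ρ r - A) * u₁ r ^ 2 := by
  have integrable {f : ℝ → ℝ} (hf : Continuous f) (a b : ℝ) : IntervalIntegrable f volume a b :=
    hf.intervalIntegrable a b
  have hp_nonneg' (r : ℝ) (hr : r ∈ Ioo 0 R₀) : 0 ≤ p r := hp_nonneg r ⟨hr.1.le, hr.2.le.trans hR⟩
  obtain ⟨y, hy, hρy⟩ := exists_integral_mul_eq_mul_integral hρ
    (by fun_prop : Continuous fun r ↦ p r * u₀ r ^ 2) hR₀
    fun r hr ↦ mul_nonneg (hp_nonneg' r hr) (sq_nonneg _)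
  have hAy : A = ρ y := by
    rw [integral_mul_sub_mul_sq hp hρ hu₀c, hρy, ← sub_mul] at hA
    exact (sub_eq_zero.1 ((mul_eq_zero_iff_right mass_pos.ne').1 hA)).symm
  subst hAy
  have inner_nonneg : 0 ≤ ∫ r in (0 : ℝ)..R₀, p r * (ρ r - ρ y) * u₁ r ^ 2 := by
    calc 0 = (u₁ y / u₀ y) ^ 2 * ∫ r in (0 : ℝ)..R₀, p r * (ρ r - ρ y) * u₀ r ^ 2 := by
          rw [hA, mul_zero]
      _ = ∫ r in (0 : ℝ)..R₀, (u₁ y / u₀ y) ^ 2 * (p r * (ρ r - ρ y) * u₀ r ^ 2) :=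
          (intervalIntegral.integral_const_mul _ _).symm
      _ ≤ ∫ r in (0 : ℝ)..R₀, p r * (ρ r - ρ y) * u₁ r ^ 2 := by
          refine intervalIntegral.integral_mono_on_of_le_Ioo hR₀.le (integrable (by fun_prop) _ _)
            (integrable (by fun_prop) _ _) fun r hr ↦ ?_
          have := mul_le_mul_of_nonneg_left (mul_sq_le_mul_sq_of_monotoneOn_div
            (hρ_mono.mono Ico_subset_Ici_self) hu₀ hu₁ hu (Ioo_subset_Ico_self hy)
            (Ioo_subset_Ico_self hr)) (hp_nonneg' r hr)
          linarith
  have outer_nonneg : 0 ≤ ∫ r in R₀..R₁, p r * (ρ r - ρ y) * u₁ r ^ 2 := by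
    refine intervalIntegral.integral_nonneg hR fun r hr ↦ ?_
    have hr0 : 0 ≤ r := hR₀.le.trans hr.1
    exact mul_nonneg (mul_nonneg (hp_nonneg r ⟨hr0, hr.2⟩)
      (sub_nonneg.2 (hρ_mono hy.1.le hr0 (hy.2.le.trans hr.1)))) (sq_nonneg _)
  rw [← intervalIntegral.integral_add_adjacent_intervals (integrable (by fun_prop) 0 R₀)
    (integrable (by fun_prop) R₀ R₁)]
  exact add_nonneg inner_nonneg outer_nonneg

end Comparison

section HellmannFeynman

variable {E : Type*} [NormedAddCommGroup E] [InnerProductSpace ℝ E] [FiniteDimensional ℝ E]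
  [Nontrivial E] [MeasurableSpace E] [BorelSpace E] {ρ m : ℝ → ℝ} {κ κ₀ κ₁ R R₀ R₁ m' : ℝ}

theorem sub_mul_integral_le_of_le_groundEnergy (hρ : IsRadialPotential ρ) (hR : 0 < R)
    (hκ₀ : 0 ≤ κ₀) (hκ : 0 ≤ κ) {μ : ℝ}
    (hμ : μ ≤ groundEnergy (fun r ↦ κ * ρ r) (Metric.ball (0 : E) R)) {w : ℝ → ℝ}
    (hw : w = radialSolution (finrank ℝ E - 1) fun r ↦
      κ₀ * ρ r - groundEnergy (fun r ↦ κ₀ * ρ r) (Metric.ball (0 : E) R)) :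
    (μ - groundEnergy (fun r ↦ κ₀ * ρ r) (Metric.ball (0 : E) R)) *
        ∫ r in (0 : ℝ)..R, r ^ (finrank ℝ E - 1) * w r ^ 2 ≤
      (κ - κ₀) * ∫ r in (0 : ℝ)..R, ρ r * (r ^ (finrank ℝ E - 1) * w r ^ 2) := by
  have := hρ.continuous
  obtain ⟨g, hg⟩ := isRadialSolution_groundEnergy (E := E) (R := R) (hρ.const_mul hκ₀)
  have hwR := radialSolution_groundEnergy_eq_zero (E := E) (hρ.const_mul hκ₀) hR
  rw [← hw] at hg hwR
  have := hg.continuous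
  have integral_nonneg := (isRayleighLowerBound_groundEnergy
    (hρ.const_mul hκ)).integral_mul_sq_nonneg (by fun_prop) (by fun_prop) hR hg hwR
  set Λ := groundEnergy (fun r ↦ κ₀ * ρ r) (Metric.ball (0 : E) R)
  set Λ' := groundEnergy (fun r ↦ κ * ρ r) (Metric.ball (0 : E) R)
  refine (mul_le_mul_of_nonneg_right (sub_le_sub_right hμ Λ)
    (hg.integral_sq_pos hR).le).trans (sub_nonneg.1 (integral_nonneg.trans_eq ?_))
  rw [← intervalIntegral.integral_const_mul, ← intervalIntegral.integral_const_mul,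
    ← intervalIntegral.integral_sub (Continuous.intervalIntegrable (by fun_prop) _ _)
      (Continuous.intervalIntegrable (by fun_prop) _ _)]
  congr 1 with r
  ring

theorem integral_mul_sq_eq_zero_of_touches_groundEnergy (hρ : IsRadialPotential ρ) (hR : 0 < R)
    (hκ : 0 < κ) (hm' : HasDerivAt m m' κ)
    (hm : ∀ᶠ x in 𝓝 κ, m x ≤ groundEnergy (fun r ↦ x * ρ r) (Metric.ball (0 : E) R))
    (hmκ : m κ = groundEnergy (fun r ↦ κ * ρ r) (Metric.ball (0 : E) R)) {w : ℝ → ℝ}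
    (hw : w = radialSolution (finrank ℝ E - 1) fun r ↦ κ * ρ r - m κ) :
    ∫ r in (0 : ℝ)..R, r ^ (finrank ℝ E - 1) * (ρ r - m') * w r ^ 2 = 0 := by
  have := hρ.continuous
  have : Continuous w := hw ▸ continuous_radialSolution _ (by fun_prop)
  rw [integral_mul_sub_mul_sq (by fun_prop) hρ.continuous this]
  set P := ∫ r in (0 : ℝ)..R, ρ r * (r ^ (finrank ℝ E - 1) * w r ^ 2)
  set N := ∫ r in (0 : ℝ)..R, r ^ (finrank ℝ E - 1) * w r ^ 2
  have isLocalMin : IsLocalMin (fun x ↦ (x - κ) * P - (m x - m κ) * N) κ := by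
    filter_upwards [hm, lt_mem_nhds hκ] with x hmx hx
    have := sub_mul_integral_le_of_le_groundEnergy hρ hR hκ.le hx.le hmx (hmκ ▸ hw)
    simpa [hmκ] using this
  have hasDerivAt : HasDerivAt (fun x ↦ (x - κ) * P - (m x - m κ) * N) (1 * P - m' * N) κ :=
    (((hasDerivAt_id κ).sub_const κ).mul_const P).sub ((hm'.sub_const _).mul_const N)
  rw [← isLocalMin.hasDerivAt_eq_zero hasDerivAt, one_mul]

theorem hasDerivAt_div_rpow (β : ℝ) (hκ : κ ≠ 0) :
    HasDerivAt (fun x ↦ (x / κ) ^ β) (β / κ) κ := by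
  have := ((hasDerivAt_id κ).div_const κ).rpow_const (p := β) (Or.inl (by simp [hκ]))
  exact this.congr_deriv (by simp [hκ, div_eq_inv_mul])

/-- The power `x ↦ (x / κ) ^ β` touches from below, at `κ`, the ground energy of `-Δ + x ρ` on the
ball of radius `R`. -/
structure TouchesGroundEnergy (E : Type*) [NormedAddCommGroup E] [InnerProductSpace ℝ E]
    [FiniteDimensional ℝ E] [MeasurableSpace E] [BorelSpace E] (ρ : ℝ → ℝ) (β κ R : ℝ) : Prop where
  le (x : ℝ) (hx : 0 < x) :
    (x / κ) ^ β ≤ groundEnergy (fun r ↦ x * ρ r) (Metric.ball (0 : E) R)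
  eq_one : groundEnergy (fun r ↦ κ * ρ r) (Metric.ball (0 : E) R) = 1

variable {β : ℝ}

theorem TouchesGroundEnergy.integral_mul_sq_eq_zero (h : TouchesGroundEnergy E ρ β κ R)
    (hρ : IsRadialPotential ρ) (hR : 0 < R) (hκ : 0 < κ) :
    ∫ r in (0 : ℝ)..R, r ^ (finrank ℝ E - 1) * (ρ r - β / κ) *
      radialSolution (finrank ℝ E - 1) (fun r ↦ κ * ρ r - 1) r ^ 2 = 0 := by
  have hκκ : (κ / κ) ^ β = 1 := by rw [div_self hκ.ne', Real.one_rpow]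
  exact integral_mul_sq_eq_zero_of_touches_groundEnergy hρ hR hκ (hasDerivAt_div_rpow β hκ.ne')
    ((lt_mem_nhds hκ).mono h.le) (hκκ.trans h.eq_one.symm) (by rw [hκκ])

theorem TouchesGroundEnergy.radius_lt (h₀ : TouchesGroundEnergy E ρ β κ₀ R₀)
    (h₁ : TouchesGroundEnergy E ρ β κ₁ R₁) (hρ : IsRadialPotential ρ) (hβ : 0 < β)
    (hR₀ : 0 < R₀) (hR₁ : 0 < R₁) (hκ₀ : 0 < κ₀) (hκ : κ₀ < κ₁) : R₁ < R₀ := by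
  by_contra! hR
  have hκ₁ := hκ₀.trans hκ
  have := hρ.continuous
  have u₀_pos := radialSolution_groundEnergy_pos (E := E) (R := R₀) (hρ.const_mul hκ₀.le)
  have u₁_pos := radialSolution_groundEnergy_pos (E := E) (R := R₁) (hρ.const_mul hκ₁.le)
  obtain ⟨g₀, sol₀⟩ := isRadialSolution_groundEnergy (E := E) (R := R₀) (hρ.const_mul hκ₀.le)
  obtain ⟨g₁, sol₁⟩ := isRadialSolution_groundEnergy (E := E) (R := R₁) (hρ.const_mul hκ₁.le)
  rw [h₀.eq_one] at u₀_pos sol₀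
  rw [h₁.eq_one] at u₁_pos sol₁
  have moment₀ := h₀.integral_mul_sq_eq_zero hρ hR₀ hκ₀
  have moment₁ := h₁.integral_mul_sq_eq_zero hρ hR₁ hκ₁
  set u₀ := radialSolution (finrank ℝ E - 1) fun r ↦ κ₀ * ρ r - 1
  set u₁ := radialSolution (finrank ℝ E - 1) fun r ↦ κ₁ * ρ r - 1
  have := sol₁.continuous
  replace u₁_pos (r : ℝ) (hr : r ∈ Ico 0 R₀) : 0 < u₁ r := u₁_pos r ⟨hr.1, hr.2.trans_le hR⟩
  have ratio_mono := sol₀.monotoneOn_div sol₁ (by fun_prop) (by fun_prop)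
    (fun r hr ↦ sub_le_sub_right (mul_le_mul_of_nonneg_right hκ.le (hρ.nonneg hr.1)) 1)
    u₀_pos u₁_pos
  have moment_nonneg := integral_mul_sq_nonneg_of_monotoneOn_div (by fun_prop) hρ.continuous
    sol₀.continuous sol₁.continuous hR₀ hR (fun r hr ↦ pow_nonneg hr.1 _) hρ.monotoneOn u₀_pos
    u₁_pos ratio_mono (sol₀.integral_sq_pos hR₀) moment₀
  rw [integral_mul_sub_mul_sq (by fun_prop) hρ.continuous sol₁.continuous] at moment₁ moment_nonneg
  have := mul_lt_mul_of_pos_right (div_lt_div_of_pos_left hβ hκ₀ hκ) (sol₁.integral_sq_pos hR₁)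
  linarith

end HellmannFeynman

section UniformLowerBound

theorem rayleigh_barta_field_le {a k ε x v N : ℝ} (ha : 0 < a) (hε : 0 < ε) (hε_le : ε ≤ 1 / 9)
    (hεk : 2 * ε ≤ k * a) (hN : 1 ≤ N) (hx : 0 ≤ x) (hv : 0 ≤ v) (hkv : a / 2 ≤ x → k ≤ v) :
    ε / (9 * a) + ε ^ 2 * x / (a + x) ^ 2 - v ≤ ε * (N * (a + x) - 2 * x) / (a + x) ^ 2 := by
  have square_pos : 0 < (a + x) ^ 2 := by positivity
  have cleared : ε * (a + x) ^ 2 + 9 * a * (ε ^ 2 * x) - 9 * (v * a * (a + x) ^ 2) ≤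
      9 * a * (ε * (a - x)) := by
    have hεx : 9 * (ε ^ 2 * x) ≤ ε * x := by nlinarith [mul_nonneg hε.le hx]
    rcases le_total x (a / 2) with hxa | hxa
    · have : 0 ≤ v * a * (a + x) ^ 2 := by positivity
      nlinarith [mul_nonneg hε.le (mul_nonneg hx (sub_nonneg.2 hxa)), mul_pos hε ha]
    · have : 2 * ε * (a + x) ^ 2 ≤ v * a * (a + x) ^ 2 :=
        mul_le_mul_of_nonneg_right (hεk.trans (mul_le_mul_of_nonneg_right (hkv hxa) ha.le))
          square_pos.le
      nlinarith [mul_nonneg hε.le (mul_nonneg ha.le hx), mul_le_mul_of_nonneg_left hεx ha.le,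
        mul_nonneg hε.le (sq_nonneg x), mul_nonneg hε.le (sq_nonneg a)]
  have hNx : ε * (a - x) ≤ ε * (N * (a + x) - 2 * x) :=
    mul_le_mul_of_nonneg_left (by nlinarith) hε.le
  rw [le_div_iff₀ square_pos]
  calc (ε / (9 * a) + ε ^ 2 * x / (a + x) ^ 2 - v) * (a + x) ^ 2
      = (ε * (a + x) ^ 2 + 9 * a * (ε ^ 2 * x) - 9 * (v * a * (a + x) ^ 2)) / (9 * a) := by
        field_simp
    _ ≤ ε * (a - x) := (div_le_iff₀' (by positivity)).2 cleared
    _ ≤ ε * (N * (a + x) - 2 * x) := hNx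

theorem hasDerivAt_pow_mul_barta_field (n : ℕ) (ε : ℝ) {a : ℝ} (ha : 0 < a) (r : ℝ) :
    HasDerivAt (fun r ↦ r ^ n * (ε * r / (a + r ^ 2)))
      (r ^ n * (ε * (((n + 1 : ℕ) : ℝ) * (a + r ^ 2) - 2 * r ^ 2) / (a + r ^ 2) ^ 2)) r := by
  have denominator_ne : a + r ^ 2 ≠ 0 := by positivity
  have := ((hasDerivAt_pow (n + 1) r).const_mul ε).fun_div ((hasDerivAt_pow 2 r).const_add a)
    denominator_ne
  refine (this.congr_of_eventuallyEq (Eventually.of_forall fun r ↦ ?_)).congr_deriv ?_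
  · ring
  · simp only [Nat.add_sub_cancel]
    ring

variable {E : Type*} [NormedAddCommGroup E] [InnerProductSpace ℝ E] [FiniteDimensional ℝ E]
  [Nontrivial E] [MeasurableSpace E] [BorelSpace E] {W : ℝ → ℝ} {r₀ : ℝ}

theorem isBartaField_of_pos (n : ℕ) (hW : IsRadialPotential W) (hr₀ : 0 < r₀) {ε : ℝ} (hε : 0 < ε)
    (hε_le : ε ≤ 1 / 9) (hεW : ε ≤ W r₀ * r₀ ^ 2) (R : ℝ) :
    IsBartaField n W (ε / (9 * (2 * r₀ ^ 2))) R (fun r ↦ ε * r / (2 * r₀ ^ 2 + r ^ 2)) fun r ↦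
      r ^ n * (ε * (((n + 1 : ℕ) : ℝ) * (2 * r₀ ^ 2 + r ^ 2) - 2 * r ^ 2) /
        (2 * r₀ ^ 2 + r ^ 2) ^ 2) where
  continuousOn := Continuous.continuousOn <|
    Continuous.div (by fun_prop) (by fun_prop) fun r ↦ by positivity
  apply_zero := by simp
  hasDerivAt r _ := hasDerivAt_pow_mul_barta_field n ε (by positivity) r
  bounded := by
    have continuous_deriv : Continuous fun r : ℝ ↦ r ^ n *
        (ε * (((n + 1 : ℕ) : ℝ) * (2 * r₀ ^ 2 + r ^ 2) - 2 * r ^ 2) / (2 * r₀ ^ 2 + r ^ 2) ^ 2) :=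
      Continuous.mul (by fun_prop)
        (Continuous.div (by fun_prop) (by fun_prop) fun r ↦ by positivity)
    obtain ⟨C, hC⟩ := isCompact_Icc.exists_bound_of_continuousOn
      (continuous_deriv.continuousOn (s := Icc 0 R))
    exact ⟨C, fun r hr ↦ hC r (Ioo_subset_Icc_self hr)⟩
  le r hr := by
    refine mul_le_mul_of_nonneg_left ?_ (pow_nonneg hr.1.le _)
    rw [div_pow, mul_pow]
    refine rayleigh_barta_field_le (k := W r₀) (by positivity) hε hε_le (by linarith)
      (by simp) (sq_nonneg r) (hW.nonneg hr.1.le) fun h ↦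
        hW.monotoneOn hr₀.le hr.1.le ?_
    rw [mul_div_cancel_left₀ _ two_ne_zero] at h
    exact (pow_le_pow_iff_left₀ hr₀.le hr.1.le two_ne_zero).1 h

theorem exists_pos_le_groundEnergy_ball (hW : IsRadialPotential W) (hr₀ : 0 < r₀)
    (hWr₀ : 0 < W r₀) : ∃ c > 0, ∀ R > 0, c ≤ groundEnergy W (Metric.ball (0 : E) R) := by
  set ε := min (1 / 9) (W r₀ * r₀ ^ 2)
  have hε : 0 < ε := lt_min (by norm_num) (by positivity)
  refine ⟨ε / (9 * (2 * r₀ ^ 2)), by positivity, fun R hR ↦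
    IsRayleighLowerBound.le_groundEnergy (fun φ hφ hc hφR ↦ ?_) Metric.isOpen_ball
      (Metric.nonempty_ball.2 hR)⟩
  exact (isBartaField_of_pos _ hW hr₀ hε (min_le_left _ _) (min_le_right _ _)
    R).mul_integral_sq_le_of_measure_support_le hR hW (hφ.of_le (by norm_cast)) hc
      (measure_mono ((subset_tsupport _).trans hφR))

end UniformLowerBound

section PowerEnergy

variable {E : Type*} [NormedAddCommGroup E] [InnerProductSpace ℝ E] [FiniteDimensional ℝ E]
  [MeasurableSpace E] [BorelSpace E] {W W' : ℝ → ℝ} {s δ μ ν ν' R : ℝ}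

theorem IsRayleighLowerBound.sub_of_le_add (h : IsRayleighLowerBound W' (Metric.ball (0 : E) R) μ)
    (hW : Continuous W) (hW' : Continuous W') (hδ : ∀ r ∈ Ico 0 R, W' r ≤ W r + δ) :
    IsRayleighLowerBound W (Metric.ball (0 : E) R) (μ - δ) := by
  intro φ hφ hc hφR
  have hφ_cont := hφ.continuous
  have integrable {f : E → ℝ} (hf : Continuous f) : Integrable fun x ↦ f x * φ x ^ 2 :=
    (hf.mul (hφ_cont.pow 2)).integrable_of_hasCompactSupport (hasCompactSupport_sq hc).mul_left
  have potential_le :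
      ∫ x, W' ‖x‖ * φ x ^ 2 ≤ (∫ x, W ‖x‖ * φ x ^ 2) + δ * ∫ x, φ x ^ 2 := by
    rw [← integral_const_mul, ← integral_add (integrable (by fun_prop))
      (integrable continuous_const)]
    refine integral_mono (integrable (by fun_prop))
      ((integrable (by fun_prop)).add (integrable continuous_const)) fun x ↦ ?_
    by_cases hx : x ∈ tsupport φ
    · rw [← add_mul]
      exact mul_le_mul_of_nonneg_right
        (hδ _ ⟨norm_nonneg x, mem_ball_zero_iff.1 (hφR hx)⟩) (sq_nonneg _)
    · simp [image_eq_zero_of_notMem_tsupport hx]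
  have := h φ hφ hc hφR
  linarith

theorem groundEnergy_le_add (hR : 0 < R) (hW : Continuous W) (hW' : IsRadialPotential W')
    (hδ : ∀ r ∈ Ico 0 R, W' r ≤ W r + δ) :
    groundEnergy W' (Metric.ball (0 : E) R) ≤ groundEnergy W (Metric.ball (0 : E) R) + δ :=
  sub_le_iff_le_add.1 <| ((isRayleighLowerBound_groundEnergy hW').sub_of_le_add hW
    hW'.continuous hδ).le_groundEnergy Metric.isOpen_ball (Metric.nonempty_ball.2 hR)

theorem groundEnergy_le_of_le (hR : 0 < R) (hW : Continuous W) (hW' : IsRadialPotential W')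
    (h : ∀ r ∈ Ico 0 R, W' r ≤ W r) :
    groundEnergy W' (Metric.ball (0 : E) R) ≤ groundEnergy W (Metric.ball (0 : E) R) := by
  simpa using groundEnergy_le_add (E := E) (δ := 0) hR hW hW' (by simpa using h)

theorem isRadialPotential_rpow (hs : 0 ≤ s) : IsRadialPotential fun r ↦ r ^ (2 * s) where
  continuous := Real.continuous_rpow_const (by positivity)
  monotoneOn _ ha _ _ hab := Real.rpow_le_rpow ha hab (by positivity)
  zero_nonneg := Real.rpow_nonneg le_rfl _

/-- The ground energy of `-Δ + ν ‖x‖ ^ (2 s)` on the ball of radius `R` in `E`, the operator to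
which the Grushin operator reduces on products `φ x₁ * ψ x₂` with `-Δ ψ = ν ψ`. -/
noncomputable def powerEnergy (E : Type*) [NormedAddCommGroup E] [InnerProductSpace ℝ E]
    [FiniteDimensional ℝ E] [MeasurableSpace E] [BorelSpace E] (s R ν : ℝ) : ℝ :=
  groundEnergy (fun r ↦ ν * r ^ (2 * s)) (Metric.ball (0 : E) R)

theorem powerEnergy_monotoneOn (hs : 0 ≤ s) (hR : 0 < R) :
    MonotoneOn (powerEnergy E s R) (Ici 0) := by
  intro ν hν ν' hν' h
  exact groundEnergy_le_of_le hR ((isRadialPotential_rpow hs).const_mul hν').continuous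
    ((isRadialPotential_rpow hs).const_mul hν) fun r hr ↦
      mul_le_mul_of_nonneg_right h (Real.rpow_nonneg hr.1 _)

theorem continuousOn_powerEnergy (hs : 0 ≤ s) : ContinuousOn (powerEnergy E s 1) (Ici 0) := by
  refine (LipschitzOnWith.of_le_add (f := powerEnergy E s 1) fun ν hν ν' hν' ↦ ?_).continuousOn
  refine groundEnergy_le_add (E := E) one_pos ((isRadialPotential_rpow hs).const_mul hν').continuous
    ((isRadialPotential_rpow hs).const_mul hν) fun r hr ↦ ?_
  have : r ^ (2 * s) ≤ 1 := Real.rpow_le_one hr.1 hr.2.le (by positivity)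
  have := Real.rpow_nonneg hr.1 (2 * s)
  have := (le_abs_self _).trans_eq (Real.dist_eq ν ν').symm
  nlinarith [dist_nonneg (x := ν) (y := ν')]

variable [Nontrivial E]

theorem powerEnergy_pos (hs : 0 ≤ s) (hR : 0 < R) (hν : 0 ≤ ν) : 0 < powerEnergy E s R ν :=
  groundEnergy_pos ((isRadialPotential_rpow hs).const_mul hν) hR

theorem powerEnergy_mul_rpow (hs : 0 ≤ s) (hR : 0 < R) (hν : 0 ≤ ν) :
    powerEnergy E s 1 (ν * R ^ (2 + 2 * s)) = R ^ 2 * powerEnergy E s R ν := by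
  have potential := (isRadialPotential_rpow hs).const_mul hν
  have scaled := groundEnergy_ball_mul (E := E) potential hR one_pos
  rw [mul_one] at scaled
  have potential_scaled := (potential.comp_const_mul hR.le).const_mul (sq_nonneg R)
  have potential_target := (isRadialPotential_rpow hs).const_mul
    (mul_nonneg hν (Real.rpow_nonneg hR.le (2 + 2 * s)))
  have potential_eq (r : ℝ) (hr : r ∈ Ico 0 1) :
      ν * R ^ (2 + 2 * s) * r ^ (2 * s) = R ^ 2 * (ν * (R * r) ^ (2 * s)) := by
    rw [Real.mul_rpow hR.le hr.1, Real.rpow_add hR, Real.rpow_two]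
    ring
  refine Eq.trans ?_ scaled
  exact le_antisymm
    (groundEnergy_le_of_le one_pos potential_scaled.continuous potential_target
      fun r hr ↦ (potential_eq r hr).le)
    (groundEnergy_le_of_le one_pos potential_target.continuous potential_scaled
      fun r hr ↦ (potential_eq r hr).ge)

theorem exists_pos_mul_rpow_le_powerEnergy (hs : 0 ≤ s) :
    ∃ c > 0, ∀ ν > 0, c * ν ^ (1 + s)⁻¹ ≤ powerEnergy E s 1 ν := by
  obtain ⟨c, hc, hcR⟩ := exists_pos_le_groundEnergy_ball (E := E)
    ((isRadialPotential_rpow hs).const_mul zero_le_one) one_pos (by simp)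
  refine ⟨c, hc, fun ν hν ↦ ?_⟩
  set R := ν ^ (2 + 2 * s)⁻¹
  have hR : 0 < R := Real.rpow_pos_of_pos hν _
  have R_rpow : R ^ (2 + 2 * s) = ν := Real.rpow_inv_rpow hν.le (by positivity)
  have R_sq : R ^ 2 = ν ^ (1 + s)⁻¹ := by
    rw [← Real.rpow_two, ← Real.rpow_mul hν.le]
    congr 1
    field_simp
  calc c * ν ^ (1 + s)⁻¹ = R ^ 2 * c := by rw [R_sq, mul_comm]
    _ ≤ R ^ 2 * powerEnergy E s R 1 := mul_le_mul_of_nonneg_left (hcR R hR) (sq_nonneg R)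
    _ = powerEnergy E s 1 ν := by rw [← powerEnergy_mul_rpow hs hR zero_le_one, one_mul, R_rpow]

end PowerEnergy

section Minimizer

theorem exists_isMinOn_Ioi_zero {Φ : ℝ → ℝ} (hΦ : ContinuousOn Φ (Ioi 0))
    (hΦ_zero : Tendsto Φ (𝓝[>] 0) atTop) (hΦ_top : Tendsto Φ atTop atTop) :
    ∃ ν > 0, IsMinOn Φ (Ioi 0) ν := by
  have hΦ_exp : Continuous fun t ↦ Φ (Real.exp t) :=
    hΦ.comp_continuous Real.continuous_exp Real.exp_pos
  obtain ⟨t, ht⟩ := hΦ_exp.exists_forall_le <| by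
    rw [cocompact_eq_atBot_atTop, tendsto_sup]
    exact ⟨hΦ_zero.comp Real.tendsto_exp_atBot_nhdsGT, hΦ_top.comp Real.tendsto_exp_atTop⟩
  refine ⟨Real.exp t, Real.exp_pos t, fun ν hν ↦ ?_⟩
  have := ht (Real.log ν)
  rwa [Real.exp_log hν] at this

variable {E : Type*} [NormedAddCommGroup E] [InnerProductSpace ℝ E] [FiniteDimensional ℝ E]
  [Nontrivial E] [MeasurableSpace E] [BorelSpace E] {s β ν ν₀ ν₁ : ℝ}

theorem exists_isMinOn_powerEnergy_div_rpow (hs : 0 ≤ s) (hβ : 0 < β) (hβs : β * (1 + s) < 1) :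
    ∃ ν₀ > 0, IsMinOn (fun ν ↦ powerEnergy E s 1 ν / ν ^ β) (Ioi 0) ν₀ := by
  refine exists_isMinOn_Ioi_zero ?_ ?_ ?_
  · exact ((continuousOn_powerEnergy hs).mono Ioi_subset_Ici_self).div
      (continuousOn_id.rpow_const fun ν hν ↦ Or.inl (ne_of_gt hν))
      fun ν hν ↦ (Real.rpow_pos_of_pos hν β).ne'
  · have blowup := (tendsto_rpow_neg_nhdsGT_zero (neg_lt_zero.2 hβ)).const_mul_atTop
      (powerEnergy_pos (E := E) hs one_pos le_rfl)
    refine tendsto_atTop_mono' _ ?_ blowup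
    filter_upwards [self_mem_nhdsWithin] with ν hν
    rw [Real.rpow_neg (le_of_lt hν), ← div_eq_mul_inv]
    exact div_le_div_of_nonneg_right (powerEnergy_monotoneOn hs one_pos self_mem_Ici
      (mem_Ici.2 (le_of_lt hν)) (le_of_lt hν)) (Real.rpow_nonneg (le_of_lt hν) _)
  · obtain ⟨c, hc, growth⟩ := exists_pos_mul_rpow_le_powerEnergy (E := E) hs
    have exponent_pos : 0 < (1 + s)⁻¹ - β := by
      rwa [sub_pos, ← one_div, lt_div_iff₀ (by positivity)]
    refine tendsto_atTop_mono' _ ?_ ((tendsto_rpow_atTop exponent_pos).const_mul_atTop hc)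
    filter_upwards [eventually_gt_atTop 0] with ν hν
    rw [Real.rpow_sub hν, ← mul_div_assoc]
    exact div_le_div_of_nonneg_right (growth ν hν) (Real.rpow_nonneg hν.le _)

theorem touchesGroundEnergy_of_isMinOn (hs : 0 ≤ s) (hν : 0 < ν)
    (h : IsMinOn (fun ν ↦ powerEnergy E s 1 ν / ν ^ β) (Ioi 0) ν) :
    TouchesGroundEnergy E (fun r ↦ r ^ (2 * s)) β (ν / powerEnergy E s 1 ν ^ (1 + s))
      √(powerEnergy E s 1 ν) := by
  have energy_pos := powerEnergy_pos (E := E) hs one_pos hν.le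
  set e := powerEnergy E s 1 ν
  have hR : 0 < √e := Real.sqrt_pos.2 energy_pos
  have hRs : √e ^ (2 + 2 * s) = e ^ (1 + s) := by
    rw [Real.sqrt_eq_rpow, ← Real.rpow_mul energy_pos.le]
    congr 1
    ring
  have he := Real.rpow_pos_of_pos energy_pos (1 + s)
  have scaled (x : ℝ) (hx : 0 < x) : e * powerEnergy E s √e x =
      powerEnergy E s 1 (x * e ^ (1 + s)) := by
    rw [← hRs, powerEnergy_mul_rpow hs hR hx.le, Real.sq_sqrt energy_pos.le]
  constructor
  · intro x hx
    have minimal := h (mem_Ioi.2 (mul_pos hx he))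
    refine le_of_mul_le_mul_left ?_ energy_pos
    change _ ≤ e * powerEnergy E s √e x
    rw [scaled x hx, div_div_eq_mul_div, Real.div_rpow (mul_pos hx he).le hν.le]
    rw [mem_ofPred_eq, le_div_iff₀ (Real.rpow_pos_of_pos (mul_pos hx he) _)] at minimal
    rwa [← mul_div_assoc, ← div_mul_eq_mul_div]
  · refine mul_left_cancel₀ energy_pos.ne' ?_
    change e * powerEnergy E s √e _ = _
    rw [scaled _ (div_pos hν he), div_mul_cancel₀ _ he.ne', mul_one]

theorem isMinOn_powerEnergy_div_rpow_not_lt (hs : 0 ≤ s) (hβ : 0 < β) (hβs : β * (1 + s) < 1)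
    (hν₀ : 0 < ν₀) (hν : ν₀ < ν₁)
    (h₀ : IsMinOn (fun ν ↦ powerEnergy E s 1 ν / ν ^ β) (Ioi 0) ν₀) :
    ¬ IsMinOn (fun ν ↦ powerEnergy E s 1 ν / ν ^ β) (Ioi 0) ν₁ := by
  intro h₁
  have hν₁ := hν₀.trans hν
  have energy_mono : powerEnergy E s 1 ν₀ ≤ powerEnergy E s 1 ν₁ :=
    powerEnergy_monotoneOn hs one_pos hν₀.le hν₁.le hν.le
  have touches₀ := touchesGroundEnergy_of_isMinOn hs hν₀ h₀
  have touches₁ := touchesGroundEnergy_of_isMinOn hs hν₁ h₁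
  have e₀_pos := powerEnergy_pos (E := E) hs one_pos hν₀.le
  have e₁_pos := powerEnergy_pos (E := E) hs one_pos hν₁.le
  have min_eq : powerEnergy E s 1 ν₀ / ν₀ ^ β = powerEnergy E s 1 ν₁ / ν₁ ^ β :=
    le_antisymm (h₀ (mem_Ioi.2 hν₁)) (h₁ (mem_Ioi.2 hν₀))
  set e₀ := powerEnergy E s 1 ν₀
  set e₁ := powerEnergy E s 1 ν₁
  have energy_ratio : e₁ / e₀ = (ν₁ / ν₀) ^ β := by
    have := Real.rpow_pos_of_pos hν₀ β
    have := Real.rpow_pos_of_pos hν₁ β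
    rw [Real.div_rpow hν₁.le hν₀.le]
    field_simp at min_eq ⊢
    exact min_eq.symm
  have coupling_lt : ν₀ / e₀ ^ (1 + s) < ν₁ / e₁ ^ (1 + s) := by
    have := Real.rpow_pos_of_pos e₀_pos (1 + s)
    have ratio_lt : e₁ ^ (1 + s) / e₀ ^ (1 + s) < ν₁ / ν₀ := by
      rw [← Real.div_rpow e₁_pos.le e₀_pos.le, energy_ratio,
        ← Real.rpow_mul (div_pos hν₁ hν₀).le]
      exact Real.rpow_lt_self_of_one_lt ((one_lt_div hν₀).2 hν) hβs
    rw [div_lt_div_iff₀ this (Real.rpow_pos_of_pos e₁_pos _)]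
    rw [div_lt_div_iff₀ this hν₀] at ratio_lt
    linarith
  exact (touches₀.radius_lt touches₁ (isRadialPotential_rpow hs) hβ (Real.sqrt_pos.2 e₀_pos)
    (Real.sqrt_pos.2 e₁_pos) (div_pos hν₀ (Real.rpow_pos_of_pos e₀_pos _)) coupling_lt).not_ge
      (Real.sqrt_le_sqrt energy_mono)

theorem exists_strict_min_powerEnergy_div_rpow (hs : 0 ≤ s) (hβ : 0 < β) (hβs : β * (1 + s) < 1) :
    ∃ ν₀ > 0, ∀ ν > 0, ν ≠ ν₀ →
      powerEnergy E s 1 ν₀ / ν₀ ^ β < powerEnergy E s 1 ν / ν ^ β := by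
  obtain ⟨ν₀, hν₀, h₀⟩ := exists_isMinOn_powerEnergy_div_rpow (E := E) hs hβ hβs
  refine ⟨ν₀, hν₀, fun ν hν hne ↦ (h₀ (mem_Ioi.2 hν)).lt_of_ne fun heq ↦ ?_⟩
  have h : IsMinOn (fun ν ↦ powerEnergy E s 1 ν / ν ^ β) (Ioi 0) ν := fun x hx ↦
    heq.symm.trans_le (h₀ hx)
  rcases hne.lt_or_gt with hlt | hgt
  · exact isMinOn_powerEnergy_div_rpow_not_lt hs hβ hβs hν hlt h h₀
  · exact isMinOn_powerEnergy_div_rpow_not_lt hs hβ hβs hν₀ hgt h₀ h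

end Minimizer

/-! ### Separation of variables -/

section EnergyAlong

variable {E F : Type*} [NormedAddCommGroup E] [NormedSpace ℝ E] [NormedAddCommGroup F]
  [NormedSpace ℝ F]

/-- The energy density `‖Du(x) ∘ L‖²` of `u` in the directions spanned by `L`. For the inclusions
`inl` and `inr` of the factors of a product these are the squared norms of the partial gradients. -/
noncomputable def energyAlong (L : F →L[ℝ] E) (u : E → ℝ) (x : E) : ℝ :=
  ‖(fderiv ℝ u x).comp L‖ ^ 2

theorem energyAlong_eq_zero (L : F →L[ℝ] E) {u : E → ℝ} {x : E} (hx : x ∉ tsupport u) :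
    energyAlong L u x = 0 := by
  have : fderiv ℝ u x = 0 := Function.notMem_support.1 fun h ↦ hx (support_fderiv_subset ℝ h)
  simp [energyAlong, this]

theorem continuous_energyAlong (L : F →L[ℝ] E) {u : E → ℝ} (hu : ContDiff ℝ 1 u) :
    Continuous (energyAlong L u) :=
  ((hu.continuous_fderiv one_ne_zero).clm_comp continuous_const).norm.pow 2

theorem energyAlong_inl {u : E × F → ℝ} {x : E × F} (hu : DifferentiableAt ℝ u x) :
    energyAlong (.inl ℝ E F) u x = ‖fderiv ℝ (fun y ↦ u (y, x.2)) x.1‖ ^ 2 := by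
  have := HasFDerivAt.comp (f := fun y ↦ (y, x.2)) x.1 hu.hasFDerivAt
    (hasFDerivAt_prodMk_left x.1 x.2)
  exact congrArg (‖·‖ ^ 2) this.fderiv.symm

theorem energyAlong_inr {u : E × F → ℝ} {x : E × F} (hu : DifferentiableAt ℝ u x) :
    energyAlong (.inr ℝ E F) u x = ‖fderiv ℝ (fun y ↦ u (x.1, y)) x.2‖ ^ 2 := by
  have := HasFDerivAt.comp (f := fun y ↦ (x.1, y)) x.2 hu.hasFDerivAt
    (hasFDerivAt_prodMk_right x.1 x.2)
  exact congrArg (‖·‖ ^ 2) this.fderiv.symm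

theorem energyAlong_inl_mul {φ : E → ℝ} {ψ : F → ℝ} (hφ : Differentiable ℝ φ)
    (hψ : Differentiable ℝ ψ) (x : E × F) :
    energyAlong (.inl ℝ E F) (fun x ↦ φ x.1 * ψ x.2) x =
      ‖fderiv ℝ φ x.1‖ ^ 2 * ψ x.2 ^ 2 := by
  rw [energyAlong_inl (by fun_prop)]
  simp only
  rw [fderiv_mul_const (hφ x.1), norm_smul, mul_pow,
    Real.norm_eq_abs, sq_abs, mul_comm]

theorem energyAlong_inr_mul {φ : E → ℝ} {ψ : F → ℝ} (hφ : Differentiable ℝ φ)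
    (hψ : Differentiable ℝ ψ) (x : E × F) :
    energyAlong (.inr ℝ E F) (fun x ↦ φ x.1 * ψ x.2) x =
      φ x.1 ^ 2 * ‖fderiv ℝ ψ x.2‖ ^ 2 := by
  rw [energyAlong_inr (by fun_prop)]
  simp only
  rw [fderiv_const_mul (hψ x.2), norm_smul, mul_pow,
    Real.norm_eq_abs, sq_abs]

end EnergyAlong

section Slices

variable {X Y : Type*} [TopologicalSpace X] [TopologicalSpace Y] {u : X × Y → ℝ}

theorem hasCompactSupport_prodMk_left [R1Space X] (hc : HasCompactSupport u) (y : Y) :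
    HasCompactSupport fun x ↦ u (x, y) :=
  .intro (hc.isCompact.image continuous_fst) fun x hx ↦
    image_eq_zero_of_notMem_tsupport fun h ↦ hx ⟨(x, y), h, rfl⟩

theorem hasCompactSupport_prodMk_right [R1Space Y] (hc : HasCompactSupport u) (x : X) :
    HasCompactSupport fun y ↦ u (x, y) :=
  .intro (hc.isCompact.image continuous_snd) fun y hy ↦
    image_eq_zero_of_notMem_tsupport fun h ↦ hy ⟨(x, y), h, rfl⟩

end Slices

theorem integrable_of_eq_zero_off_tsupport {X : Type*} [TopologicalSpace X] [R1Space X]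
    [MeasurableSpace X] [OpensMeasurableSpace X] {μ : Measure X} [IsFiniteMeasureOnCompacts μ]
    {f u : X → ℝ} (hu : HasCompactSupport u) (hf : Continuous f) (h : ∀ x ∉ tsupport u, f x = 0) :
    Integrable f μ :=
  hf.integrable_of_hasCompactSupport (.intro hu h)

section GrushinEnergy

variable {E₁ E₂ : Type*} [NormedAddCommGroup E₁] [InnerProductSpace ℝ E₁] [FiniteDimensional ℝ E₁]
  [MeasurableSpace E₁] [BorelSpace E₁] [NormedAddCommGroup E₂] [InnerProductSpace ℝ E₂]
  [FiniteDimensional ℝ E₂] [MeasurableSpace E₂] [BorelSpace E₂]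
  {W : ℝ → ℝ} {u : E₁ × E₂ → ℝ} {Ω₁ : Set E₁} {Ω₂ : Set E₂} {r₁ r₂ c : ℝ}

/-- The quadratic form `∫ |∇₁u|² + W(|x₁|) |∇₂u|²`; `W r = r ^ (2 s)` gives the Grushin operator. -/
noncomputable def grushinEnergy (W : ℝ → ℝ) (u : E₁ × E₂ → ℝ) : ℝ :=
  (∫ x, energyAlong (.inl ℝ E₁ E₂) u x) + ∫ x, W ‖x.1‖ * energyAlong (.inr ℝ E₁ E₂) u x

theorem integrable_potential_mul_sq (hW : Continuous W) (hu : Continuous u)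
    (hc : HasCompactSupport u) : Integrable fun x ↦ W ‖x.1‖ * u x ^ 2 :=
  integrable_of_eq_zero_off_tsupport hc (by fun_prop) fun x hx ↦ by
    simp [image_eq_zero_of_notMem_tsupport hx]

theorem integrable_energyAlong {F : Type*} [NormedAddCommGroup F] [NormedSpace ℝ F]
    (L : F →L[ℝ] E₁ × E₂) (hu : ContDiff ℝ 1 u) (hc : HasCompactSupport u) :
    Integrable (energyAlong L u) :=
  integrable_of_eq_zero_off_tsupport hc (continuous_energyAlong L hu)
    fun _ ↦ energyAlong_eq_zero L

theorem integrable_potential_mul_energyAlong {F : Type*} [NormedAddCommGroup F] [NormedSpace ℝ F]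
    (L : F →L[ℝ] E₁ × E₂) (hW : Continuous W) (hu : ContDiff ℝ 1 u) (hc : HasCompactSupport u) :
    Integrable fun x ↦ W ‖x.1‖ * energyAlong L u x :=
  have := continuous_energyAlong L hu
  integrable_of_eq_zero_off_tsupport hc (by fun_prop) fun x hx ↦ by
    rw [energyAlong_eq_zero L hx, mul_zero]

theorem groundEnergy_mul_integral_sq_le_energyAlong_inl [Nontrivial E₁] (hW : IsRadialPotential W)
    (hr₁ : 0 < r₁) (hΩ₁ : volume Ω₁ ≤ volume (Metric.ball (0 : E₁) r₁)) (hu : ContDiff ℝ ∞ u)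
    (hc : HasCompactSupport u) (huΩ : tsupport u ⊆ Ω₁ ×ˢ Ω₂) :
    groundEnergy W (Metric.ball (0 : E₁) r₁) * ∫ x, u x ^ 2 ≤
      (∫ x, energyAlong (.inl ℝ E₁ E₂) u x) + ∫ x, W ‖x.1‖ * u x ^ 2 := by
  have integrable_sq : Integrable fun x ↦ u x ^ 2 :=
    (hu.continuous.pow 2).integrable_of_hasCompactSupport (hasCompactSupport_sq hc)
  have integrable_energy := integrable_energyAlong (.inl ℝ E₁ E₂) (hu.of_le (by norm_cast)) hc
  have integrable_potential := integrable_potential_mul_sq hW.continuous hu.continuous hc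
  rw [Measure.volume_eq_prod] at integrable_sq integrable_energy integrable_potential ⊢
  rw [integral_prod_symm _ integrable_sq, integral_prod_symm _ integrable_energy,
    integral_prod_symm _ integrable_potential, ← integral_const_mul,
    ← integral_add integrable_energy.integral_prod_right integrable_potential.integral_prod_right]
  refine integral_mono (integrable_sq.integral_prod_right.const_mul _)
    (integrable_energy.integral_prod_right.add integrable_potential.integral_prod_right) fun y ↦ ?_
  have support_subset : Function.support (fun x ↦ u (x, y)) ⊆ Ω₁ := fun x hx ↦
    (huΩ (subset_tsupport u hx : (x, y) ∈ tsupport u)).1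
  simp only [energyAlong_inl (hu.differentiable (by simp) _)]
  exact groundEnergy_mul_integral_sq_le hW hr₁ (hu.comp (by fun_prop))
    (hasCompactSupport_prodMk_left hc y) ((measure_mono support_subset).trans hΩ₁)

/-- The first Dirichlet eigenvalue of `-Δ` on the ball of radius `R` in `E`. -/
noncomputable def dirichletEigenvalue (E : Type*) [NormedAddCommGroup E] [InnerProductSpace ℝ E]
    [FiniteDimensional ℝ E] [MeasurableSpace E] [BorelSpace E] (R : ℝ) : ℝ :=
  groundEnergy 0 (Metric.ball (0 : E) R)

theorem isRadialPotential_zero : IsRadialPotential 0 where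
  continuous := continuous_zero
  monotoneOn := monotoneOn_const
  zero_nonneg := le_rfl

theorem dirichletEigenvalue_mul_integral_le_energyAlong_inr [Nontrivial E₂]
    (hW : IsRadialPotential W) (hr₂ : 0 < r₂)
    (hΩ₂ : volume Ω₂ ≤ volume (Metric.ball (0 : E₂) r₂)) (hu : ContDiff ℝ ∞ u)
    (hc : HasCompactSupport u) (huΩ : tsupport u ⊆ Ω₁ ×ˢ Ω₂) :
    dirichletEigenvalue E₂ r₂ * ∫ x, W ‖x.1‖ * u x ^ 2 ≤
      ∫ x, W ‖x.1‖ * energyAlong (.inr ℝ E₁ E₂) u x := by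
  have integrable_energy := integrable_potential_mul_energyAlong (.inr ℝ E₁ E₂) hW.continuous
    (hu.of_le (by norm_cast)) hc
  have integrable_potential := integrable_potential_mul_sq hW.continuous hu.continuous hc
  rw [Measure.volume_eq_prod] at integrable_energy integrable_potential ⊢
  rw [integral_prod _ integrable_energy, integral_prod _ integrable_potential,
    ← integral_const_mul]
  refine integral_mono (integrable_potential.integral_prod_left.const_mul _)
    integrable_energy.integral_prod_left fun x ↦ ?_
  have support_subset : Function.support (fun y ↦ u (x, y)) ⊆ Ω₂ := fun y hy ↦
    (huΩ (subset_tsupport u hy : (x, y) ∈ tsupport u)).2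
  simp only [integral_const_mul, energyAlong_inr (hu.differentiable (by simp) _)]
  have faber_krahn := groundEnergy_mul_integral_sq_le isRadialPotential_zero hr₂
    (φ := fun y ↦ u (x, y)) (hu.comp (by fun_prop)) (hasCompactSupport_prodMk_right hc x)
    ((measure_mono support_subset).trans hΩ₂)
  simp only [Pi.zero_apply, zero_mul, integral_zero, add_zero] at faber_krahn
  rw [mul_left_comm]
  exact mul_le_mul_of_nonneg_left faber_krahn (hW.nonneg (norm_nonneg x))

/-- The lower bounds of the Rayleigh quotient whose infimum is the first Grushin eigenvalue. -/
def IsGrushinLowerBound (W : ℝ → ℝ) (Ω : Set (E₁ × E₂)) (c : ℝ) : Prop :=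
  ∀ u : E₁ × E₂ → ℝ, ContDiff ℝ ∞ u → HasCompactSupport u → tsupport u ⊆ Ω →
    c * ∫ x, u x ^ 2 ≤ grushinEnergy W u

theorem dirichletEigenvalue_pos [Nontrivial E₂] (hr₂ : 0 < r₂) : 0 < dirichletEigenvalue E₂ r₂ :=
  groundEnergy_pos isRadialPotential_zero hr₂

theorem isGrushinLowerBound_prod [Nontrivial E₁] [Nontrivial E₂] (hW : IsRadialPotential W)
    (hr₁ : 0 < r₁) (hr₂ : 0 < r₂) (hΩ₁ : volume Ω₁ ≤ volume (Metric.ball (0 : E₁) r₁))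
    (hΩ₂ : volume Ω₂ ≤ volume (Metric.ball (0 : E₂) r₂)) :
    IsGrushinLowerBound W (Ω₁ ×ˢ Ω₂)
      (groundEnergy (fun r ↦ dirichletEigenvalue E₂ r₂ * W r) (Metric.ball (0 : E₁) r₁)) := by
  intro u hu hc huΩ
  have inl_bound := groundEnergy_mul_integral_sq_le_energyAlong_inl
    (hW.const_mul (dirichletEigenvalue_pos (E₂ := E₂) hr₂).le) hr₁ hΩ₁ hu hc huΩ
  have inr_bound := dirichletEigenvalue_mul_integral_le_energyAlong_inr hW hr₂ hΩ₂ hu hc huΩ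
  simp only [mul_assoc, integral_const_mul] at inl_bound
  exact inl_bound.trans (add_le_add_right inr_bound _)

theorem grushinEnergy_mul {φ : E₁ → ℝ} {ψ : E₂ → ℝ} (hφ : Differentiable ℝ φ)
    (hψ : Differentiable ℝ ψ) :
    grushinEnergy W (fun x : E₁ × E₂ ↦ φ x.1 * ψ x.2) =
      (∫ x, ‖fderiv ℝ φ x‖ ^ 2) * (∫ y, ψ y ^ 2) +
        (∫ x, W ‖x‖ * φ x ^ 2) * ∫ y, ‖fderiv ℝ ψ y‖ ^ 2 := by
  simp only [grushinEnergy, energyAlong_inl_mul hφ hψ, energyAlong_inr_mul hφ hψ,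
    ← mul_assoc, ← integral_prod_mul, Measure.volume_eq_prod]

theorem IsGrushinLowerBound.mul_integral_sq_mul_le (h : IsGrushinLowerBound W (Ω₁ ×ˢ Ω₂) c)
    {φ : E₁ → ℝ} (hφ : ContDiff ℝ ∞ φ) (hφc : HasCompactSupport φ) (hφΩ : tsupport φ ⊆ Ω₁)
    {ψ : E₂ → ℝ} (hψ : ContDiff ℝ ∞ ψ) (hψc : HasCompactSupport ψ) (hψΩ : tsupport ψ ⊆ Ω₂) :
    c * ((∫ x, φ x ^ 2) * ∫ y, ψ y ^ 2) ≤
      (∫ x, ‖fderiv ℝ φ x‖ ^ 2) * (∫ y, ψ y ^ 2) +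
        (∫ x, W ‖x‖ * φ x ^ 2) * ∫ y, ‖fderiv ℝ ψ y‖ ^ 2 := by
  have tsupport_subset : tsupport (fun x : E₁ × E₂ ↦ φ x.1 * ψ x.2) ⊆ tsupport φ ×ˢ tsupport ψ :=
    closure_minimal (fun x hx ↦ ⟨subset_tsupport φ (left_ne_zero_of_mul hx),
      subset_tsupport ψ (right_ne_zero_of_mul hx)⟩)
      ((isClosed_tsupport φ).prod (isClosed_tsupport ψ))
  have bound := h (fun x ↦ φ x.1 * ψ x.2) ((hφ.comp contDiff_fst).mul (hψ.comp contDiff_snd))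
    ((hφc.isCompact.prod hψc.isCompact).of_isClosed_subset (isClosed_tsupport _) tsupport_subset)
    (tsupport_subset.trans (prod_mono hφΩ hψΩ))
  rw [grushinEnergy_mul (hφ.differentiable (by simp)) (hψ.differentiable (by simp))] at bound
  simpa only [mul_pow, ← integral_prod_mul, Measure.volume_eq_prod] using bound

theorem IsGrushinLowerBound.le_groundEnergy (h : IsGrushinLowerBound W (Ω₁ ×ˢ Ω₂) c)
    (hW : IsRadialPotential W) (hΩ₁ : IsOpen Ω₁) (hne₁ : Ω₁.Nonempty) (hΩ₂ : IsOpen Ω₂)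
    (hne₂ : Ω₂.Nonempty) : c ≤ groundEnergy (fun r ↦ groundEnergy 0 Ω₂ * W r) Ω₁ := by
  refine IsRayleighLowerBound.le_groundEnergy (fun φ hφ hφc hφΩ ↦ ?_) hΩ₁ hne₁
  have separated {ψ : E₂ → ℝ} := h.mul_integral_sq_mul_le (ψ := ψ) hφ hφc hφΩ
  simp only [mul_assoc, integral_const_mul]
  have potential_nonneg : 0 ≤ ∫ x, W ‖x‖ * φ x ^ 2 := integral_nonneg fun x ↦
    mul_nonneg (hW.nonneg (norm_nonneg x)) (sq_nonneg _)
  set A := ∫ x, ‖fderiv ℝ φ x‖ ^ 2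
  set N := ∫ x, φ x ^ 2
  set B := ∫ x, W ‖x‖ * φ x ^ 2
  rcases potential_nonneg.eq_or_lt with hB | hB
  · obtain ⟨ψ, hψ, hψc, hψΩ, hψ_pos⟩ := exists_integral_sq_pos hΩ₂ hne₂
    have := separated hψ hψc hψΩ
    rw [← hB, zero_mul, add_zero, ← mul_assoc] at this
    rw [← hB, mul_zero, add_zero]
    exact le_of_mul_le_mul_right this hψ_pos
  · have quotient_le : (c * N - A) / B ≤ groundEnergy 0 Ω₂ := by
      refine IsRayleighLowerBound.le_groundEnergy (fun ψ hψ hψc hψΩ ↦ ?_) hΩ₂ hne₂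
      have := separated hψ hψc hψΩ
      simp only [Pi.zero_apply, zero_mul, integral_zero, add_zero]
      rw [div_mul_eq_mul_div, div_le_iff₀ hB]
      linarith
    rw [div_le_iff₀ hB] at quotient_le
    linarith

end GrushinEnergy

section GrushinLambda

theorem norm_gradient {E : Type*} [NormedAddCommGroup E] [InnerProductSpace ℝ E] [CompleteSpace E]
    (φ : E → ℝ) (x : E) : ‖gradient φ x‖ = ‖fderiv ℝ φ x‖ :=
  (InnerProductSpace.toDual ℝ E).symm.norm_map _

variable {d₁ d₂ : ℕ} {s c : ℝ}
  {u : EuclideanSpace ℝ (Fin d₁) × EuclideanSpace ℝ (Fin d₂) → ℝ}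
  {Ω : Set (EuclideanSpace ℝ (Fin d₁) × EuclideanSpace ℝ (Fin d₂))}

theorem setIntegral_gradient_sq_eq_grushinEnergy (hs : 0 ≤ s) (hu : ContDiff ℝ ∞ u)
    (hc : HasCompactSupport u) (huΩ : tsupport u ⊆ Ω) :
    ∫ x in Ω, (‖gradient (fun y ↦ u (y, x.2)) x.1‖ ^ 2 +
        ‖x.1‖ ^ (2 * s) * ‖gradient (fun y ↦ u (x.1, y)) x.2‖ ^ 2) =
      grushinEnergy (fun r ↦ r ^ (2 * s)) u := by
  have hu₁ : ContDiff ℝ 1 u := hu.of_le (by norm_cast)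
  rw [grushinEnergy, ← integral_add (integrable_energyAlong _ hu₁ hc)
    (integrable_potential_mul_energyAlong _ (isRadialPotential_rpow hs).continuous hu₁ hc)]
  simp only [norm_gradient, ← energyAlong_inl (hu.differentiable (by simp) _),
    ← energyAlong_inr (hu.differentiable (by simp) _)]
  refine setIntegral_eq_integral_of_forall_compl_eq_zero fun x hx ↦ ?_
  simp only [energyAlong_eq_zero _ (notMem_subset huΩ hx), mul_zero, add_zero]

theorem setIntegral_sq_eq_integral_sq (huΩ : tsupport u ⊆ Ω) :
    ∫ x in Ω, u x ^ 2 = ∫ x, u x ^ 2 :=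
  setIntegral_eq_integral_of_forall_compl_eq_zero fun x hx ↦ by
    rw [image_eq_zero_of_notMem_tsupport (notMem_subset huΩ hx), zero_pow two_ne_zero]

theorem integral_sq_pos (hu : Continuous u) (hc : HasCompactSupport u) (hne : u ≠ 0) :
    0 < ∫ x, u x ^ 2 := by
  obtain ⟨x, hx⟩ := Function.ne_iff.1 hne
  exact (hu.pow 2).integral_pos_of_hasCompactSupport_nonneg_nonzero (hasCompactSupport_sq hc)
    (fun _ ↦ sq_nonneg _) (pow_ne_zero 2 hx)

theorem grushinEnergy_nonneg : 0 ≤ grushinEnergy (fun r ↦ r ^ (2 * s)) u :=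
  add_nonneg (integral_nonneg fun _ ↦ sq_nonneg _) <| integral_nonneg fun _ ↦
    mul_nonneg (Real.rpow_nonneg (norm_nonneg _) _) (sq_nonneg _)

theorem isGrushinLowerBound_grushinLambda1 (hs : 0 ≤ s) :
    IsGrushinLowerBound (fun r ↦ r ^ (2 * s)) Ω (grushinLambda1 d₁ d₂ s Ω) := by
  intro u hu hc huΩ
  rcases eq_or_ne u 0 with rfl | hne
  · simpa using grushinEnergy_nonneg
  rw [← le_div_iff₀ (integral_sq_pos hu.continuous hc hne),
    ← setIntegral_gradient_sq_eq_grushinEnergy hs hu hc huΩ, ← setIntegral_sq_eq_integral_sq huΩ]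
  refine csInf_le ⟨0, ?_⟩ ⟨u, hu, hc, huΩ, hne, rfl⟩
  rintro _ ⟨v, hv, hvc, hvΩ, -, rfl⟩
  rw [setIntegral_gradient_sq_eq_grushinEnergy hs hv hvc hvΩ]
  exact div_nonneg (grushinEnergy_nonneg) (integral_nonneg fun _ ↦ sq_nonneg _)

theorem IsGrushinLowerBound.le_grushinLambda1
    (h : IsGrushinLowerBound (fun r ↦ r ^ (2 * s)) Ω c) (hs : 0 ≤ s) (hΩ : IsOpen Ω)
    (hne : Ω.Nonempty) : c ≤ grushinLambda1 d₁ d₂ s Ω := by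
  obtain ⟨x, hx⟩ := hne
  obtain ⟨φ, hφΩ, hφc, hφ, -, hφx⟩ := exists_contDiff_tsupport_subset (n := ⊤) (hΩ.mem_nhds hx)
  refine le_csInf ⟨_, φ, hφ, hφc, hφΩ, fun h ↦ by simp [h] at hφx, rfl⟩ ?_
  rintro _ ⟨u, hu, hc, huΩ, hne, rfl⟩
  rw [setIntegral_gradient_sq_eq_grushinEnergy hs hu hc huΩ, setIntegral_sq_eq_integral_sq huΩ,
    le_div_iff₀ (integral_sq_pos hu.continuous hc hne)]
  exact h u hu hc huΩ

variable {Ω₁ : Set (EuclideanSpace ℝ (Fin d₁))} {Ω₂ : Set (EuclideanSpace ℝ (Fin d₂))} {r₁ r₂ : ℝ}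

theorem nontrivial_euclideanSpace {d : ℕ} (hd : 1 ≤ d) : Nontrivial (EuclideanSpace ℝ (Fin d)) :=
  have : Nonempty (Fin d) := ⟨⟨0, hd⟩⟩
  inferInstance

theorem powerEnergy_le_grushinLambda1_prod (hd₁ : 1 ≤ d₁) (hd₂ : 1 ≤ d₂) (hs : 0 ≤ s)
    (hr₁ : 0 < r₁) (hr₂ : 0 < r₂) (hΩ₁ : IsOpen Ω₁) (hne₁ : Ω₁.Nonempty) (hΩ₂ : IsOpen Ω₂)
    (hne₂ : Ω₂.Nonempty)
    (volume_le₁ : volume Ω₁ ≤ volume (Metric.ball (0 : EuclideanSpace ℝ (Fin d₁)) r₁))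
    (volume_le₂ : volume Ω₂ ≤ volume (Metric.ball (0 : EuclideanSpace ℝ (Fin d₂)) r₂)) :
    powerEnergy (EuclideanSpace ℝ (Fin d₁)) s r₁
      (dirichletEigenvalue (EuclideanSpace ℝ (Fin d₂)) r₂) ≤ grushinLambda1 d₁ d₂ s (Ω₁ ×ˢ Ω₂) :=
  have := nontrivial_euclideanSpace hd₁
  have := nontrivial_euclideanSpace hd₂
  (isGrushinLowerBound_prod (isRadialPotential_rpow hs) hr₁ hr₂ volume_le₁
    volume_le₂).le_grushinLambda1 hs (hΩ₁.prod hΩ₂) (hne₁.prod hne₂)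

theorem grushinLambda1_ball_prod_ball (hd₁ : 1 ≤ d₁) (hd₂ : 1 ≤ d₂) (hs : 0 ≤ s) (hr₁ : 0 < r₁)
    (hr₂ : 0 < r₂) :
    grushinLambda1 d₁ d₂ s (Metric.ball 0 r₁ ×ˢ Metric.ball 0 r₂) =
      powerEnergy (EuclideanSpace ℝ (Fin d₁)) s r₁
        (dirichletEigenvalue (EuclideanSpace ℝ (Fin d₂)) r₂) :=
  le_antisymm
    ((isGrushinLowerBound_grushinLambda1 hs).le_groundEnergy (isRadialPotential_rpow hs)
      Metric.isOpen_ball (Metric.nonempty_ball.2 hr₁) Metric.isOpen_ball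
      (Metric.nonempty_ball.2 hr₂))
    (powerEnergy_le_grushinLambda1_prod hd₁ hd₂ hs hr₁ hr₂ Metric.isOpen_ball
      (Metric.nonempty_ball.2 hr₁) Metric.isOpen_ball (Metric.nonempty_ball.2 hr₂) le_rfl le_rfl)

theorem tau_mul_pow {d : ℕ} (hd : 1 ≤ d) {r : ℝ} (hr : 0 ≤ r) :
    tau d * r ^ d = (volume (Metric.ball (0 : EuclideanSpace ℝ (Fin d)) r)).toReal := by
  have : Nonempty (Fin d) := ⟨⟨0, hd⟩⟩
  rw [EuclideanSpace.volume_ball, Fintype.card_fin, ENNReal.toReal_mul, ENNReal.toReal_pow,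
    ENNReal.toReal_ofReal hr, ENNReal.toReal_ofReal (by positivity), mul_comm, tau,
    Real.sqrt_eq_rpow, ← Real.rpow_mul_natCast Real.pi_pos.le, one_div_mul_eq_div, add_comm]

theorem tau_pos (d : ℕ) : 0 < tau d := by
  unfold tau
  positivity

theorem exists_volume_ball_eq {d : ℕ} (hd : 1 ≤ d) {Ω : Set (EuclideanSpace ℝ (Fin d))}
    (hΩ : (volume Ω).toReal ≠ 0) :
    ∃ r > 0, volume (Metric.ball (0 : EuclideanSpace ℝ (Fin d)) r) = volume Ω := by
  have := nontrivial_euclideanSpace hd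
  rw [ENNReal.toReal_ne_zero] at hΩ
  have volume_eq := measure_ball_volumeRadius (μ := volume) hΩ.2
  refine ⟨_, volumeRadius_nonneg.lt_of_ne fun h ↦ hΩ.1 ?_, volume_eq⟩
  rw [← volume_eq, ← h, Metric.ball_zero, measure_empty]

theorem exists_grushinLambda1_ball_prod_ball_le (hd₁ : 1 ≤ d₁) (hd₂ : 1 ≤ d₂) (hs : 0 ≤ s)
    (hΩ₁ : IsOpen Ω₁) (hΩ₂ : IsOpen Ω₂) (volume_ne : (volume Ω₁).toReal * (volume Ω₂).toReal ≠ 0) :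
    ∃ r₁ > 0, ∃ r₂ > 0,
      tau d₁ * r₁ ^ d₁ * (tau d₂ * r₂ ^ d₂) = (volume Ω₁).toReal * (volume Ω₂).toReal ∧
      grushinLambda1 d₁ d₂ s (Metric.ball 0 r₁ ×ˢ Metric.ball 0 r₂) ≤
        grushinLambda1 d₁ d₂ s (Ω₁ ×ˢ Ω₂) := by
  have nonempty {d : ℕ} {Ω : Set (EuclideanSpace ℝ (Fin d))} (h : (volume Ω).toReal ≠ 0) :
      Ω.Nonempty := nonempty_of_measure_ne_zero (ENNReal.toReal_ne_zero.1 h).1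
  have ⟨ne₁, ne₂⟩ := mul_ne_zero_iff.1 volume_ne
  obtain ⟨r₁, hr₁, volume_eq₁⟩ := exists_volume_ball_eq hd₁ ne₁
  obtain ⟨r₂, hr₂, volume_eq₂⟩ := exists_volume_ball_eq hd₂ ne₂
  refine ⟨r₁, hr₁, r₂, hr₂, ?_, ?_⟩
  · rw [tau_mul_pow hd₁ hr₁.le, tau_mul_pow hd₂ hr₂.le, volume_eq₁, volume_eq₂]
  · rw [grushinLambda1_ball_prod_ball hd₁ hd₂ hs hr₁ hr₂]
    exact powerEnergy_le_grushinLambda1_prod hd₁ hd₂ hs hr₁ hr₂ hΩ₁ (nonempty ne₁) hΩ₂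
      (nonempty ne₂) volume_eq₁.ge volume_eq₂.ge

end GrushinLambda

/-! ### The optimal radii -/

section OptimalRadii

theorem mul_pow_rpow_neg_mul_rpow {m n : ℕ} (hn : n ≠ 0) {a b : ℝ} (ha : 0 < a) (hb : 0 < b)
    (t : ℝ) : (a ^ m * b ^ n) ^ (-(2 / n : ℝ)) * a ^ (t + 2 * m / n) = a ^ t / b ^ 2 := by
  have hn' : (n : ℝ) ≠ 0 := Nat.cast_ne_zero.2 hn
  have a_pow : (a ^ m) ^ (-(2 / n : ℝ)) = a ^ (-(2 * m / n : ℝ)) := by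
    rw [← Real.rpow_natCast_mul ha.le]
    congr 1
    ring
  have b_pow : (b ^ n) ^ (-(2 / n : ℝ)) = (b ^ 2)⁻¹ := by
    rw [← Real.rpow_natCast_mul hb.le, mul_neg, mul_div_cancel₀ _ hn', Real.rpow_neg hb.le,
      Real.rpow_two]
  rw [Real.mul_rpow (by positivity) (by positivity), a_pow, b_pow, mul_right_comm,
    ← Real.rpow_add ha, neg_add_cancel_comm_assoc, div_eq_mul_inv]

variable {E E₁ E₂ : Type*} [NormedAddCommGroup E] [InnerProductSpace ℝ E] [FiniteDimensional ℝ E]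
  [MeasurableSpace E] [BorelSpace E] [NormedAddCommGroup E₁] [InnerProductSpace ℝ E₁]
  [FiniteDimensional ℝ E₁] [MeasurableSpace E₁] [BorelSpace E₁] [NormedAddCommGroup E₂]
  [InnerProductSpace ℝ E₂] [FiniteDimensional ℝ E₂] [MeasurableSpace E₂] [BorelSpace E₂] {s R : ℝ}

theorem dirichletEigenvalue_eq_div [Nontrivial E] (hR : 0 < R) :
    dirichletEigenvalue E R = dirichletEigenvalue E 1 / R ^ 2 := by
  have scaled := groundEnergy_ball_mul (E := E) isRadialPotential_zero hR one_pos
  rw [mul_one] at scaled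
  rw [eq_div_iff (by positivity), mul_comm, dirichletEigenvalue, ← scaled, dirichletEigenvalue]
  congr 1
  ext
  simp

theorem powerEnergy_eq_of_mul_rpow_eq [Nontrivial E] {ν C α : ℝ} (hs : 0 ≤ s) (hR : 0 < R)
    (hν : 0 ≤ ν) (hC : 0 < C) (hα : α ≠ 0) (h : ν * R ^ (2 + 2 * s) = C * R ^ α) :
    powerEnergy E s R ν =
      C ^ (2 / α) * (powerEnergy E s 1 (C * R ^ α) / (C * R ^ α) ^ (2 / α)) := by
  have rpow_eq : (C * R ^ α) ^ (2 / α) = C ^ (2 / α) * R ^ 2 := by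
    rw [Real.mul_rpow hC.le (by positivity), ← Real.rpow_mul hR.le, mul_div_cancel₀ _ hα,
      Real.rpow_two]
  rw [rpow_eq, ← h, powerEnergy_mul_rpow hs hR hν]
  field_simp

variable [Nontrivial E₁] [Nontrivial E₂] {m n : ℕ}

theorem powerEnergy_dirichletEigenvalue_eq {r₁ r₂ c α C : ℝ} (hs : 0 ≤ s) (hn : n ≠ 0)
    (hr₁ : 0 < r₁) (hr₂ : 0 < r₂) (hr : r₁ ^ m * r₂ ^ n = c) (hα : α = 2 + 2 * s + 2 * m / n)
    (hC : C = dirichletEigenvalue E₂ 1 * c ^ (-(2 / n : ℝ))) :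
    powerEnergy E₁ s r₁ (dirichletEigenvalue E₂ r₂) =
      C ^ (2 / α) * (powerEnergy E₁ s 1 (C * r₁ ^ α) / (C * r₁ ^ α) ^ (2 / α)) := by
  have eigenvalue_pos := dirichletEigenvalue_pos (E₂ := E₂) one_pos
  have C_pos : 0 < C := by rw [hC, ← hr]; positivity
  have α_ne : α ≠ 0 := by rw [hα]; positivity
  refine powerEnergy_eq_of_mul_rpow_eq hs hr₁ (dirichletEigenvalue_pos hr₂).le C_pos α_ne ?_
  rw [dirichletEigenvalue_eq_div hr₂, hC, hα, ← hr, mul_assoc, mul_pow_rpow_neg_mul_rpow hn hr₁ hr₂,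
    mul_div_assoc', div_mul_eq_mul_div]

theorem exists_strict_min_powerEnergy_dirichletEigenvalue (hs : 0 ≤ s) (hm : m ≠ 0) (hn : n ≠ 0)
    {c : ℝ} (hc : 0 < c) :
    ∃ r₁ > 0, ∃ r₂ > 0, r₁ ^ m * r₂ ^ n = c ∧
      ∀ ρ₁ ρ₂ : ℝ, 0 < ρ₁ → 0 < ρ₂ → ρ₁ ^ m * ρ₂ ^ n = c → (ρ₁, ρ₂) ≠ (r₁, r₂) →
        powerEnergy E₁ s r₁ (dirichletEigenvalue E₂ r₂) <
          powerEnergy E₁ s ρ₁ (dirichletEigenvalue E₂ ρ₂) := by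
  have eigenvalue_pos := dirichletEigenvalue_pos (E₂ := E₂) one_pos
  obtain ⟨C, hC⟩ : ∃ C, C = dirichletEigenvalue E₂ 1 * c ^ (-(2 / n : ℝ)) := ⟨_, rfl⟩
  obtain ⟨α, hα⟩ : ∃ α : ℝ, α = 2 + 2 * s + 2 * m / n := ⟨_, rfl⟩
  have C_pos : 0 < C := by rw [hC]; positivity
  have α_gt : 2 + 2 * s < α := by rw [hα]; exact lt_add_of_pos_right _ (by positivity)
  have α_pos : 0 < α := by linarith
  obtain ⟨ν, hν, strict_min⟩ := exists_strict_min_powerEnergy_div_rpow (E := E₁) hs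
    (div_pos two_pos α_pos) (by rw [div_mul_eq_mul_div, div_lt_one α_pos]; linarith)
  obtain ⟨r₁, hr₁, r₁_rpow⟩ : ∃ r₁ > 0, C * r₁ ^ α = ν :=
    ⟨(ν / C) ^ α⁻¹, by positivity, by
      rw [Real.rpow_inv_rpow (by positivity) α_pos.ne', mul_div_cancel₀ _ C_pos.ne']⟩
  obtain ⟨r₂, hr₂, radii_eq⟩ : ∃ r₂ > 0, r₁ ^ m * r₂ ^ n = c :=
    ⟨(c / r₁ ^ m) ^ (n⁻¹ : ℝ), by positivity, by
      rw [Real.rpow_inv_natCast_pow (by positivity) hn, mul_div_cancel₀ _ (by positivity)]⟩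
  refine ⟨r₁, hr₁, r₂, hr₂, radii_eq, fun ρ₁ ρ₂ hρ₁ hρ₂ hρ hne ↦ ?_⟩
  rw [powerEnergy_dirichletEigenvalue_eq hs hn hr₁ hr₂ radii_eq hα hC,
    powerEnergy_dirichletEigenvalue_eq hs hn hρ₁ hρ₂ hρ hα hC, r₁_rpow]
  refine mul_lt_mul_of_pos_left (strict_min _ (by positivity) fun heq ↦ hne ?_) (by positivity)
  obtain rfl : ρ₁ = r₁ := by
    rwa [← r₁_rpow, mul_right_inj' C_pos.ne', Real.rpow_left_inj hρ₁.le hr₁.le α_pos.ne'] at heq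
  rw [← radii_eq, mul_right_inj' (by positivity), pow_left_inj₀ hρ₂.le hr₂.le hn] at hρ
  rw [hρ]

theorem exists_strict_min_grushinLambda1_ball_prod_ball {d₁ d₂ : ℕ} (hd₁ : 1 ≤ d₁) (hd₂ : 1 ≤ d₂)
    (hs : 0 ≤ s) {V : ℝ} (hV : 0 < V) :
    ∃ r₁ > 0, ∃ r₂ > 0, tau d₁ * r₁ ^ d₁ * (tau d₂ * r₂ ^ d₂) = V ∧
      ∀ ρ₁ ρ₂ : ℝ, 0 < ρ₁ → 0 < ρ₂ →
        tau d₁ * ρ₁ ^ d₁ * (tau d₂ * ρ₂ ^ d₂) = V → (ρ₁, ρ₂) ≠ (r₁, r₂) →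
        grushinLambda1 d₁ d₂ s (Metric.ball 0 r₁ ×ˢ Metric.ball 0 r₂) <
          grushinLambda1 d₁ d₂ s (Metric.ball 0 ρ₁ ×ˢ Metric.ball 0 ρ₂) := by
  have := nontrivial_euclideanSpace hd₁
  have := nontrivial_euclideanSpace hd₂
  have tau_pos₁ := tau_pos d₁
  have tau_pos₂ := tau_pos d₂
  have volume_eq_iff (a b : ℝ) : tau d₁ * a ^ d₁ * (tau d₂ * b ^ d₂) = V ↔
      a ^ d₁ * b ^ d₂ = V / (tau d₁ * tau d₂) := by
    rw [mul_mul_mul_comm, eq_div_iff_mul_eq (by positivity), mul_comm]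
  obtain ⟨r₁, hr₁, r₂, hr₂, hr, strict_min⟩ :=
    exists_strict_min_powerEnergy_dirichletEigenvalue (E₁ := EuclideanSpace ℝ (Fin d₁))
      (E₂ := EuclideanSpace ℝ (Fin d₂)) hs (Nat.one_le_iff_ne_zero.1 hd₁)
      (Nat.one_le_iff_ne_zero.1 hd₂) (div_pos hV (mul_pos tau_pos₁ tau_pos₂))
  refine ⟨r₁, hr₁, r₂, hr₂, (volume_eq_iff _ _).2 hr, fun ρ₁ ρ₂ hρ₁ hρ₂ hρ hne ↦ ?_⟩
  rw [grushinLambda1_ball_prod_ball hd₁ hd₂ hs hr₁ hr₂,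
    grushinLambda1_ball_prod_ball hd₁ hd₂ hs hρ₁ hρ₂]
  exact strict_min ρ₁ ρ₂ hρ₁ hρ₂ ((volume_eq_iff _ _).1 hρ) hne

end OptimalRadii

end Grushin

theorem existsUnique_minimizing_product_of_balls_general (d₁ d₂ : ℕ) (hd₁ : 1 ≤ d₁) (hd₂ : 1 ≤ d₂)
    (s : ℝ) (hs : 0 ≤ s) (V : ℝ) (hV : 0 < V) :
    ∃! p : ℝ × ℝ, 0 < p.1 ∧ 0 < p.2 ∧
      tau d₁ * p.1 ^ d₁ * (tau d₂ * p.2 ^ d₂) = V ∧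
      (∀ (Ω₁ : Set (EuclideanSpace ℝ (Fin d₁))) (Ω₂ : Set (EuclideanSpace ℝ (Fin d₂))),
        IsOpen Ω₁ → IsOpen Ω₂ → (volume Ω₁).toReal * (volume Ω₂).toReal = V →
        grushinLambda1 d₁ d₂ s (Metric.ball 0 p.1 ×ˢ Metric.ball 0 p.2) ≤
          grushinLambda1 d₁ d₂ s (Ω₁ ×ˢ Ω₂)) ∧
      (∀ ρ₁ ρ₂ : ℝ, 0 < ρ₁ → 0 < ρ₂ →
        tau d₁ * ρ₁ ^ d₁ * (tau d₂ * ρ₂ ^ d₂) = V → (ρ₁, ρ₂) ≠ p →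
        grushinLambda1 d₁ d₂ s (Metric.ball 0 p.1 ×ˢ Metric.ball 0 p.2) <
          grushinLambda1 d₁ d₂ s (Metric.ball 0 ρ₁ ×ˢ Metric.ball 0 ρ₂)) := by
  obtain ⟨r₁, hr₁, r₂, hr₂, hr, strict_min⟩ :=
    Grushin.exists_strict_min_grushinLambda1_ball_prod_ball hd₁ hd₂ hs hV
  refine ⟨(r₁, r₂), ⟨hr₁, hr₂, hr, fun Ω₁ Ω₂ hΩ₁ hΩ₂ hΩ ↦ ?_, strict_min⟩, ?_⟩
  · obtain ⟨ρ₁, hρ₁, ρ₂, hρ₂, hρ, ball_le⟩ :=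
      Grushin.exists_grushinLambda1_ball_prod_ball_le hd₁ hd₂ hs hΩ₁ hΩ₂ (hΩ.trans_ne hV.ne')
    by_cases heq : (ρ₁, ρ₂) = (r₁, r₂)
    · cases heq
      exact ball_le
    · exact (strict_min ρ₁ ρ₂ hρ₁ hρ₂ (hρ.trans hΩ) heq).le.trans ball_le
  · rintro ⟨ρ₁, ρ₂⟩ ⟨hρ₁, hρ₂, hρ, -, strict_min'⟩
    by_contra hne
    exact lt_asymm (strict_min ρ₁ ρ₂ hρ₁ hρ₂ hρ hne) (strict_min' r₁ r₂ hr₁ hr₂ hr (Ne.symm hne))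

/-- there is a unique pair of radii `(r₁, r₂)` (with the product of the
two balls of total volume `V`) such that the product `B^{d₁}(0,r₁) × B^{d₂}(0,r₂)`
minimizes the first Grushin eigenvalue among all cartesian products of bounded domains
of total volume `V`, and strictly beats every other product of balls centered at the
origins with total volume `V`. -/
theorem existsUnique_minimizing_product_of_balls (d₁ d₂ : ℕ) (hd₁ : 1 ≤ d₁) (hd₂ : 1 ≤ d₂)
    (s : ℝ) (hs : 0 < s) (V : ℝ) (hV : 0 < V) :
    ∃! p : ℝ × ℝ, 0 < p.1 ∧ 0 < p.2 ∧
      tau d₁ * p.1 ^ d₁ * (tau d₂ * p.2 ^ d₂) = V ∧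
      (∀ (Ω₁ : Set (EuclideanSpace ℝ (Fin d₁))) (Ω₂ : Set (EuclideanSpace ℝ (Fin d₂))),
        IsOpen Ω₁ → IsConnected Ω₁ → Bornology.IsBounded Ω₁ →
        IsOpen Ω₂ → IsConnected Ω₂ → Bornology.IsBounded Ω₂ →
        (volume Ω₁).toReal * (volume Ω₂).toReal = V →
        grushinLambda1 d₁ d₂ s
            ((Metric.ball (0 : EuclideanSpace ℝ (Fin d₁)) p.1) ×ˢ
              (Metric.ball (0 : EuclideanSpace ℝ (Fin d₂)) p.2)) ≤
          grushinLambda1 d₁ d₂ s (Ω₁ ×ˢ Ω₂)) ∧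
      (∀ ρ₁ ρ₂ : ℝ, 0 < ρ₁ → 0 < ρ₂ →
        tau d₁ * ρ₁ ^ d₁ * (tau d₂ * ρ₂ ^ d₂) = V → (ρ₁, ρ₂) ≠ p →
        grushinLambda1 d₁ d₂ s
            ((Metric.ball (0 : EuclideanSpace ℝ (Fin d₁)) p.1) ×ˢ
              (Metric.ball (0 : EuclideanSpace ℝ (Fin d₂)) p.2)) <
          grushinLambda1 d₁ d₂ s
            ((Metric.ball (0 : EuclideanSpace ℝ (Fin d₁)) ρ₁) ×ˢ
              (Metric.ball (0 : EuclideanSpace ℝ (Fin d₂)) ρ₂))) := by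
  obtain ⟨p, ⟨h₁, h₂, hp, minimal, strict_min⟩, -⟩ :=
    existsUnique_minimizing_product_of_balls_general d₁ d₂ hd₁ hd₂ s hs.le V hV
  exact ⟨p, ⟨h₁, h₂, hp, fun Ω₁ Ω₂ hΩ₁ _ _ hΩ₂ _ _ ↦ minimal Ω₁ Ω₂ hΩ₁ hΩ₂, strict_min⟩,
    fun q ⟨hq₁, hq₂, hq, _, strict_min'⟩ ↦ by_contra fun hne ↦ lt_asymm
      (strict_min _ _ hq₁ hq₂ hq hne) (strict_min' _ _ h₁ h₂ hp (Ne.symm hne))⟩
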